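/- arXiv:math/9905083 — 2 statements merged into one kernel-verified Lean document; each statement's English description precedes it below -/
import Mathlib

section
/- For all nonnegative integers n and l, f^u_{n,2l} = binom(2n,n) · f_{n,l}; that is, the number of permutations π of {1,…,4n} satisfying π = π⁻¹ and π = ι∘π⁻¹∘ι, with π(x) ≠ x and π(x) ≠ ι(x) for all x, and longest increasing subsequence of length at most 2l, equals the central binomial coefficient binom(2n,n) times the number of permutations of {1,…,n} with longest increasing subsequence of length at most l. -/
noncomputable section

/-- `lisLE π l` means the longest increasing subsequence of the permutation `π`
has length at most `l`. -/
def lisLE {N : ℕ} (π : Equiv.Perm (Fin N)) (l : ℕ) : Prop :=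
  ∀ (k : ℕ) (f : Fin k → Fin N), StrictMono f → StrictMono (fun i => π (f i)) → k ≤ l

/-- `f_{n,l}`: the number of permutations of `{1,…,n}` whose longest increasing
subsequence has length at most `l`. -/
def permCount (n l : ℕ) : ℕ :=
  Nat.card {π : Equiv.Perm (Fin n) // lisLE π l}

/-- `f^u_{n,l}`: the number of permutations `π` of `{1,…,4n}` with `π = π⁻¹`,
`π = ι∘π⁻¹∘ι` (where `ι(x) = 4n+1-x`), `π(x) ≠ x` and `π(x) ≠ ι(x)` for all `x`,
whose longest increasing subsequence has length at most `l`. -/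
def fuCount (n l : ℕ) : ℕ :=
  Nat.card {π : Equiv.Perm (Fin (4 * n)) //
    π = π⁻¹ ∧ π = Fin.revPerm * π⁻¹ * Fin.revPerm ∧
    (∀ x, π x ≠ x) ∧ (∀ x, π x ≠ Fin.revPerm x) ∧ lisLE π l}


/-!
Both counts are counts of labelled perfect matchings: a permutation is represented by the points of
its graph, one from each orbit under the symmetries, and `L(π) ≤ l` says that the points can be
labelled by `1, …, l` increasingly along chains. Removing the topmost point, whose label may be
raised to its bound, lowers the bounds of the points after it and leaves a matching of the same
kind. Weighted walks on Young diagrams with at most `l` columns, equivalently in the Weyl chamber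
`0 < z 0 < ⋯ < z (l - 1)` of type `C`, satisfy the same recursion, since adding and removing a cell
commute up to a term that lowers the bound on the number of columns. Thus `f_{n,l}` counts the
closed walks with `n` steps up and then `n` steps down, and `f^u_{n,2l}` the walks of `2n` arbitrary
steps that end at a diagram with columns of even height.

By the reflection principle the second count is read off from `(∑ x i + ∑ (x i)⁻¹) ^ (2 * n)` times
the Weyl denominator of type `C`. Littlewood's identity
`∑ s_λ = ∏_{i ≤ j} (1 - x i * x j)⁻¹`, the sum over the partitions with even parts, cancels the
factor by which this denominator differs from the one of type `A`. What is left is homogeneous, so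
only the `binom(2n, n)` words with as many steps up as down contribute, and these all contribute
`f_{n,l}` because Laurent polynomials commute.
-/

namespace ChamberWalk

section Laurent

variable {ι : Type*}

/-- Integer vectors, the exponents of Laurent monomials. -/
abbrev Weight (ι : Type*) := ι → ℤ

/-- Laurent polynomials with integer coefficients in the variables `x i`, `i : ι`. -/
abbrev Laurent (ι : Type*) := AddMonoidAlgebra ℤ (Weight ι)

/-- The Laurent monomial `x ^ m`. -/
def monomial (m : Weight ι) : Laurent ι := AddMonoidAlgebra.single m 1

theorem monomial_zero : monomial (0 : Weight ι) = 1 := rfl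

theorem monomial_mul (a b : Weight ι) : monomial a * monomial b = monomial (a + b) := by
  simp [monomial, AddMonoidAlgebra.single_mul_single]

theorem monomial_pow (a : Weight ι) (k : ℕ) : monomial a ^ k = monomial (k • a) := by
  rw [monomial, AddMonoidAlgebra.single_pow, one_pow, monomial]

theorem prod_monomial {κ : Type*} (s : Finset κ) (f : κ → Weight ι) :
    ∏ i ∈ s, monomial (f i) = monomial (∑ i ∈ s, f i) := by
  simp only [monomial, AddMonoidAlgebra.prod_single, Finset.prod_const_one]

theorem coeff_monomial_mul (m z : Weight ι) (F : Laurent ι) :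
    (monomial m * F).coeff z = F.coeff (z - m) := by
  rw [monomial, AddMonoidAlgebra.coeff_single_mul_apply, one_mul, neg_add_eq_sub]

theorem coeff_monomial [DecidableEq (Weight ι)] (m z : Weight ι) :
    (monomial m).coeff z = if m = z then 1 else 0 := by
  simp [monomial, Finsupp.single_apply]

theorem coeff_finset_sum {κ : Type*} (s : Finset κ) (f : κ → Laurent ι) (z : Weight ι) :
    (∑ i ∈ s, f i).coeff z = ∑ i ∈ s, (f i).coeff z := by
  rw [AddMonoidAlgebra.coeff_sum, Finsupp.finsetSum_apply]

theorem coeff_neg_one_pow_mul (r : ℕ) (F : Laurent ι) (z : Weight ι) :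
    ((-1) ^ r * F).coeff z = (-1) ^ r * F.coeff z := by
  obtain hr | hr := Nat.even_or_odd r <;> simp [hr.neg_one_pow]

theorem exists_apply_le_of_coeff_ne_zero (F : Laurent ι) (i : ι) :
    ∃ m : ℕ, ∀ z, F.coeff z ≠ 0 → z i ≤ m :=
  ⟨F.coeff.support.sup fun z => (z i).toNat, fun _ hz =>
    Int.toNat_le.1 (Finset.le_sup (f := fun z : Weight ι => (z i).toNat)
      (Finsupp.mem_support_iff.2 hz))⟩

/-- The `i`-th unit vector. -/
def e [DecidableEq ι] (i : ι) : Weight ι := Pi.single i 1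

theorem e_self [DecidableEq ι] (i : ι) : e i i = 1 := by simp [e]

theorem e_of_ne [DecidableEq ι] {i j : ι} (h : j ≠ i) : e i j = 0 := by simp [e, h]

theorem e_nonneg [DecidableEq ι] (i j : ι) : 0 ≤ e i j := by
  rw [e, Pi.single_apply]
  split_ifs <;> simp

theorem e_le_one [DecidableEq ι] (i j : ι) : e i j ≤ 1 := by
  rw [e, Pi.single_apply]
  split_ifs <;> simp

theorem sum_e [DecidableEq ι] [Fintype ι] (i : ι) : ∑ k, e i k = 1 := by simp [e]

/-- The variable `x i`. -/
def X [DecidableEq ι] (i : ι) : Laurent ι := monomial (e i)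

/-- The inverse variable `(x i)⁻¹`. -/
def Xinv [DecidableEq ι] (i : ι) : Laurent ι := monomial (-e i)

theorem X_mul_Xinv [DecidableEq ι] (i : ι) : X i * Xinv i = 1 := by
  rw [X, Xinv, monomial_mul, add_neg_cancel, monomial_zero]

theorem coeff_X_mul [DecidableEq ι] (i : ι) (F : Laurent ι) (z : Weight ι) :
    (X i * F).coeff z = F.coeff (z - e i) :=
  coeff_monomial_mul _ _ _

theorem coeff_Xinv_mul [DecidableEq ι] (i : ι) (F : Laurent ι) (z : Weight ι) :
    (Xinv i * F).coeff z = F.coeff (z + e i) := by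
  rw [Xinv, coeff_monomial_mul, sub_neg_eq_add]

/-- The substitution `x i ↦ x (σ i)`. -/
def permAct (σ : Equiv.Perm ι) : Laurent ι ≃ₐ[ℤ] Laurent ι :=
  AddMonoidAlgebra.domCongr ℤ ℤ (LinearEquiv.funCongrLeft ℤ ℤ σ.symm).toAddEquiv

theorem coeff_permAct (σ : Equiv.Perm ι) (F : Laurent ι) (z : Weight ι) :
    (permAct σ F).coeff z = F.coeff (z ∘ σ) := by
  rw [permAct, AddMonoidAlgebra.coeff_domCongr]
  rfl

theorem permAct_monomial (σ : Equiv.Perm ι) (m : Weight ι) :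
    permAct σ (monomial m) = monomial (m ∘ σ.symm) := by
  rw [permAct, monomial, AddMonoidAlgebra.domCongr_single]
  rfl

variable [DecidableEq ι]

theorem e_comp_symm (σ : Equiv.Perm ι) (i : ι) : e i ∘ σ.symm = e (σ i) := by
  funext k
  simp only [e, Function.comp_apply, Pi.single_apply, Equiv.symm_apply_eq]

theorem permAct_X (σ : Equiv.Perm ι) (i : ι) : permAct σ (X i) = X (σ i) := by
  rw [X, permAct_monomial, e_comp_symm, X]

theorem permAct_Xinv (σ : Equiv.Perm ι) (i : ι) : permAct σ (Xinv i) = Xinv (σ i) := by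
  rw [Xinv, permAct_monomial, Xinv, ← e_comp_symm]
  rfl

/-- Negation of the `i`-th coordinate. -/
def negCoord (i : ι) : Weight ι ≃+ Weight ι where
  toFun z := Function.update z i (-z i)
  invFun z := Function.update z i (-z i)
  left_inv z := by simp
  right_inv z := by simp
  map_add' a b := by
    rw [Pi.add_apply, neg_add, ← Function.update_add]

/-- The substitution `x i ↦ (x i)⁻¹`. -/
def flipAct (i : ι) : Laurent ι ≃ₐ[ℤ] Laurent ι := AddMonoidAlgebra.domCongr ℤ ℤ (negCoord i)

theorem coeff_flipAct (i : ι) (F : Laurent ι) (z : Weight ι) :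
    (flipAct i F).coeff z = F.coeff (Function.update z i (-z i)) := by
  rw [flipAct, AddMonoidAlgebra.coeff_domCongr]
  rfl

theorem flipAct_monomial (i : ι) (m : Weight ι) :
    flipAct i (monomial m) = monomial (Function.update m i (-m i)) := by
  rw [flipAct, monomial, AddMonoidAlgebra.domCongr_single]
  rfl

theorem flipAct_X_self (i : ι) : flipAct i (X i) = Xinv i := by
  rw [X, flipAct_monomial, Xinv, e_self, e, Pi.single, Function.update_idem, ← Pi.single,
    ← Pi.single, Pi.single_neg]

theorem flipAct_Xinv_self (i : ι) : flipAct i (Xinv i) = X i := by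
  rw [← flipAct_X_self, X, flipAct_monomial, flipAct_monomial]
  simp

theorem flipAct_X_of_ne {i j : ι} (h : j ≠ i) : flipAct i (X j) = X j := by
  rw [X, flipAct_monomial, e_of_ne h.symm, neg_zero, ← e_of_ne h.symm, Function.update_eq_self]

theorem flipAct_Xinv_of_ne {i j : ι} (h : j ≠ i) : flipAct i (Xinv j) = Xinv j := by
  rw [Xinv, flipAct_monomial, Pi.neg_apply, e_of_ne h.symm, neg_neg, ← neg_zero,
    ← e_of_ne h.symm, ← Pi.neg_apply (e j), Function.update_eq_self]

theorem flipAct_X_add_Xinv (i j : ι) : flipAct i (X j + Xinv j) = X j + Xinv j := by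
  obtain rfl | h := eq_or_ne j i
  · rw [map_add, flipAct_X_self, flipAct_Xinv_self, add_comm]
  · rw [map_add, flipAct_X_of_ne h, flipAct_Xinv_of_ne h]

end Laurent

section Steps

variable (ι : Type*) [Fintype ι] [DecidableEq ι]

/-- The generating polynomial `∑ x i` of the steps that increase a coordinate. -/
def upStep : Laurent ι := ∑ i, X i

/-- The generating polynomial `∑ (x i)⁻¹` of the steps that decrease a coordinate. -/
def downStep : Laurent ι := ∑ i, Xinv i

variable {ι}

theorem coeff_upStep_mul (F : Laurent ι) (z : Weight ι) :
    (upStep ι * F).coeff z = ∑ i, F.coeff (z - e i) := by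
  simp only [upStep, Finset.sum_mul, coeff_finset_sum, coeff_X_mul]

theorem coeff_downStep_mul (F : Laurent ι) (z : Weight ι) :
    (downStep ι * F).coeff z = ∑ i, F.coeff (z + e i) := by
  simp only [downStep, Finset.sum_mul, coeff_finset_sum, coeff_Xinv_mul]

theorem permAct_upStep (σ : Equiv.Perm ι) : permAct σ (upStep ι) = upStep ι := by
  simp only [upStep, map_sum, permAct_X]
  exact Equiv.sum_comp σ X

theorem permAct_downStep (σ : Equiv.Perm ι) : permAct σ (downStep ι) = downStep ι := by
  simp only [downStep, map_sum, permAct_Xinv]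
  exact Equiv.sum_comp σ Xinv

theorem flipAct_upStep_add_downStep (i : ι) :
    flipAct i (upStep ι + downStep ι) = upStep ι + downStep ι := by
  simp only [upStep, downStep, ← Finset.sum_add_distrib, map_sum, flipAct_X_add_Xinv]

end Steps

section Antisymmetry

variable {ι : Type*} [Fintype ι] [DecidableEq ι] {s : Finset ι} {G : Laurent ι}

/-- Antisymmetry under the permutations of the variables `x i` with `i ∈ s`. -/
def AntisymmOn (s : Finset ι) (G : Laurent ι) : Prop :=
  ∀ τ : Equiv.Perm ι, {i | τ i ≠ i} ⊆ s → permAct τ G = (Equiv.Perm.sign τ : ℤ) • G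

theorem AntisymmOn.mono {t : Finset ι} (hts : t ⊆ s) (hG : AntisymmOn s G) : AntisymmOn t G :=
  fun τ hτ => hG τ (hτ.trans hts)

theorem AntisymmOn.mul_left {K : Laurent ι} (hG : AntisymmOn s G)
    (hK : ∀ τ : Equiv.Perm ι, {i | τ i ≠ i} ⊆ s → permAct τ K = K) : AntisymmOn s (K * G) :=
  fun τ hτ => by rw [map_mul, hK τ hτ, hG τ hτ, mul_smul_comm]

theorem AntisymmOn.upStep_pow_mul (hG : AntisymmOn s G) (k : ℕ) :
    AntisymmOn s (upStep ι ^ k * G) :=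
  hG.mul_left fun τ _ => by rw [map_pow, permAct_upStep]

theorem AntisymmOn.downStep_pow_mul (hG : AntisymmOn s G) (k : ℕ) :
    AntisymmOn s (downStep ι ^ k * G) :=
  hG.mul_left fun τ _ => by rw [map_pow, permAct_downStep]

theorem AntisymmOn.upStep_add_downStep_pow_mul (hG : AntisymmOn s G) (k : ℕ) :
    AntisymmOn s ((upStep ι + downStep ι) ^ k * G) :=
  hG.mul_left fun τ _ => by rw [map_pow, map_add, permAct_upStep, permAct_downStep]

theorem AntisymmOn.coeff_comp (hG : AntisymmOn s G) {τ : Equiv.Perm ι}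
    (hτ : {i | τ i ≠ i} ⊆ s) (z : Weight ι) :
    G.coeff (z ∘ τ) = (Equiv.Perm.sign τ : ℤ) * G.coeff z := by
  rw [← coeff_permAct, hG τ hτ, AddMonoidAlgebra.coeff_smul, Finsupp.smul_apply, smul_eq_mul]

theorem AntisymmOn.coeff_eq_zero (hG : AntisymmOn s G) {i j : ι} (hi : i ∈ s) (hj : j ∈ s)
    (hij : i ≠ j) {z : Weight ι} (hz : z i = z j) : G.coeff z = 0 := by
  have hswap : {k | Equiv.swap i j k ≠ k} ⊆ s := fun k hk => by
    obtain rfl | rfl := (Equiv.swap_apply_ne_self_iff.1 hk).2 <;> assumption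
  have hcomp : z ∘ Equiv.swap i j = z := by
    funext k
    rw [Function.comp_apply, Equiv.swap_apply_def]
    split_ifs with hki hkj
    · rw [hki, hz]
    · rw [hkj, hz]
    · rfl
  have h := hG.coeff_comp hswap z
  rw [hcomp, Equiv.Perm.sign_swap hij, Units.val_neg, Units.val_one, neg_one_mul] at h
  exact self_eq_neg.1 h

/-- Antisymmetry under the signed permutations of the variables, the Weyl group of type `C`. -/
def IsAntiinvariant (F : Laurent ι) : Prop :=
  AntisymmOn Finset.univ F ∧ ∀ i, flipAct i F = -F

theorem IsAntiinvariant.upStep_add_downStep_pow_mul (hG : IsAntiinvariant G) (k : ℕ) :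
    IsAntiinvariant ((upStep ι + downStep ι) ^ k * G) :=
  ⟨hG.1.upStep_add_downStep_pow_mul k, fun i => by
    rw [map_mul, map_pow, flipAct_upStep_add_downStep, hG.2 i, mul_neg]⟩

theorem IsAntiinvariant.coeff_eq_zero (hG : IsAntiinvariant G) {i : ι} {z : Weight ι}
    (hz : z i = 0) : G.coeff z = 0 := by
  have h := coeff_flipAct i G z
  rw [hz, neg_zero, ← hz, Function.update_eq_self, hG.2 i, AddMonoidAlgebra.coeff_neg,
    Finsupp.neg_apply] at h
  exact neg_eq_self.1 h

end Antisymmetry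

section WeylDenominator

/-- The vector `(1, 2, …, l)`. -/
def rho (l : ℕ) : Weight (Fin l) := fun i => (i : ℤ) + 1

/-- The alternant `det (x i ^ (j + 1))`. -/
def alternant (l : ℕ) : Laurent (Fin l) := (Matrix.of fun i j : Fin l => X i ^ ((j : ℕ) + 1)).det

variable {l : ℕ}

theorem alternant_eq_sum (l : ℕ) : alternant l =
    ∑ σ : Equiv.Perm (Fin l), (Equiv.Perm.sign σ : ℤ) • monomial (rho l ∘ σ) := by
  have hexp : ∀ σ : Equiv.Perm (Fin l), ∑ i, ((σ i : ℕ) + 1) • e i = rho l ∘ σ := fun σ => by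
    funext k
    simp [Finset.sum_apply, e, rho, Pi.single_apply]
  rw [alternant, ← Matrix.det_transpose, Matrix.det_apply]
  simp only [Matrix.transpose_apply, Matrix.of_apply, X, monomial_pow, prod_monomial, hexp,
    Units.smul_def]

theorem antisymmOn_alternant : AntisymmOn Finset.univ (alternant l) := fun σ _ => by
  rw [alternant, AlgEquiv.map_det, zsmul_eq_mul, ← Matrix.det_permute]
  congr 1
  ext i j : 2
  simp [permAct_X]

theorem coeff_alternant [DecidableEq (Weight (Fin l))] (z : Weight (Fin l)) :
    (alternant l).coeff z =
      ∑ σ : Equiv.Perm (Fin l), if rho l ∘ σ = z then (Equiv.Perm.sign σ : ℤ) else 0 := by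
  simp only [alternant_eq_sum, coeff_finset_sum, AddMonoidAlgebra.coeff_smul, Finsupp.smul_apply,
    coeff_monomial, smul_eq_mul, mul_ite, mul_one, mul_zero]

theorem coeff_alternant_of_strictMono [DecidableEq (Weight (Fin l))] {z : Weight (Fin l)}
    (hz : StrictMono z) : (alternant l).coeff z = if rho l = z then 1 else 0 := by
  rw [coeff_alternant, Finset.sum_eq_single 1 _ (by simp)]
  · simp
  · intro σ _ hσ
    refine if_neg ?_
    rintro rfl
    have hmono : StrictMono σ := fun i j hij => by
      simpa [rho] using hz hij
    exact hσ (Equiv.ext fun i => congrFun (hmono.range_inj strictMono_id |>.1 (by simp)) i)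

theorem coeff_alternant_eq_zero_of_sum_ne {z : Weight (Fin l)}
    (hz : ∑ i, z i ≠ ∑ i, rho l i) : (alternant l).coeff z = 0 := by
  classical
  rw [coeff_alternant]
  refine Finset.sum_eq_zero fun σ _ => if_neg ?_
  rintro rfl
  exact hz (Equiv.sum_comp σ (rho l))

theorem coeff_alternant_eq_zero_of_nonpos {z : Weight (Fin l)} {i : Fin l} (hz : z i ≤ 0) :
    (alternant l).coeff z = 0 := by
  classical
  rw [coeff_alternant]
  refine Finset.sum_eq_zero fun σ _ => if_neg ?_
  rintro rfl
  simp only [rho, Function.comp] at hz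
  omega

theorem alternant_eq_prod (l : ℕ) :
    alternant l = (∏ i, X i) * ∏ i : Fin l, ∏ j ∈ Finset.Ioi i, (X j - X i) := by
  rw [alternant, ← Matrix.det_vandermonde, ← Matrix.det_mul_column]
  refine congrArg Matrix.det (Matrix.ext fun i j => ?_)
  simp [Matrix.vandermonde, pow_succ']

/-- The set of indices at least `a`. -/
def indicesFrom (l a : ℕ) : Finset (Fin l) := Finset.univ.filter fun i => a ≤ (i : ℕ)

theorem mem_indicesFrom {a : ℕ} {i : Fin l} : i ∈ indicesFrom l a ↔ a ≤ (i : ℕ) := by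
  simp [indicesFrom]

theorem indicesFrom_zero (l : ℕ) : indicesFrom l 0 = Finset.univ := by simp [indicesFrom]

theorem indicesFrom_self (l : ℕ) : indicesFrom l l = ∅ := by
  ext i; simp [mem_indicesFrom]

theorem indicesFrom_succ_subset (l a : ℕ) : indicesFrom l (a + 1) ⊆ indicesFrom l a :=
  fun i hi => by rw [mem_indicesFrom] at *; omega

theorem card_indicesFrom (l a : ℕ) : (indicesFrom l a).card = l - a := by
  have h := Finset.card_filter_add_card_filter_not (s := (Finset.univ : Finset (Fin l)))
    (fun j : Fin l => (j : ℕ) < a)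
  simp only [not_lt, Finset.card_univ, Fintype.card_fin, Fin.card_filter_val_lt] at h
  rw [indicesFrom]
  omega

/-- Littlewood's kernel `∏ (1 - (x i)⁻¹ (x j)⁻¹)` over `a ≤ i ≤ j`, the inverse of the generating
function of the Schur functions with even parts. -/
def kernel (l a : ℕ) : Laurent (Fin l) :=
  ∏ i ∈ indicesFrom l a, ∏ j ∈ Finset.Ici i, (1 - Xinv i * Xinv j)

/-- The Weyl denominator of type `C`, factored through the alternant. -/
def weylDenom (l : ℕ) : Laurent (Fin l) := kernel l 0 * alternant l

theorem weylDenom_eq_prod (l : ℕ) : weylDenom l =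
    (∏ i, (X i - Xinv i)) *
      ∏ i : Fin l, ∏ j ∈ Finset.Ioi i, ((X j + Xinv j) - (X i + Xinv i)) := by
  have hne : ∀ i j : Fin l, (X j + Xinv j) - (X i + Xinv i) =
      (1 - Xinv i * Xinv j) * (X j - X i) := fun i j => by
    linear_combination (Xinv i) * X_mul_Xinv j - (Xinv j) * X_mul_Xinv i
  have heq : ∀ i : Fin l, X i - Xinv i = (1 - Xinv i * Xinv i) * X i := fun i => by
    linear_combination (Xinv i) * X_mul_Xinv i
  rw [weylDenom, alternant_eq_prod, kernel, indicesFrom_zero]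
  simp only [hne, heq, Finset.prod_mul_distrib, ← Finset.Ioi_insert,
    Finset.prod_insert Finset.notMem_Ioi_self]
  ring

theorem permAct_weylDenom (σ : Equiv.Perm (Fin l)) :
    permAct σ (weylDenom l) = (Equiv.Perm.sign σ : ℤ) • weylDenom l := by
  have hV : (permAct σ).mapMatrix (Matrix.vandermonde fun i : Fin l => X i + Xinv i) =
      (Matrix.vandermonde fun i : Fin l => X i + Xinv i).submatrix σ id := by
    ext i j : 2
    simp [Matrix.vandermonde, permAct_X, permAct_Xinv]
  rw [weylDenom_eq_prod, ← Matrix.det_vandermonde, map_mul, AlgEquiv.map_det, map_prod, hV,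
    Matrix.det_permute, zsmul_eq_mul]
  simp only [map_sub, permAct_X, permAct_Xinv]
  rw [Equiv.prod_comp σ fun i => X i - Xinv i]
  ring

theorem flipAct_weylDenom (i : Fin l) : flipAct i (weylDenom l) = -weylDenom l := by
  have hself : flipAct i (X i - Xinv i) = -(X i - Xinv i) := by
    rw [map_sub, flipAct_X_self, flipAct_Xinv_self, neg_sub]
  have hne : ∀ j ∈ Finset.univ.erase i, flipAct i (X j - Xinv j) = X j - Xinv j := fun j hj => by
    rw [map_sub, flipAct_X_of_ne (Finset.ne_of_mem_erase hj),
      flipAct_Xinv_of_ne (Finset.ne_of_mem_erase hj)]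
  rw [weylDenom_eq_prod, ← Finset.mul_prod_erase _ _ (Finset.mem_univ i), map_mul, map_mul, hself,
    map_prod, Finset.prod_congr rfl hne]
  simp only [map_prod, map_sub (flipAct i) (X _ + Xinv _), flipAct_X_add_Xinv]
  ring

theorem isAntiinvariant_weylDenom : IsAntiinvariant (weylDenom l) :=
  ⟨fun σ _ => permAct_weylDenom σ, flipAct_weylDenom⟩

-- Every factor `1 - (x i)⁻¹ (x j)⁻¹` only adds terms of smaller total degree.
theorem coeff_weylDenom {z : Weight (Fin l)} (hz : ∑ i, rho l i ≤ ∑ i, z i) :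
    (weylDenom l).coeff z = (alternant l).coeff z := by
  let AgreesAbove (F : Laurent (Fin l)) : Prop :=
    ∀ z, ∑ i, rho l i ≤ ∑ i, z i → F.coeff z = (alternant l).coeff z
  have hfactor : ∀ i j F, AgreesAbove F → AgreesAbove ((1 - Xinv i * Xinv j) * F) := by
    intro i j F hF z hz
    have hs : ∑ k, rho l k < ∑ k, (z + e i + e j) k := by
      simp only [Pi.add_apply, Finset.sum_add_distrib, sum_e]
      omega
    rw [sub_mul, one_mul, mul_assoc, AddMonoidAlgebra.coeff_sub, Finsupp.sub_apply,
      coeff_Xinv_mul, coeff_Xinv_mul, hF z hz, hF _ hs.le,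
      coeff_alternant_eq_zero_of_sum_ne hs.ne', sub_zero]
  let preserving : Submonoid (Laurent (Fin l)) :=
    { carrier := {K | ∀ F, AgreesAbove F → AgreesAbove (K * F)}
      one_mem' := fun F hF => (one_mul F).symm ▸ hF
      mul_mem' := fun {K L} hK hL F hF => (mul_assoc K L F).symm ▸ hK _ (hL _ hF) }
  have hkernel : kernel l 0 ∈ preserving :=
    Submonoid.prod_mem _ fun i _ => Submonoid.prod_mem _ fun j _ => hfactor i j
  exact hkernel _ (fun _ _ => rfl) z hz

end WeylDenominator

section Pairing

variable {ι : Type*}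

/-- The pairing `∑ v z * F z` of a function on the lattice with a Laurent polynomial. -/
def pair (v : Weight ι → ℤ) : Laurent ι →ₗ[ℤ] ℤ :=
  Finsupp.linearCombination ℤ v ∘ₗ (AddMonoidAlgebra.coeffLinearEquiv ℤ).toLinearMap

theorem pair_apply (v : Weight ι → ℤ) (F : Laurent ι) :
    pair v F = ∑ z ∈ F.coeff.support, F.coeff z * v z := by
  simp only [pair, LinearMap.comp_apply, Finsupp.linearCombination_apply, Finsupp.sum, smul_eq_mul]
  rfl

theorem pair_congr {v w : Weight ι → ℤ} {F : Laurent ι} (h : ∀ z, F.coeff z ≠ 0 → v z = w z) :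
    pair v F = pair w F := by
  rw [pair_apply, pair_apply]
  refine Finset.sum_congr rfl fun z hz => ?_
  rw [h z (Finsupp.mem_support_iff.1 hz)]

theorem pair_eq_zero {v : Weight ι → ℤ} {F : Laurent ι} (h : ∀ z, F.coeff z ≠ 0 → v z = 0) :
    pair v F = 0 := by
  rw [pair_apply]
  exact Finset.sum_eq_zero fun z hz => by rw [h z (Finsupp.mem_support_iff.1 hz), mul_zero]

theorem pair_add_left (v w : Weight ι → ℤ) (F : Laurent ι) :
    pair (fun z => v z + w z) F = pair v F + pair w F := by
  simp only [pair_apply, mul_add, Finset.sum_add_distrib]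

theorem pair_sub_left (v w : Weight ι → ℤ) (F : Laurent ι) :
    pair (fun z => v z - w z) F = pair v F - pair w F := by
  simp only [pair_apply, mul_sub, Finset.sum_sub_distrib]

theorem pair_sum_left {κ : Type*} (s : Finset κ) (v : κ → Weight ι → ℤ) (F : Laurent ι) :
    pair (fun z => ∑ i ∈ s, v i z) F = ∑ i ∈ s, pair (v i) F := by
  simp only [pair_apply, Finset.mul_sum]
  exact Finset.sum_comm

theorem pair_monomial (v : Weight ι → ℤ) (m : Weight ι) : pair v (monomial m) = v m := by
  simp [pair, monomial, AddMonoidAlgebra.coeffLinearEquiv]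

theorem pair_monomial_mul (v : Weight ι → ℤ) (m : Weight ι) (F : Laurent ι) :
    pair v (monomial m * F) = pair (fun z => v (z + m)) F := by
  induction F using AddMonoidAlgebra.induction_linear with
  | zero => simp
  | add f g hf hg => rw [mul_add, map_add, map_add, hf, hg]
  | single a b =>
    have h : (AddMonoidAlgebra.single a b : Laurent ι) = b • monomial a := by simp [monomial]
    rw [h, mul_smul_comm, monomial_mul, map_smul, map_smul, pair_monomial, pair_monomial, add_comm]

theorem pair_indicator [DecidableEq (Weight ι)] (w : Weight ι) (F : Laurent ι) :
    pair (fun z => if w = z then 1 else 0) F = F.coeff w := by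
  rw [pair_apply]
  simp only [mul_ite, mul_one, mul_zero, Finset.sum_ite_eq]
  split_ifs with h
  · rfl
  · exact (Finsupp.notMem_support_iff.1 h).symm

end Pairing

section Littlewood

variable {ι : Type*}

theorem apply_mem_iff_of_support_subset {s : Finset ι} {τ : Equiv.Perm ι}
    (hτ : {i | τ i ≠ i} ⊆ s) (i : ι) : τ i ∈ s ↔ i ∈ s := by
  conv_lhs => rw [← Finset.map_perm hτ, Finset.mem_map_equiv, Equiv.symm_apply_apply]

variable [DecidableEq ι]

/-- The indicator vector of a set of coordinates. -/
def indicatorVec (s : Finset ι) : Weight ι := fun i => if i ∈ s then 1 else 0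

theorem nsmul_indicatorVec_apply (m : ℕ) (s : Finset ι) (i : ι) :
    (m • indicatorVec s) i = if i ∈ s then (m : ℤ) else 0 := by
  simp [indicatorVec]

theorem sum_e_eq_indicatorVec (s : Finset ι) : ∑ i ∈ s, e i = indicatorVec s := by
  funext k
  simp [Finset.sum_apply, e, indicatorVec, Pi.single_apply]

theorem AntisymmOn.monomial_indicatorVec_mul [Fintype ι] {s : Finset ι} {G : Laurent ι}
    (hG : AntisymmOn s G) (c : ℤ) : AntisymmOn s (monomial (c • indicatorVec s) * G) := by
  refine hG.mul_left fun τ hτ => ?_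
  rw [permAct_monomial]
  congr 1
  funext i
  have hi := apply_mem_iff_of_support_subset hτ (τ.symm i)
  rw [Equiv.apply_symm_apply] at hi
  simp [indicatorVec, hi]

/-- The elementary symmetric polynomial of degree `r` in the variables `(x i)⁻¹`, `i ∈ s`. -/
def elemSymm (s : Finset ι) (r : ℕ) : Laurent ι := ∑ t ∈ s.powersetCard r, ∏ j ∈ t, Xinv j

theorem elemSymm_zero (s : Finset ι) : elemSymm s 0 = 1 := by simp [elemSymm]

theorem elemSymm_card (s : Finset ι) : elemSymm s s.card = monomial (-indicatorVec s) := by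
  rw [elemSymm, Finset.powersetCard_self, Finset.sum_singleton, ← sum_e_eq_indicatorVec,
    ← Finset.sum_neg_distrib, ← prod_monomial]
  rfl

theorem permAct_elemSymm {s : Finset ι} {τ : Equiv.Perm ι} (hτ : {i | τ i ≠ i} ⊆ s) (r : ℕ) :
    permAct τ (elemSymm s r) = elemSymm s r := by
  conv_rhs => rw [elemSymm, ← Finset.map_perm hτ, Finset.powersetCard_map, Finset.sum_map]
  simp only [elemSymm, map_sum, map_prod, permAct_Xinv]
  refine Finset.sum_congr rfl fun t _ => ?_
  simp

/-- The factor `∏ (1 - (x i)⁻¹ (x j)⁻¹)`, `j ∈ s`, of Littlewood's kernel. -/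
def kernelFactor (s : Finset ι) (i : ι) : Laurent ι := ∏ j ∈ s, (1 - Xinv i * Xinv j)

theorem permAct_kernelFactor {s : Finset ι} {i : ι} {τ : Equiv.Perm ι}
    (hτ : {i | τ i ≠ i} ⊆ s) (hi : τ i = i) :
    permAct τ (kernelFactor s i) = kernelFactor s i := by
  conv_rhs => rw [kernelFactor, ← Finset.map_perm hτ, Finset.prod_map]
  simp only [kernelFactor, map_prod, map_sub, map_mul, map_one, permAct_Xinv, hi]
  rfl

theorem kernelFactor_eq_sum (s : Finset ι) (i : ι) : kernelFactor s i =
    ∑ r ∈ Finset.range (s.card + 1), (-1) ^ r * (monomial (-(r • e i)) * elemSymm s r) := by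
  simp only [kernelFactor, sub_eq_add_neg, Finset.prod_one_add, Finset.sum_powerset]
  refine Finset.sum_congr rfl fun r _ => ?_
  rw [elemSymm, Finset.mul_sum, Finset.mul_sum]
  refine Finset.sum_congr rfl fun t ht => ?_
  rw [Finset.prod_neg, Finset.prod_mul_distrib, Finset.prod_const,
    (Finset.mem_powersetCard.1 ht).2, Xinv, monomial_pow, smul_neg]

theorem coeff_kernelFactor_mul_eq_sum (s : Finset ι) (i : ι) (G : Laurent ι) (z : Weight ι) :
    (kernelFactor s i * G).coeff z =
      ∑ r ∈ Finset.range (s.card + 1), (-1) ^ r * (elemSymm s r * G).coeff (z + r • e i) := by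
  simp only [kernelFactor_eq_sum, Finset.sum_mul, coeff_finset_sum, mul_assoc,
    coeff_neg_one_pow_mul, coeff_monomial_mul, sub_neg_eq_add]

variable {l a : ℕ}

theorem kernel_eq_mul (ha : a < l) :
    kernel l a = kernel l (a + 1) * kernelFactor (indicesFrom l a) ⟨a, ha⟩ := by
  have hinsert : indicesFrom l a = insert ⟨a, ha⟩ (indicesFrom l (a + 1)) := by
    ext i
    simp only [Finset.mem_insert, mem_indicesFrom, Fin.ext_iff]
    omega
  have hIci : Finset.Ici (⟨a, ha⟩ : Fin l) = indicesFrom l a := by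
    ext i
    simp [mem_indicesFrom, Fin.le_def]
  rw [kernel, hinsert, Finset.prod_insert (by simp [mem_indicesFrom]), mul_comm, ← hinsert, hIci]
  rfl

theorem kernel_self (l : ℕ) : kernel l l = 1 := by
  rw [kernel, indicesFrom_self, Finset.prod_empty]

-- Moving the first entry of the tail behind the others sorts `rho + (k + 1) e_a + 1_{≥ a}`.
theorem rho_add_comp_cycleIcc {k : ℕ} [NeZero l] (hk : l = a + k + 1) (ha : a < l) :
    (rho l + (k + 1) • e ⟨a, ha⟩ + indicatorVec (indicesFrom l a)) ∘
      Fin.cycleIcc ⟨a, ha⟩ ⟨l - 1, by omega⟩ = rho l + 2 • indicatorVec (indicesFrom l a) := by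
  funext i
  rw [Function.comp_apply]
  obtain hi | hi := lt_or_ge (i : ℕ) a
  · have hne : i ≠ ⟨a, ha⟩ := Fin.ne_of_lt hi
    rw [Fin.cycleIcc_of_lt hi]
    simp [indicatorVec, mem_indicesFrom, hi.not_ge, e_of_ne hne]
  obtain hlast | hlast := lt_or_ge (i : ℕ) (l - 1)
  · have hval : ((i + 1 : Fin l) : ℕ) = i + 1 := Fin.val_add_one_of_lt' (by omega)
    have hne : i + 1 ≠ (⟨a, ha⟩ : Fin l) :=
      Fin.ne_of_gt (by rw [Fin.lt_def, hval]; change a < (i : ℕ) + 1; omega)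
    rw [Fin.cycleIcc_of_ge_of_lt hi hlast]
    simp only [nsmul_eq_mul, Nat.cast_add, Nat.cast_one, Pi.add_apply, rho, hval, Pi.mul_apply,
      Pi.natCast_apply, e_of_ne hne, mul_zero, add_zero, indicatorVec,
      mem_indicesFrom, le_add_right hi, ↓reduceIte, Nat.cast_ofNat, Pi.ofNat_apply, hi, mul_one]
    ring
  · have hi_eq : i = ⟨l - 1, by omega⟩ := Fin.ext (by change (i : ℕ) = l - 1; omega)
    rw [hi_eq, Fin.cycleIcc_of_last (by rw [Fin.le_def]; change a ≤ l - 1; omega)]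
    simp only [nsmul_eq_mul, Nat.cast_add, Nat.cast_one, Pi.add_apply, rho, Pi.mul_apply,
      Pi.natCast_apply, e_self, mul_one, indicatorVec, mem_indicesFrom, le_refl,
      ↓reduceIte, Nat.cast_ofNat, Pi.ofNat_apply, mul_ite, mul_zero]
    omega

theorem coeff_elemSymm_mul_top (ha : a < l) {G : Laurent (Fin l)}
    (hG : AntisymmOn (indicesFrom l a) G) :
    (-1) ^ (l - a) * (elemSymm (indicesFrom l a) (l - a) * G).coeff
      (rho l + (l - a) • e ⟨a, ha⟩) =
      -G.coeff (rho l + 2 • indicatorVec (indicesFrom l a)) := by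
  obtain ⟨k, hk⟩ : ∃ k, l = a + k + 1 := ⟨l - a - 1, by omega⟩
  have hk' : l - a = k + 1 := by omega
  have : NeZero l := ⟨by omega⟩
  have hsupp : {i | Fin.cycleIcc (⟨a, ha⟩ : Fin l) ⟨l - 1, by omega⟩ i ≠ i} ⊆
      indicesFrom l a := fun i hi => by
    rw [Finset.mem_coe, mem_indicesFrom]
    by_contra hlt
    exact hi (Fin.cycleIcc_of_lt (not_le.1 hlt))
  have hsort := hG.coeff_comp hsupp
    (rho l + (k + 1) • e ⟨a, ha⟩ + indicatorVec (indicesFrom l a))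
  rw [rho_add_comp_cycleIcc hk,
    Fin.sign_cycleIcc_of_le (by rw [Fin.le_def]; change a ≤ l - 1; omega)] at hsort
  simp only [show l - 1 - a = k by omega, Units.val_pow_eq_pow_val, Units.val_neg,
    Units.val_one] at hsort
  conv_lhs => rw [← card_indicesFrom l a, elemSymm_card, card_indicesFrom, hk', coeff_monomial_mul,
    sub_neg_eq_add]
  rw [hsort, pow_succ]
  ring

-- Only the extreme elementary symmetric polynomials survive: in between, the exponent
-- `rho + r e_a` has two equal entries.
theorem coeff_kernelFactor_mul (ha : a < l) {G : Laurent (Fin l)}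
    (hG : AntisymmOn (indicesFrom l a) G) :
    (kernelFactor (indicesFrom l a) ⟨a, ha⟩ * G).coeff (rho l) =
      G.coeff (rho l) - G.coeff (rho l + 2 • indicatorVec (indicesFrom l a)) := by
  have hmiddle : ∀ r, 0 < r → r < l - a →
      (elemSymm (indicesFrom l a) r * G).coeff (rho l + r • e ⟨a, ha⟩) = 0 := fun r h0 hr => by
    have hne : (⟨a + r, by omega⟩ : Fin l) ≠ ⟨a, ha⟩ := Fin.ne_of_gt (by simp [Fin.lt_def, h0])
    refine (hG.mul_left fun τ hτ => permAct_elemSymm hτ r).coeff_eq_zero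
      (i := ⟨a + r, by omega⟩) (j := ⟨a, ha⟩) (by simp [mem_indicesFrom])
      (by simp [mem_indicesFrom]) hne ?_
    simp only [nsmul_eq_mul, Pi.add_apply, rho, Nat.cast_add, Pi.mul_apply, Pi.natCast_apply,
      e_of_ne hne, mul_zero, add_zero, e_self, mul_one]
    ring
  have hl : l - a = (l - a - 1) + 1 := by omega
  rw [coeff_kernelFactor_mul_eq_sum, card_indicesFrom, Finset.sum_range_succ,
    coeff_elemSymm_mul_top ha hG, hl, Finset.sum_range_succ', Finset.sum_eq_zero fun r hr => ?_]
  · simp [elemSymm_zero, sub_eq_add_neg]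
  · rw [hmiddle (r + 1) r.succ_pos (by rw [Finset.mem_range] at hr; omega), mul_zero]

/-- The partitions with even parts whose parts of index below `a` vanish. The parts are listed in
increasing order. -/
structure IsEvenPartition (a : ℕ) (p : Weight (Fin l)) : Prop where
  eq_zero : ∀ i : Fin l, (i : ℕ) < a → p i = 0
  nonneg : 0 ≤ p
  even : ∀ i, Even (p i)
  monotone : Monotone p

theorem isEvenPartition_self {p : Weight (Fin l)} : IsEvenPartition l p ↔ p = 0 :=
  ⟨fun h => funext fun i => h.eq_zero i i.2, fun h => h ▸
    ⟨fun _ _ => rfl, le_rfl, fun _ => Even.zero, monotone_const⟩⟩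

theorem isEvenPartition_succ_iff (ha : a < l) {p : Weight (Fin l)} :
    IsEvenPartition (a + 1) p ↔ IsEvenPartition a p ∧ p ⟨a, ha⟩ = 0 := by
  refine ⟨fun h => ⟨⟨fun i hi => h.eq_zero i (by omega), h.nonneg, h.even, h.monotone⟩,
    h.eq_zero ⟨a, ha⟩ a.lt_succ_self⟩,
    fun ⟨h, h0⟩ => ⟨fun i hi => ?_, h.nonneg, h.even, h.monotone⟩⟩
  obtain hlt | heq := Nat.lt_succ_iff_lt_or_eq.1 hi
  · exact h.eq_zero i hlt
  · rwa [show i = ⟨a, ha⟩ from Fin.ext heq]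

theorem IsEvenPartition.add_indicatorVec {p : Weight (Fin l)} (h : IsEvenPartition a p) :
    IsEvenPartition a (p + 2 • indicatorVec (indicesFrom l a)) where
  eq_zero i hi := by simp [indicatorVec, mem_indicesFrom, hi, h.eq_zero i hi]
  nonneg := add_nonneg h.nonneg fun i => by
    rw [nsmul_indicatorVec_apply]
    split_ifs <;> simp
  even i := (h.even i).add (by simp)
  monotone i j hij := by
    have hp := h.monotone hij
    rw [Fin.le_def] at hij
    simp only [Pi.add_apply, nsmul_indicatorVec_apply, mem_indicesFrom]
    split_ifs <;> push_cast <;> omega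

theorem IsEvenPartition.sub_indicatorVec (ha : a < l) {p : Weight (Fin l)}
    (h : IsEvenPartition a p) (h0 : p ⟨a, ha⟩ ≠ 0) :
    IsEvenPartition a (p - 2 • indicatorVec (indicesFrom l a)) := by
  have htwo : ∀ i : Fin l, a ≤ (i : ℕ) → 2 ≤ p i := fun i hi => by
    have hle : p ⟨a, ha⟩ ≤ p i := h.monotone hi
    have hnonneg : 0 ≤ p ⟨a, ha⟩ := h.nonneg _
    obtain ⟨m, hm⟩ := h.even ⟨a, ha⟩
    omega
  refine ⟨fun i hi => ?_, fun i => ?_, fun i => (h.even i).sub (by simp), fun i j hij => ?_⟩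
  · simp [indicatorVec, mem_indicesFrom, hi, h.eq_zero i hi]
  · have hnonneg : 0 ≤ p i := h.nonneg i
    have := htwo i
    simp only [Pi.zero_apply, Pi.sub_apply, nsmul_indicatorVec_apply, mem_indicesFrom]
    split_ifs <;> push_cast <;> omega
  · have hp := h.monotone hij
    have hi := h.eq_zero i
    have hj := htwo j
    rw [Fin.le_def] at hij
    simp only [Pi.sub_apply, nsmul_indicatorVec_apply, mem_indicesFrom]
    split_ifs <;> push_cast <;> omega

theorem isEvenPartition_sub_indicatorVec_iff (ha : a < l) {p : Weight (Fin l)} :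
    IsEvenPartition a (p - 2 • indicatorVec (indicesFrom l a)) ↔
      IsEvenPartition a p ∧ p ⟨a, ha⟩ ≠ 0 := by
  refine ⟨fun h => ⟨?_, ?_⟩, fun h => h.1.sub_indicatorVec ha h.2⟩
  · simpa using h.add_indicatorVec
  · have hmem : (⟨a, ha⟩ : Fin l) ∈ indicesFrom l a := mem_indicesFrom.2 le_rfl
    have hnonneg : 0 ≤ p ⟨a, ha⟩ - (2 • indicatorVec (indicesFrom l a)) ⟨a, ha⟩ := h.nonneg _
    rw [nsmul_indicatorVec_apply, if_pos hmem] at hnonneg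
    omega

open Classical in
/-- The indicator function of the points `rho + p` with `p` an even partition whose parts of index
below `a` vanish. -/
def evenFrom (a : ℕ) (z : Weight (Fin l)) : ℤ := if IsEvenPartition a (z - rho l) then 1 else 0

theorem evenFrom_self [DecidableEq (Weight (Fin l))] :
    evenFrom l = fun z => if rho l = z then (1 : ℤ) else 0 := by
  funext z
  simp only [evenFrom, isEvenPartition_self, sub_eq_zero, eq_comm]

theorem evenFrom_rho : evenFrom 0 (rho l) = 1 :=
  if_pos ⟨fun i _ => by simp, by simp, by simp, fun i j _ => by simp⟩

theorem evenFrom_sub (ha : a < l) (z : Weight (Fin l)) :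
    evenFrom a z - evenFrom a (z - 2 • indicatorVec (indicesFrom l a)) = evenFrom (a + 1) z := by
  classical
  rw [evenFrom, evenFrom, evenFrom, sub_right_comm,
    if_congr (isEvenPartition_sub_indicatorVec_iff ha) rfl rfl,
    if_congr (isEvenPartition_succ_iff ha) rfl rfl]
  by_cases h : IsEvenPartition a (z - rho l) <;> by_cases h0 : (z - rho l) ⟨a, ha⟩ = 0 <;>
    simp [h, h0, -Pi.sub_apply]

/-- The failure of Littlewood's identity `∑ s_p = ∏ (1 - x i * x j)⁻¹` over even partitions, tested
against a polynomial antisymmetric in the variables from index `a` on. -/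
def littlewoodDefect (a : ℕ) (G : Laurent (Fin l)) : ℤ :=
  pair (evenFrom a) (kernel l a * G) - G.coeff (rho l)

theorem littlewoodDefect_self (G : Laurent (Fin l)) : littlewoodDefect l G = 0 := by
  classical
  rw [littlewoodDefect, kernel_self, one_mul, evenFrom_self, pair_indicator, sub_self]

theorem littlewoodDefect_monomial_mul (ha : a < l) {G : Laurent (Fin l)}
    (hG : AntisymmOn (indicesFrom l a) G)
    (hsucc : ∀ F : Laurent (Fin l), AntisymmOn (indicesFrom l (a + 1)) F →
      littlewoodDefect (a + 1) F = 0) :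
    littlewoodDefect a (monomial (-(2 • indicatorVec (indicesFrom l a))) * G) =
      littlewoodDefect a G := by
  have hpair : pair (evenFrom a) (kernel l a * G) - pair (evenFrom a)
      (kernel l a * (monomial (-(2 • indicatorVec (indicesFrom l a))) * G)) =
      pair (evenFrom (a + 1)) (kernel l a * G) := by
    rw [mul_left_comm, pair_monomial_mul, ← pair_sub_left]
    simp only [← sub_eq_add_neg, evenFrom_sub ha]
  have hfactor : AntisymmOn (indicesFrom l (a + 1))
      (kernelFactor (indicesFrom l a) ⟨a, ha⟩ * G) := by
    refine (hG.mono (indicesFrom_succ_subset l a)).mul_left fun τ hτ =>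
      permAct_kernelFactor (hτ.trans (Finset.coe_subset.2 (indicesFrom_succ_subset l a))) ?_
    by_contra hne
    have hmem := hτ hne
    rw [Finset.mem_coe, mem_indicesFrom] at hmem
    exact absurd hmem (Nat.not_succ_le_self a)
  have hdefect := hsucc _ hfactor
  rw [littlewoodDefect, ← mul_assoc, ← kernel_eq_mul ha, coeff_kernelFactor_mul ha hG] at hdefect
  rw [littlewoodDefect, littlewoodDefect, coeff_monomial_mul, sub_neg_eq_add]
  linarith

theorem exists_littlewoodDefect_monomial_mul_eq_zero (ha : a < l) (G : Laurent (Fin l)) :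
    ∃ m : ℕ, littlewoodDefect a
      (monomial (m • -(2 • indicatorVec (indicesFrom l a))) * G) = 0 := by
  obtain ⟨m₁, h₁⟩ := exists_apply_le_of_coeff_ne_zero G ⟨a, ha⟩
  obtain ⟨m₂, h₂⟩ := exists_apply_le_of_coeff_ne_zero (kernel l a * G) ⟨a, ha⟩
  refine ⟨m₁ + m₂, ?_⟩
  have hcoeff : (monomial ((m₁ + m₂) • -(2 • indicatorVec (indicesFrom l a))) * G).coeff
      (rho l) = 0 := by
    rw [coeff_monomial_mul]
    by_contra h
    have hle := h₁ _ h
    simp only [nsmul_eq_mul, Nat.cast_ofNat, smul_neg, Nat.cast_add, Pi.sub_apply, rho,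
      Pi.neg_apply, Pi.mul_apply, Pi.add_apply, Pi.natCast_apply, Pi.ofNat_apply, indicatorVec,
      mem_indicesFrom, le_refl, ↓reduceIte, mul_one, sub_neg_eq_add] at hle
    omega
  rw [littlewoodDefect, hcoeff, sub_zero, mul_left_comm, pair_monomial_mul]
  refine pair_eq_zero fun z hz => if_neg fun heven => ?_
  have hle := h₂ z hz
  have hnonneg := heven.nonneg ⟨a, ha⟩
  simp only [nsmul_eq_mul, Nat.cast_ofNat, smul_neg, Nat.cast_add, Pi.sub_apply,
    Pi.add_apply, Pi.neg_apply, Pi.mul_apply, Pi.natCast_apply, Pi.ofNat_apply, indicatorVec,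
    mem_indicesFrom, le_refl, ↓reduceIte, mul_one, rho, sub_nonneg] at hnonneg
  omega

-- Shifting `G` down along the indicator vector of the tail leaves the defect unchanged, and far
-- enough down both terms of the defect vanish.
theorem littlewoodDefect_eq_zero {G : Laurent (Fin l)} (ha : a ≤ l)
    (hG : AntisymmOn (indicesFrom l a) G) : littlewoodDefect a G = 0 := by
  induction ha using Nat.decreasingInduction generalizing G with
  | self => exact littlewoodDefect_self G
  | of_succ a ha ih =>
    obtain ⟨m, hm⟩ := exists_littlewoodDefect_monomial_mul_eq_zero ha G
    suffices hshift : ∀ m : ℕ, littlewoodDefect a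
        (monomial (m • -(2 • indicatorVec (indicesFrom l a))) * G) = littlewoodDefect a G by
      rw [← hshift m, hm]
    intro m
    induction m with
    | zero => rw [zero_smul, monomial_zero, one_mul]
    | succ m ihm =>
      have hanti := hG.monomial_indicatorVec_mul (-(2 * m))
      have hsmul : m • -(2 • indicatorVec (indicesFrom l a)) =
          (-(2 * m) : ℤ) • indicatorVec (indicesFrom l a) := by module
      rw [succ_nsmul', ← monomial_mul, mul_assoc, ← ihm, hsmul,
        littlewoodDefect_monomial_mul ha hanti fun F hF => ih hF]

theorem pair_evenFrom_kernel_mul {G : Laurent (Fin l)} (hG : AntisymmOn Finset.univ G) :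
    pair (evenFrom 0) (kernel l 0 * G) = G.coeff (rho l) :=
  sub_eq_zero.1 (littlewoodDefect_eq_zero l.zero_le (by rwa [indicesFrom_zero]))

end Littlewood

section Chamber

variable {l : ℕ} {z : Weight (Fin l)}

/-- The open Weyl chamber of type `C`. -/
def IsChamber (z : Weight (Fin l)) : Prop := StrictMono z ∧ ∀ i, 0 < z i

/-- Membership in the chamber, with at most `c` columns: `z - rho`, read from the last coordinate
on, is the list of column heights of a Young diagram. -/
def IsChamberLE (c : ℕ) (z : Weight (Fin l)) : Prop :=
  IsChamber z ∧ ∀ i : Fin l, (i : ℕ) + c < l → z i = rho l i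

/-- The union of the walls of the reflections of type `C`. -/
def IsSingular (z : Weight (Fin l)) : Prop := (∃ i j, i ≠ j ∧ z i = z j) ∨ ∃ i, z i = 0

theorem strictMono_iff_monotone_sub_rho : StrictMono z ↔ Monotone (z - rho l) := by
  cases l with
  | zero => exact ⟨fun _ i => i.elim0, fun _ i => i.elim0⟩
  | succ l =>
    rw [Fin.strictMono_iff_lt_succ, Fin.monotone_iff_le_succ]
    refine forall_congr' fun i => ?_
    simp only [Pi.sub_apply, rho, Fin.val_castSucc, Fin.val_succ]
    omega

theorem isChamber_iff : IsChamber z ↔ 0 ≤ z - rho l ∧ Monotone (z - rho l) := by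
  rw [IsChamber, strictMono_iff_monotone_sub_rho, and_comm]
  refine and_congr_left fun hmono => ⟨fun hpos i => ?_, fun hnonneg i => ?_⟩
  · have hfirst := hpos ⟨0, i.pos⟩
    have hle := hmono (show ⟨0, i.pos⟩ ≤ i from Fin.le_def.2 (Nat.zero_le _))
    simp only [Pi.zero_apply, Pi.sub_apply, rho] at hle ⊢
    omega
  · have hi : 0 ≤ z i - rho l i := hnonneg i
    rw [rho] at hi
    omega

theorem IsChamber.rho_le (hz : IsChamber z) : rho l ≤ z := sub_nonneg.1 (isChamber_iff.1 hz).1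

theorem isChamber_rho : IsChamber (rho l) :=
  isChamber_iff.2 (by rw [sub_self]; exact ⟨le_rfl, monotone_const⟩)

theorem isChamberLE_self : IsChamberLE l z ↔ IsChamber z :=
  and_iff_left fun _ hi => absurd hi (by omega)

-- A step changes no coordinate, and no difference of two coordinates, by more than one.
theorem IsChamber.isChamber_or_isSingular {w : Weight (Fin l)} (hw : IsChamber w)
    (hdiff : ∀ i j, w j - w i ≤ z j - z i + 1) (hle : ∀ i, w i ≤ z i + 1) :
    IsChamber z ∨ IsSingular z := by
  rw [or_iff_not_imp_right, IsSingular]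
  push Not
  rintro ⟨hne, hzero⟩
  refine ⟨fun i j hij => ?_, fun i => ?_⟩
  · have hlt := hw.1 hij
    have hij' := hdiff i j
    have hne' := hne i j hij.ne
    omega
  · have hpos := hw.2 i
    have hi := hle i
    have hi' := hzero i
    omega

theorem IsChamber.add_e (hz : IsChamber z) (k : Fin l) :
    IsChamber (z + e k) ∨ IsSingular (z + e k) := by
  refine hz.isChamber_or_isSingular (fun i j => ?_) fun i => ?_
  · have hi := e_le_one k i
    have hj := e_nonneg k j
    simp only [Pi.add_apply]
    omega
  · have hi := e_nonneg k i
    rw [Pi.add_apply]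
    omega

theorem IsChamber.sub_e (hz : IsChamber z) (k : Fin l) :
    IsChamber (z - e k) ∨ IsSingular (z - e k) := by
  refine hz.isChamber_or_isSingular (fun i j => ?_) fun i => ?_
  · have hi := e_nonneg k i
    have hj := e_le_one k j
    simp only [Pi.sub_apply]
    omega
  · have hi := e_le_one k i
    rw [Pi.sub_apply]
    omega

theorem IsAntiinvariant.coeff_eq_zero_of_isSingular {G : Laurent (Fin l)}
    (hG : IsAntiinvariant G) (hz : IsSingular z) : G.coeff z = 0 := by
  obtain ⟨i, j, hij, h⟩ | ⟨i, h⟩ := hz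
  · exact hG.1.coeff_eq_zero (Finset.mem_univ i) (Finset.mem_univ j) hij h
  · exact hG.coeff_eq_zero h

end Chamber

section ChamberWalks

variable {l : ℕ}

open Classical in
/-- The operator summing a function over the neighbours obtained by adding a cell, at most `c`
columns being allowed. -/
def up (c : ℕ) (v : Weight (Fin l) → ℤ) (z : Weight (Fin l)) : ℤ :=
  ∑ i, if IsChamberLE c (z + e i) then v (z + e i) else 0

open Classical in
/-- The operator summing a function over the neighbours obtained by removing a cell. -/
def down (v : Weight (Fin l) → ℤ) (z : Weight (Fin l)) : ℤ :=
  ∑ i, if IsChamber (z - e i) then v (z - e i) else 0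

/-- One step of the walk in the chamber. -/
def step (v : Weight (Fin l) → ℤ) (z : Weight (Fin l)) : ℤ := up l v z + down v z

open Classical in
/-- The indicator function of the point `rho`, the empty diagram. -/
def delta (z : Weight (Fin l)) : ℤ := if rho l = z then 1 else 0

open Classical in
/-- Restriction of a function to the chamber. -/
def restrict (v : Weight (Fin l) → ℤ) (z : Weight (Fin l)) : ℤ := if IsChamber z then v z else 0

theorem up_congr {c : ℕ} {v w : Weight (Fin l) → ℤ} (h : ∀ z, IsChamberLE c z → v z = w z) :
    up c v = up c w := by
  classical
  exact funext fun _ => Finset.sum_congr rfl fun _ _ => ite_congr rfl (h _) fun _ => rfl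

theorem down_congr {v w : Weight (Fin l) → ℤ} (h : ∀ z, IsChamber z → v z = w z) :
    down v = down w := by
  classical
  exact funext fun _ => Finset.sum_congr rfl fun _ _ => ite_congr rfl (h _) fun _ => rfl

theorem step_eq_sum_restrict (v : Weight (Fin l) → ℤ) (z : Weight (Fin l)) :
    step v z = ∑ i, restrict v (z + e i) + ∑ i, restrict v (z - e i) := by
  classical
  simp only [step, up, down, restrict, isChamberLE_self]

theorem restrict_evenFrom : restrict (evenFrom 0 : Weight (Fin l) → ℤ) = evenFrom 0 := by
  funext z
  by_cases hz : IsChamber z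
  · exact if_pos hz
  · rw [restrict, if_neg hz, evenFrom, if_neg]
    exact fun h => hz (isChamber_iff.2 ⟨h.nonneg, h.monotone⟩)

-- The reflection principle: leaving the chamber in one step means landing on a wall, where an
-- antiinvariant polynomial has no terms.
theorem pair_restrict_step (v : Weight (Fin l) → ℤ) {G : Laurent (Fin l)}
    (hG : IsAntiinvariant G) :
    pair (restrict v) ((upStep (Fin l) + downStep (Fin l)) * G) = pair (restrict (step v)) G := by
  have hsum : pair (restrict v) ((upStep (Fin l) + downStep (Fin l)) * G) =
      pair (fun z => ∑ i, restrict v (z + e i) + ∑ i, restrict v (z - e i)) G := by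
    simp only [pair_add_left, pair_sum_left, add_mul, map_add, upStep, downStep, Finset.sum_mul,
      map_sum, X, Xinv, pair_monomial_mul, sub_eq_add_neg]
  rw [hsum]
  refine pair_congr fun z hz => ?_
  by_cases hc : IsChamber z
  · rw [restrict, if_pos hc, step_eq_sum_restrict]
  · have hout : ∀ w, (IsChamber w → IsChamber z ∨ IsSingular z) → restrict v w = 0 :=
      fun w hw => if_neg fun hcw => hz (hG.coeff_eq_zero_of_isSingular ((hw hcw).resolve_left hc))
    rw [restrict, if_neg hc,
      Finset.sum_eq_zero fun i _ => hout _ fun h => by simpa using h.sub_e i,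
      Finset.sum_eq_zero fun i _ => hout _ fun h => by simpa using h.add_e i, add_zero]

theorem pair_restrict_step_iterate (k : ℕ) (v : Weight (Fin l) → ℤ) {G : Laurent (Fin l)}
    (hG : IsAntiinvariant G) :
    pair (restrict v) ((upStep (Fin l) + downStep (Fin l)) ^ k * G) =
      pair (restrict (step^[k] v)) G := by
  induction k generalizing v with
  | zero => rw [pow_zero, one_mul, Function.iterate_zero_apply]
  | succ k ih =>
    rw [pow_succ', mul_assoc, pair_restrict_step _ (hG.upStep_add_downStep_pow_mul k), ih,
      Function.iterate_succ_apply]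

theorem pair_restrict_weylDenom (v : Weight (Fin l) → ℤ) :
    pair (restrict v) (weylDenom l) = v (rho l) := by
  classical
  have hcoeff : ∀ z, IsChamber z → (weylDenom l).coeff z = if rho l = z then 1 else 0 :=
    fun z hz => by
      rw [coeff_weylDenom (Finset.sum_le_sum fun i _ => hz.rho_le i),
        coeff_alternant_of_strictMono hz.1]
  have hsupp : ∀ z ∈ (weylDenom l).coeff.support, z ≠ rho l →
      (weylDenom l).coeff z * restrict v z = 0 := fun z hz hne => by
    have hout : ¬IsChamber z := fun hc =>
      Finsupp.mem_support_iff.1 hz ((hcoeff z hc).trans (if_neg hne.symm))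
    rw [restrict, if_neg hout, mul_zero]
  have hrho := hcoeff _ (isChamber_rho (l := l))
  rw [if_pos rfl] at hrho
  rw [pair_apply, Finset.sum_eq_single (rho l) hsupp, hrho, one_mul, restrict,
    if_pos isChamber_rho]
  simp [hrho]

theorem step_iterate_evenFrom (k : ℕ) : step^[k] (evenFrom 0) (rho l) =
    ((upStep (Fin l) + downStep (Fin l)) ^ k * alternant l).coeff (rho l) := by
  rw [← pair_restrict_weylDenom (step^[k] (evenFrom 0)),
    ← pair_restrict_step_iterate k _ isAntiinvariant_weylDenom,
    restrict_evenFrom, weylDenom, mul_left_comm,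
    pair_evenFrom_kernel_mul (antisymmOn_alternant.upStep_add_downStep_pow_mul k)]

theorem coeff_upStep_pow_mul_downStep_pow_mul_alternant (a b : ℕ) {z : Weight (Fin l)}
    (hz : ∑ i, z i ≠ ∑ i, rho l i + a - b) :
    (upStep (Fin l) ^ a * (downStep (Fin l) ^ b * alternant l)).coeff z = 0 := by
  induction a generalizing z with
  | zero =>
    rw [pow_zero, one_mul]
    induction b generalizing z with
    | zero =>
      rw [pow_zero, one_mul]
      exact coeff_alternant_eq_zero_of_sum_ne (by simpa using hz)
    | succ b ih =>
      rw [pow_succ', mul_assoc, coeff_downStep_mul]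
      refine Finset.sum_eq_zero fun i _ => ih ?_
      simp only [Pi.add_apply, Finset.sum_add_distrib, sum_e]
      push_cast at hz ⊢
      omega
  | succ a ih =>
    rw [pow_succ', mul_assoc, coeff_upStep_mul]
    refine Finset.sum_eq_zero fun i _ => ih ?_
    simp only [Pi.sub_apply, Finset.sum_sub_distrib, sum_e]
    push_cast at hz ⊢
    omega

-- By homogeneity only the words with as many up as down steps contribute.
theorem coeff_upStep_add_downStep_pow_mul_alternant (n : ℕ) :
    ((upStep (Fin l) + downStep (Fin l)) ^ (2 * n) * alternant l).coeff (rho l) =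
      n.centralBinom * (downStep (Fin l) ^ n * (upStep (Fin l) ^ n * alternant l)).coeff
        (rho l) := by
  have hterm : ∀ m, (upStep (Fin l) ^ m * downStep (Fin l) ^ (2 * n - m) *
      ((2 * n).choose m : Laurent (Fin l)) * alternant l).coeff (rho l) = (2 * n).choose m *
        (upStep (Fin l) ^ m * (downStep (Fin l) ^ (2 * n - m) * alternant l)).coeff (rho l) :=
    fun m => by
      rw [mul_right_comm, mul_comm, ← nsmul_eq_mul, AddMonoidAlgebra.coeff_smul,
        Finsupp.smul_apply, nsmul_eq_mul, mul_assoc]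
  simp only [add_pow, Finset.sum_mul, coeff_finset_sum, hterm]
  rw [Finset.sum_eq_single_of_mem n (Finset.mem_range.2 (by omega)), mul_left_comm,
    show 2 * n - n = n by omega, Nat.centralBinom]
  intro m hm hmn
  rw [Finset.mem_range] at hm
  rw [coeff_upStep_pow_mul_downStep_pow_mul_alternant, mul_zero]
  omega

theorem coeff_upStep_pow_mul_alternant_eq_zero (n : ℕ) {z : Weight (Fin l)} {i : Fin l}
    (hz : z i ≤ 0) : (upStep (Fin l) ^ n * alternant l).coeff z = 0 := by
  induction n generalizing z with
  | zero => rw [pow_zero, one_mul, coeff_alternant_eq_zero_of_nonpos hz]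
  | succ n ih =>
    rw [pow_succ', mul_assoc, coeff_upStep_mul]
    refine Finset.sum_eq_zero fun j _ => ih ?_
    have hj := e_nonneg j i
    rw [Pi.sub_apply]
    omega

theorem down_iterate_delta (n : ℕ) {z : Weight (Fin l)} (hz : IsChamber z) :
    down^[n] delta z = (upStep (Fin l) ^ n * alternant l).coeff z := by
  classical
  induction n generalizing z with
  | zero =>
    rw [pow_zero, one_mul, coeff_alternant_of_strictMono hz.1, Function.iterate_zero_apply, delta]
  | succ n ih =>
    rw [Function.iterate_succ_apply', down_congr fun _ => ih, pow_succ', mul_assoc,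
      coeff_upStep_mul]
    refine Finset.sum_congr rfl fun i _ => ite_eq_left_iff.2 fun hout => ?_
    obtain ⟨j, k, hjk, h⟩ | ⟨j, h⟩ := (hz.sub_e i).resolve_left hout
    · exact ((antisymmOn_alternant.upStep_pow_mul n).coeff_eq_zero (Finset.mem_univ j)
        (Finset.mem_univ k) hjk h).symm
    · exact (coeff_upStep_pow_mul_alternant_eq_zero n h.le).symm

theorem up_iterate_coeff (n : ℕ) {G : Laurent (Fin l)} (hG : AntisymmOn Finset.univ G)
    {z : Weight (Fin l)} (hz : IsChamber z) :
    (up l)^[n] (fun z => G.coeff z) z = (downStep (Fin l) ^ n * G).coeff z := by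
  classical
  induction n generalizing z with
  | zero => rw [pow_zero, one_mul, Function.iterate_zero_apply]
  | succ n ih =>
    rw [Function.iterate_succ_apply', up_congr fun _ h => ih h.1, pow_succ', mul_assoc,
      coeff_downStep_mul]
    refine Finset.sum_congr rfl fun i _ => ite_eq_left_iff.2 fun hout => ?_
    rw [isChamberLE_self] at hout
    obtain ⟨j, k, hjk, h⟩ | ⟨j, h⟩ := (hz.add_e i).resolve_left hout
    · exact ((hG.downStep_pow_mul n).coeff_eq_zero (Finset.mem_univ j) (Finset.mem_univ k)
        hjk h).symm
    · have hpos := hz.2 j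
      have he := e_nonneg i j
      rw [Pi.add_apply] at h
      omega

theorem up_iterate_congr (n : ℕ) {v w : Weight (Fin l) → ℤ} (h : ∀ z, IsChamber z → v z = w z)
    {z : Weight (Fin l)} (hz : IsChamber z) : (up l)^[n] v z = (up l)^[n] w z := by
  induction n generalizing z with
  | zero => exact h z hz
  | succ n ih =>
    rw [Function.iterate_succ_apply', Function.iterate_succ_apply', up_congr fun z hz => ih hz.1]

theorem step_iterate_two_mul_evenFrom (n : ℕ) : step^[2 * n] (evenFrom 0) (rho l) =
    n.centralBinom * (up l)^[n] (down^[n] delta) (rho l) := by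
  rw [step_iterate_evenFrom, coeff_upStep_add_downStep_pow_mul_alternant,
    ← up_iterate_coeff n (antisymmOn_alternant.upStep_pow_mul n) isChamber_rho,
    up_iterate_congr n (fun _ => down_iterate_delta n) isChamber_rho]

end ChamberWalks

section Commutation

variable {l c : ℕ} {z w : Weight (Fin l)}

theorem IsChamber.sup (hz : IsChamber z) (hw : IsChamber w) : IsChamber (z ⊔ w) :=
  ⟨fun _ _ hij => max_lt_max (hz.1 hij) (hw.1 hij), fun i => lt_max_of_lt_left (hz.2 i)⟩

theorem IsChamber.inf (hz : IsChamber z) (hw : IsChamber w) : IsChamber (z ⊓ w) :=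
  ⟨fun _ _ hij => min_lt_min (hz.1 hij) (hw.1 hij), fun i => lt_min (hz.2 i) (hw.2 i)⟩

theorem IsChamberLE.of_le (hz : IsChamberLE c z) (hw : IsChamber w) (hwz : w ≤ z) :
    IsChamberLE c w :=
  ⟨hw, fun i hi => le_antisymm ((hwz i).trans_eq (hz.2 i hi)) (hw.rho_le i)⟩

theorem IsChamberLE.sup (hz : IsChamberLE c z) (hw : IsChamberLE c w) : IsChamberLE c (z ⊔ w) :=
  ⟨hz.1.sup hw.1, fun i hi => by rw [Pi.sup_apply, hz.2 i hi, hw.2 i hi, sup_idem]⟩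

theorem sup_add_e_sub_e {i j : Fin l} (hij : i ≠ j) : z ⊔ (z + e i - e j) = z + e i := by
  funext k
  have hi := e_nonneg i k
  have hj := e_nonneg j k
  simp only [Pi.sup_apply, Pi.add_apply, Pi.sub_apply]
  obtain rfl | hk := eq_or_ne k j
  · rw [e_of_ne hij.symm, e_self]
    omega
  · rw [e_of_ne hk]
    omega

theorem inf_add_e_sub_e {i j : Fin l} (hij : i ≠ j) : z ⊓ (z + e i - e j) = z - e j := by
  funext k
  have hi := e_nonneg i k
  have hj := e_nonneg j k
  simp only [Pi.inf_apply, Pi.add_apply, Pi.sub_apply]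
  obtain rfl | hk := eq_or_ne k i
  · rw [e_of_ne hij, e_self]
    omega
  · rw [e_of_ne hk]
    omega

-- `z + e i` and `z - e j` are the supremum and the infimum of `z` and `z + e i - e j`.
theorem isChamberLE_add_e_and_sub_e_iff (hz : IsChamberLE c z) {i j : Fin l} (hij : i ≠ j) :
    IsChamberLE c (z + e i) ∧ IsChamber (z + e i - e j) ↔
      IsChamber (z - e j) ∧ IsChamberLE c (z - e j + e i) := by
  rw [sub_add_eq_add_sub]
  constructor
  · rintro ⟨hadd, hw⟩
    exact ⟨inf_add_e_sub_e hij ▸ hz.1.inf hw, hadd.of_le hw (sub_le_self _ (e_nonneg j))⟩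
  · rintro ⟨-, hw⟩
    exact ⟨sup_add_e_sub_e hij ▸ hz.sup hw, hw.1⟩

/-- The columns of the diagram of `z` from index `j` on are nonempty and longer than the columns
before index `j`; equivalently, a cell can be removed from column `j`, or added to
column `j - 1`. -/
def HasGap (z : Weight (Fin l)) (j : ℕ) : Prop :=
  ∀ k : Fin l, j ≤ k → 0 < (z - rho l) k ∧ ∀ i : Fin l, (i : ℕ) < j → (z - rho l) i < (z - rho l) k

theorem hasGap_length : HasGap z l := fun k hk => absurd k.2 hk.not_gt

theorem isChamber_sub_e_iff (hz : IsChamber z) {j : Fin l} : IsChamber (z - e j) ↔ HasGap z j := by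
  obtain ⟨hnonneg, hmono⟩ := isChamber_iff.1 hz
  rw [isChamber_iff, sub_right_comm]
  constructor
  · rintro ⟨hnonneg', hmono'⟩ k hk
    have hj : 0 ≤ (z - rho l) j - e j j := hnonneg' j
    have hjk := hmono (Fin.le_def.2 hk)
    rw [e_self] at hj
    refine ⟨by omega, fun i hi => ?_⟩
    have hij : (z - rho l) i - e j i ≤ (z - rho l) j - e j j := hmono' (Fin.lt_def.2 hi).le
    rw [e_self, e_of_ne (Fin.ne_of_lt hi)] at hij
    omega
  · refine fun hgap => ⟨fun k => ?_, fun a b hab => ?_⟩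
    · have hk : 0 ≤ (z - rho l) k := hnonneg k
      change 0 ≤ (z - rho l) k - e j k
      obtain rfl | hne := eq_or_ne k j
      · have hpos := (hgap k le_rfl).1
        rw [e_self]
        omega
      · rwa [e_of_ne hne, sub_zero]
    · have hle := hmono hab
      have ha := e_nonneg j a
      change (z - rho l) a - e j a ≤ (z - rho l) b - e j b
      obtain rfl | hne := eq_or_ne b j
      · obtain rfl | hlt := hab.eq_or_lt
        · rfl
        · have hlt' := (hgap b le_rfl).2 a hlt
          rw [e_self]
          omega
      · rw [e_of_ne hne]
        omega

theorem isChamber_add_e_iff (hz : IsChamber z) {i : Fin l} :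
    IsChamber (z + e i) ↔ HasGap z (i + 1) := by
  obtain ⟨hnonneg, hmono⟩ := isChamber_iff.1 hz
  rw [isChamber_iff, add_sub_right_comm]
  constructor
  · rintro ⟨-, hmono'⟩ k hk
    have hi : 0 ≤ (z - rho l) i := hnonneg i
    have hik : (z - rho l) i + e i i ≤ (z - rho l) k + e i k :=
      hmono' (Fin.le_def.2 (Nat.le_of_succ_le hk))
    rw [e_self, e_of_ne (Fin.ne_of_gt hk)] at hik
    refine ⟨by omega, fun a ha => ?_⟩
    have hai := hmono (Fin.le_def.2 (Nat.le_of_lt_succ ha))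
    omega
  · refine fun hgap => ⟨add_nonneg hnonneg (e_nonneg i), fun a b hab => ?_⟩
    have hle := hmono hab
    have hb := e_nonneg i b
    change (z - rho l) a + e i a ≤ (z - rho l) b + e i b
    obtain rfl | hne := eq_or_ne a i
    · obtain rfl | hlt := hab.eq_or_lt
      · rfl
      · have hlt' := (hgap b hlt).2 a a.1.lt_succ_self
        rw [e_self]
        omega
    · rw [e_of_ne hne]
      omega

theorem IsChamberLE.le_of_hasGap (hz : IsChamberLE c z) {j : Fin l} (hgap : HasGap z j) :
    l ≤ j + c := by
  by_contra hj
  have hpos := (hgap j le_rfl).1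
  rw [Pi.sub_apply, hz.2 j (not_le.1 hj), sub_self] at hpos
  exact hpos.false

theorem isChamberLE_add_e_iff (hz : IsChamberLE c z) {i : Fin l} :
    IsChamberLE c (z + e i) ↔ l ≤ i + c ∧ HasGap z (i + 1) := by
  rw [IsChamberLE, isChamber_add_e_iff hz.1, and_comm]
  refine and_congr_left fun _ => ⟨fun h => ?_, fun h k hk => ?_⟩
  · by_contra hi
    have hadd := h i (not_le.1 hi)
    rw [Pi.add_apply, hz.2 i (not_le.1 hi), e_self] at hadd
    omega
  · have hne : k ≠ i := by
      rintro rfl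
      omega
    rw [Pi.add_apply, e_of_ne hne, add_zero, hz.2 k hk]

theorem isChamberLE_pred_iff (hc : c ≤ l) (hz : IsChamberLE c z) :
    1 ≤ c ∧ IsChamberLE (c - 1) z ↔ ¬HasGap z (l - c) := by
  obtain rfl | hpos := Nat.eq_zero_or_pos c
  · simp [hasGap_length]
  have hfirst : l - c < l := by omega
  refine ⟨fun h hgap => ?_, fun hgap => ⟨hpos, hz.1, fun i hi => ?_⟩⟩
  · have hle := h.2.le_of_hasGap (j := ⟨l - c, hfirst⟩) hgap
    simp only at hle
    omega
  · by_contra hne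
    refine hgap fun k hk => ?_
    have hik : i ≤ k := Fin.le_def.2 (by omega)
    have hpos : 0 < (z - rho l) k :=
      (sub_pos.2 ((hz.1.rho_le i).lt_of_ne' hne)).trans_le ((isChamber_iff.1 hz.1).2 hik)
    refine ⟨hpos, fun a ha => ?_⟩
    rwa [Pi.sub_apply, hz.2 a (by omega), sub_self]

open Classical in
theorem card_addable (hc : c ≤ l) (hz : IsChamberLE c z) :
    (∑ i, if IsChamberLE c (z + e i) then (1 : ℤ) else 0) =
      (∑ i, if IsChamber (z - e i) then (1 : ℤ) else 0) +
        if 1 ≤ c ∧ IsChamberLE (c - 1) z then 1 else 0 := by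
  obtain ⟨a, rfl⟩ := Nat.exists_eq_add_of_le' hc
  let gap (j : ℕ) : ℤ := if HasGap z j then 1 else 0
  have hlast : gap (a + c) = 1 := if_pos hasGap_length
  have hdiff : ∀ i : Fin (a + c), (if IsChamberLE c (z + e i) then (1 : ℤ) else 0) -
      (if IsChamber (z - e i) then (1 : ℤ) else 0) =
        if a ≤ (i : ℕ) then gap (i + 1) - gap i else 0 := fun i => by
    have hle := hz.le_of_hasGap (j := i)
    rw [add_le_add_iff_right] at hle
    rw [if_congr ((isChamberLE_add_e_iff hz).trans (and_congr_left' (add_le_add_iff_right c)))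
      rfl rfl, if_congr (isChamber_sub_e_iff hz.1) rfl rfl]
    by_cases hi : a ≤ (i : ℕ)
    · simp [hi, gap]
    · simp [hi, mt hle hi]
  have hsum : ∑ i : Fin (a + c), (if a ≤ (i : ℕ) then gap (i + 1) - gap i else 0) =
      1 - gap a := by
    rw [Fin.sum_univ_eq_sum_range (fun i => if a ≤ i then gap (i + 1) - gap i else 0),
      Finset.sum_range_add, Finset.sum_eq_zero fun i hi => if_neg (Finset.mem_range.1 hi).not_ge,
      zero_add]
    simp only [Nat.le_add_right, if_true, add_assoc]
    rw [Finset.sum_range_sub (fun k => gap (a + k)), hlast, add_zero]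
  rw [← sub_eq_iff_eq_add', ← Finset.sum_sub_distrib, Finset.sum_congr rfl fun i _ => hdiff i, hsum,
    if_congr (isChamberLE_pred_iff hc hz) rfl rfl, Nat.add_sub_cancel]
  by_cases h : HasGap z a <;> simp [gap, h]

open Classical in
theorem up_down (hc : c ≤ l) (v : Weight (Fin l) → ℤ) (hz : IsChamberLE c z) :
    up c (down v) z = down (up c v) z + if 1 ≤ c ∧ IsChamberLE (c - 1) z then v z else 0 := by
  have hup : up c (down v) z = ∑ i, ∑ j,
      if IsChamberLE c (z + e i) ∧ IsChamber (z + e i - e j) then v (z + e i - e j) else 0 := by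
    simp only [up, down, ite_and, Finset.sum_ite_irrel, Finset.sum_const_zero]
  have hdown : down (up c v) z = ∑ i, ∑ j,
      if IsChamber (z - e j) ∧ IsChamberLE c (z - e j + e i) then v (z - e j + e i) else 0 := by
    rw [Finset.sum_comm]
    simp only [up, down, ite_and, Finset.sum_ite_irrel, Finset.sum_const_zero]
  have hterm : ∀ i j,
      (if IsChamberLE c (z + e i) ∧ IsChamber (z + e i - e j) then v (z + e i - e j) else 0) =
      (if IsChamber (z - e j) ∧ IsChamberLE c (z - e j + e i) then v (z - e j + e i) else 0) +
        if i = j then ((if IsChamberLE c (z + e i) then (1 : ℤ) else 0) -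
          (if IsChamber (z - e i) then (1 : ℤ) else 0)) * v z else 0 := fun i j => by
    obtain rfl | hij := eq_or_ne i j
    · rw [add_sub_cancel_right, sub_add_cancel]
      by_cases ha : IsChamberLE c (z + e i) <;> by_cases hb : IsChamber (z - e i) <;>
        simp [ha, hb, hz, hz.1]
    · rw [if_congr (isChamberLE_add_e_and_sub_e_iff hz hij) rfl rfl, if_neg hij, add_zero,
        sub_add_eq_add_sub]
  simp only [hup, hterm, Finset.sum_add_distrib, ← hdown, Finset.sum_ite_eq, Finset.mem_univ,
    if_true, ← Finset.sum_mul, Finset.sum_sub_distrib]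
  rw [card_addable hc hz, add_sub_cancel_left, ite_mul, one_mul, zero_mul]

end Commutation

section EvenDiagrams

variable {l c : ℕ} {z : Weight (Fin l)}

theorem isEvenPartition_zero_iff :
    IsEvenPartition 0 (z - rho l) ↔ IsChamber z ∧ ∀ k, Even (z k - rho l k) := by
  rw [isChamber_iff]
  exact ⟨fun h => ⟨⟨h.nonneg, h.monotone⟩, h.even⟩,
    fun h => ⟨fun _ hi => absurd hi (Nat.not_lt_zero _), h.1.1, h.2, h.1.2⟩⟩

-- Only the column `i` is odd, so its length differs from those of its neighbours.
theorem hasGap_of_even_sub_e (hz : IsChamber z) {i : Fin l}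
    (heven : ∀ k, Even ((z - e i) k - rho l k)) : HasGap z i ∧ HasGap z (i + 1) := by
  obtain ⟨hnonneg, hmono⟩ := isChamber_iff.1 hz
  have hodd : Odd ((z - rho l) i) := by
    have hi := heven i
    rw [Pi.sub_apply, e_self, sub_right_comm] at hi
    simpa using hi.add_one
  have hne : ∀ k, k ≠ i → (z - rho l) k ≠ (z - rho l) i := fun k hk h => by
    have hk' := heven k
    rw [Pi.sub_apply, e_of_ne hk, sub_zero] at hk'
    exact (Int.not_even_iff_odd.2 hodd) (h ▸ hk')
  have hpos : 0 < (z - rho l) i := by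
    have h0 : 0 ≤ (z - rho l) i := hnonneg i
    exact h0.lt_of_ne fun h => by simp [← h] at hodd
  refine ⟨fun k hk => ⟨hpos.trans_le (hmono (Fin.le_def.2 hk)), fun a ha => ?_⟩,
    fun k hk => ?_⟩
  · exact ((hmono (Fin.lt_def.2 ha).le).lt_of_ne (hne a (Fin.ne_of_lt ha))).trans_le
      (hmono (Fin.le_def.2 hk))
  · have hik : (z - rho l) i < (z - rho l) k :=
      (hmono (Fin.lt_def.2 hk).le).lt_of_ne (hne k (Fin.ne_of_gt hk)).symm
    exact ⟨hpos.trans hik, fun a ha => (hmono (Fin.le_def.2 (Nat.le_of_lt_succ ha))).trans_lt hik⟩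

theorem up_evenFrom (hz : IsChamberLE c z) : up c (evenFrom 0) z = down (evenFrom 0) z := by
  classical
  refine Finset.sum_congr rfl fun i _ => ?_
  have hparity : (∀ k, Even ((z + e i) k - rho l k)) ↔ ∀ k, Even ((z - e i) k - rho l k) :=
    forall_congr' fun k => by
      rw [Pi.add_apply, Pi.sub_apply, Int.even_iff, Int.even_iff]
      omega
  have hiff : IsChamberLE c (z + e i) ∧ IsEvenPartition 0 (z + e i - rho l) ↔
      IsChamber (z - e i) ∧ IsEvenPartition 0 (z - e i - rho l) := by
    rw [isEvenPartition_zero_iff, isEvenPartition_zero_iff, hparity]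
    by_cases heven : ∀ k, Even ((z - e i) k - rho l k)
    · obtain ⟨hsub, hadd⟩ := hasGap_of_even_sub_e hz.1 heven
      simp only [isChamberLE_add_e_iff hz, isChamber_add_e_iff hz.1, isChamber_sub_e_iff hz.1, hsub,
        hadd, hz.le_of_hasGap hsub, heven, implies_true, and_self]
    · simp only [heven, and_false]
  simp only [evenFrom, ← ite_and]
  exact if_congr hiff rfl rfl

end EvenDiagrams

section WalkSums

variable {l c : ℕ} {cs : List ℕ} {z : Weight (Fin l)}

/-- The sum of `v` over the end points of the walks from `rho` that add one cell at a time; the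
list holds the bounds on the number of columns, the one for the last step first. -/
def walkSum : List ℕ → (Weight (Fin l) → ℤ) → ℤ
  | [], v => v (rho l)
  | c :: cs, v => walkSum cs (up c v)

theorem isChamberLE_zero : IsChamberLE 0 z ↔ z = rho l := by
  refine ⟨fun h => funext fun i => h.2 i i.2, ?_⟩
  rintro rfl
  exact ⟨isChamber_rho, fun _ _ => rfl⟩

theorem IsChamberLE.mono {d : ℕ} (hcd : c ≤ d) (hz : IsChamberLE c z) : IsChamberLE d z :=
  ⟨hz.1, fun i hi => hz.2 i (by omega)⟩

theorem isChamberLE_min {d : ℕ} :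
    IsChamberLE (min c d) z ↔ IsChamberLE c z ∧ IsChamberLE d z := by
  refine ⟨fun h => ⟨h.mono (min_le_left c d), h.mono (min_le_right c d)⟩, fun ⟨hc, hd⟩ => ?_⟩
  obtain h | h := min_choice c d <;> rwa [h]

theorem down_rho (v : Weight (Fin l) → ℤ) : down v (rho l) = 0 := by
  classical
  refine Finset.sum_eq_zero fun i _ => if_neg fun h => ?_
  have hle := (isChamberLE_zero.2 rfl).le_of_hasGap ((isChamber_sub_e_iff isChamber_rho).1 h)
  omega

theorem walkSum_congr {v w : Weight (Fin l) → ℤ} (h : ∀ z, IsChamberLE (cs.headD 0) z → v z = w z) :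
    walkSum cs v = walkSum cs w := by
  cases cs with
  | nil => exact h _ (isChamberLE_zero.2 rfl)
  | cons c cs =>
    have h' : ∀ z, IsChamberLE c z → v z = w z := h
    rw [walkSum, walkSum, up_congr h']

theorem walkSum_add (cs : List ℕ) (v w : Weight (Fin l) → ℤ) :
    walkSum cs (fun z => v z + w z) = walkSum cs v + walkSum cs w := by
  induction cs generalizing v w with
  | nil => rfl
  | cons c cs ih =>
    have hup : up c (fun z => v z + w z) = fun z => up c v z + up c w z := funext fun z => by
      simp only [up, ← Finset.sum_add_distrib]
      exact Finset.sum_congr rfl fun i _ => by split_ifs <;> simp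
    rw [walkSum, walkSum, walkSum, hup, ih]

theorem walkSum_zero (cs : List ℕ) : walkSum cs (fun _ : Weight (Fin l) => 0) = 0 := by
  induction cs with
  | nil => rfl
  | cons c cs ih =>
    have hup : up c (fun _ : Weight (Fin l) => 0) = fun _ => 0 := funext fun z => by simp [up]
    rw [walkSum, hup, ih]

open Classical in
theorem walkSum_ite_isChamberLE (d : ℕ) (cs : List ℕ) (v : Weight (Fin l) → ℤ) :
    walkSum cs (fun z => if IsChamberLE d z then v z else 0) = walkSum (cs.map (min d)) v := by
  induction cs generalizing v with
  | nil => exact if_pos ((isChamberLE_zero.2 rfl).mono d.zero_le)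
  | cons c cs ih =>
    rw [List.map_cons, walkSum, walkSum, ← ih]
    refine walkSum_congr fun z hz => ?_
    have hup : up c (fun z => if IsChamberLE d z then v z else 0) z = up (min d c) v z :=
      Finset.sum_congr rfl fun i _ => by
        rw [← ite_and, if_congr (isChamberLE_min.trans and_comm) rfl rfl]
    rw [hup, eq_comm, ite_eq_left_iff]
    refine fun hd => (Finset.sum_eq_zero fun i _ => if_neg fun h => hd ?_).symm
    exact (isChamberLE_min.1 h).1.of_le hz.1 (le_add_of_nonneg_right (e_nonneg i))

/-- The sequences of bounds left after deleting one step: the bounds of the later steps are kept,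
those of the earlier steps are lowered below the bound of the deleted one. -/
def deletions : List ℕ → List (List ℕ)
  | [] => []
  | c :: cs => (if 1 ≤ c then [cs.map (min (c - 1))] else []) ++ (deletions cs).map (c :: ·)

theorem isChamberLE_of_headD (hcs : (c :: cs).Pairwise (· ≥ ·))
    (hz : IsChamberLE (cs.headD 0) z) : IsChamberLE c z := by
  refine hz.mono ?_
  cases cs with
  | nil => exact c.zero_le
  | cons d cs => exact List.rel_of_pairwise_cons hcs List.mem_cons_self

theorem walkSum_down (hcs : cs.Pairwise (· ≥ ·)) (hl : ∀ c ∈ cs, c ≤ l) (v : Weight (Fin l) → ℤ) :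
    walkSum cs (down v) = ((deletions cs).map fun cs' => walkSum cs' v).sum := by
  classical
  induction cs generalizing v with
  | nil => exact down_rho v
  | cons c cs ih =>
    have hcomm : walkSum cs (up c (down v)) = walkSum cs (down (up c v)) +
        walkSum cs (fun z => if 1 ≤ c ∧ IsChamberLE (c - 1) z then v z else 0) := by
      rw [← walkSum_add]
      exact walkSum_congr fun z hz =>
        up_down (hl c List.mem_cons_self) v (isChamberLE_of_headD hcs hz)
    rw [walkSum, hcomm, ih hcs.of_cons fun d hd => hl d (List.mem_cons_of_mem c hd), deletions]
    by_cases hc : 1 ≤ c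
    · simp only [hc, true_and, if_true]
      rw [walkSum_ite_isChamberLE]
      simp [Function.comp_def, walkSum, add_comm]
    · simp only [hc, false_and, if_false]
      rw [walkSum_zero]
      simp [Function.comp_def, walkSum]

theorem walkSum_cons_evenFrom (hcs : (c :: cs).Pairwise (· ≥ ·)) (hl : ∀ d ∈ cs, d ≤ l) :
    walkSum (c :: cs) (evenFrom 0 : Weight (Fin l) → ℤ) =
      ((deletions cs).map fun cs' => walkSum cs' (evenFrom 0 : Weight (Fin l) → ℤ)).sum := by
  rw [walkSum, ← walkSum_down hcs.of_cons hl]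
  exact walkSum_congr fun z hz => up_evenFrom (isChamberLE_of_headD hcs hz)

theorem walkSum_step (hcs : cs.Pairwise (· ≥ ·)) (hl : ∀ d ∈ cs, d ≤ l) (v : Weight (Fin l) → ℤ) :
    walkSum cs (step v) =
      walkSum (l :: cs) v + ((deletions cs).map fun cs' => walkSum cs' v).sum := by
  rw [← walkSum_down hcs hl, walkSum, ← walkSum_add]
  rfl

theorem walkSum_replicate (n c : ℕ) (v : Weight (Fin l) → ℤ) :
    walkSum (List.replicate n c) v = (up c)^[n] v (rho l) := by
  induction n generalizing v with
  | zero => rfl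
  | succ n ih => rw [List.replicate_succ, walkSum, ih, Function.iterate_succ_apply]

end WalkSums

section Labellings

/-- The bounds `C` with those of the indices after `a` lowered below the bound of `a`. -/
def cut (C : ℤ → ℕ) (a s : ℤ) : ℕ := if a < s then min (C a - 1) (C s) else C s

/-- The points `p ∈ P` can be labelled by `1, …, C p.1`, increasingly towards the north-west. For a
constant bound this limits the length of the chains of points going north-west. -/
def IsLabellable (C : ℤ → ℕ) (P : Finset (ℤ × ℤ)) : Prop :=
  ∃ h : ℤ × ℤ → ℕ, (∀ p ∈ P, 1 ≤ h p ∧ h p ≤ C p.1) ∧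
    ∀ p ∈ P, ∀ q ∈ P, q.1 < p.1 → p.2 < q.2 → h p < h q

variable {C : ℤ → ℕ} {P : Finset (ℤ × ℤ)}

theorem cut_of_lt {a s : ℤ} (h : a < s) : cut C a s = min (C a - 1) (C s) := if_pos h

theorem cut_of_le {a s : ℤ} (h : s ≤ a) : cut C a s = C s := if_neg h.not_gt

theorem cut_le (C : ℤ → ℕ) (a s : ℤ) : cut C a s ≤ C s := by
  obtain h | h := lt_or_ge a s
  · exact (cut_of_lt h).trans_le (min_le_right _ _)
  · exact (cut_of_le h).le

theorem le_cut_iff {a s : ℤ} (ha : 1 ≤ C a) {k : ℕ} :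
    k ≤ cut C a s ↔ k ≤ C s ∧ (a < s → k < C a) := by
  obtain h | h := lt_or_ge a s
  · rw [cut_of_lt h, le_min_iff, and_comm]
    exact and_congr_right' ⟨fun hk _ => by omega, fun hk => Nat.le_pred_of_lt (hk h)⟩
  · rw [cut_of_le h, iff_self_and]
    exact fun _ has => absurd has h.not_gt

theorem antitone_cut (hC : Antitone C) (a : ℤ) : Antitone (cut C a) := fun s t hst => by
  have hle := hC hst
  simp only [cut]
  split_ifs <;> omega

-- The label of the topmost point may be raised to its bound.
theorem isLabellable_insert {p₀ : ℤ × ℤ} (htop : ∀ p ∈ P, p.2 < p₀.2)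
    (hfst : ∀ p ∈ P, p.1 ≠ p₀.1) :
    IsLabellable C (insert p₀ P) ↔ 1 ≤ C p₀.1 ∧ IsLabellable (cut C p₀.1) P := by
  simp only [IsLabellable, Finset.forall_mem_insert]
  constructor
  · rintro ⟨h, ⟨h₀, hbound⟩, -, hmono⟩
    have hC := h₀.1.trans h₀.2
    refine ⟨hC, h, fun p hp => ⟨(hbound p hp).1, (le_cut_iff hC).2 ⟨(hbound p hp).2,
      fun hlt => ?_⟩⟩, fun p hp => (hmono p hp).2⟩
    exact ((hmono p hp).1 hlt (htop p hp)).trans_le h₀.2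
  · rintro ⟨hC, h, hbound, hmono⟩
    have hne : ∀ p ∈ P, p ≠ p₀ := fun p hp hpe => hfst p hp (congrArg Prod.fst hpe)
    have hupdate : ∀ p ∈ P, Function.update h p₀ (C p₀.1) p = h p := fun p hp =>
      Function.update_of_ne (hne p hp) _ _
    refine ⟨Function.update h p₀ (C p₀.1), ⟨?_, fun p hp => ?_⟩,
      ⟨fun hlt => absurd hlt (lt_irrefl _), fun q hq _ hlt => absurd hlt (htop q hq).not_gt⟩,
      fun p hp => ⟨fun hlt _ => ?_, fun q hq => ?_⟩⟩
    · rw [Function.update_self]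
      exact ⟨hC, le_rfl⟩
    · rw [hupdate p hp]
      exact ⟨(hbound p hp).1, (hbound p hp).2.trans (cut_le C _ _)⟩
    · rw [hupdate p hp, Function.update_self]
      exact ((le_cut_iff hC).1 (hbound p hp).2).2 hlt
    · rw [hupdate p hp, hupdate q hq]
      exact hmono p hp q hq

end Labellings

section Matchings

variable {T : Finset ℤ} {A B : ℤ × ℤ → Prop} {C : ℤ → ℕ} {P : Finset (ℤ × ℤ)}

/-- Reading a point `p` as the pair of the items `p.1` and `|p.2|`, the points of `P` match the
items in `T` perfectly. -/
def Covers (T : Finset ℤ) (P : Finset (ℤ × ℤ)) : Prop :=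
  ∀ t, (P.filter fun p => p.1 = t ∨ |p.2| = t).card = if t ∈ T then 1 else 0

theorem Covers.mem_of_mem (h : Covers T P) {p : ℤ × ℤ} (hp : p ∈ P) {t : ℤ}
    (ht : p.1 = t ∨ |p.2| = t) : t ∈ T := by
  by_contra hT
  have hempty := h t
  rw [if_neg hT, Finset.card_eq_zero] at hempty
  exact Finset.notMem_empty p (hempty ▸ Finset.mem_filter.2 ⟨hp, ht⟩)

theorem Covers.fst_mem (h : Covers T P) {p : ℤ × ℤ} (hp : p ∈ P) : p.1 ∈ T :=
  h.mem_of_mem hp (Or.inl rfl)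

theorem Covers.abs_snd_mem (h : Covers T P) {p : ℤ × ℤ} (hp : p ∈ P) : |p.2| ∈ T :=
  h.mem_of_mem hp (Or.inr rfl)

theorem covers_iff : Covers T P ↔ (∀ p ∈ P, p.1 ∈ T ∧ |p.2| ∈ T) ∧
    ∀ t ∈ T, ∃! p, p ∈ P ∧ (p.1 = t ∨ |p.2| = t) := by
  constructor
  · refine fun h => ⟨fun p hp => ⟨h.fst_mem hp, h.abs_snd_mem hp⟩, fun t ht => ?_⟩
    obtain ⟨p, hp⟩ := Finset.card_eq_one.1 ((h t).trans (if_pos ht))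
    exact ⟨p, Finset.mem_filter.1 (hp ▸ Finset.mem_singleton_self p),
      fun q hq => Finset.mem_singleton.1 (hp ▸ Finset.mem_filter.2 hq)⟩
  · rintro ⟨hmem, hunique⟩ t
    split_ifs with ht
    · obtain ⟨p, hp, huniq⟩ := hunique t ht
      refine Finset.card_eq_one.2 ⟨p, ?_⟩
      ext q
      rw [Finset.mem_filter, Finset.mem_singleton]
      exact ⟨huniq q, fun h => h ▸ hp⟩
    · rw [Finset.card_eq_zero, Finset.filter_eq_empty_iff]
      rintro p hp (rfl | rfl)
      exacts [ht (hmem p hp).1, ht (hmem p hp).2]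

theorem covers_empty_iff : Covers ∅ P ↔ P = ∅ := by
  refine ⟨fun h => Finset.eq_empty_of_forall_notMem fun p hp =>
    Finset.notMem_empty _ (h.fst_mem hp), ?_⟩
  rintro rfl t
  rfl

theorem covers_insert {a y : ℤ} (ha : a ∉ T) (hy : |y| ∉ T) (hP : (a, y) ∉ P) :
    Covers (insert a (insert |y| T)) (insert (a, y) P) ↔ Covers T P := by
  refine forall_congr' fun t => ?_
  rw [Finset.filter_insert]
  by_cases ht : a = t ∨ |y| = t
  · have htT : t ∉ T := by
      obtain rfl | rfl := ht <;> assumption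
    have hmem : t ∈ insert a (insert |y| T) := by
      obtain rfl | rfl := ht <;> simp
    rw [if_pos ht, Finset.card_insert_of_notMem fun h => hP (Finset.mem_filter.1 h).1, if_pos hmem,
      if_neg htT, Nat.add_eq_right]
  · have hiff : t ∈ insert a (insert |y| T) ↔ t ∈ T := by
      simp only [Finset.mem_insert, eq_comm (a := t), ← or_assoc, ht, false_or]
    rw [if_neg ht, if_congr hiff rfl rfl]

/-- The labellable perfect matchings `P` of the items in `T` by points `p` with `|p.2| < p.1` that
are allowed by `A`. -/
structure IsMatching (T : Finset ℤ) (A : ℤ × ℤ → Prop) (C : ℤ → ℕ) (P : Finset (ℤ × ℤ)) :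
    Prop where
  allowed : ∀ p ∈ P, A p
  abs_lt : ∀ p ∈ P, |p.2| < p.1
  covers : Covers T P
  labellable : IsLabellable C P

theorem IsMatching.congr
    (h : ∀ p : ℤ × ℤ, |p.2| < p.1 → p.1 ∈ T → |p.2| ∈ T → A p → B p)
    (hP : IsMatching T A C P) : IsMatching T B C P where
  allowed p hp := h p (hP.abs_lt p hp) (hP.covers.fst_mem hp) (hP.covers.abs_snd_mem hp)
    (hP.allowed p hp)
  abs_lt := hP.abs_lt
  covers := hP.covers
  labellable := hP.labellable

theorem isMatching_insert {a y : ℤ} (hA : A (a, y)) (hya : |y| < a) (ha : a ∉ T) (hy : |y| ∉ T)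
    (htop : ∀ p : ℤ × ℤ, |p.2| ∈ T → A p → p.2 < y) (hP : (a, y) ∉ P) :
    IsMatching (insert a (insert |y| T)) A C (insert (a, y) P) ↔
      1 ≤ C a ∧ IsMatching T A (cut C a) P := by
  have hlabel (hcovers : Covers T P) (hallowed : ∀ p ∈ P, A p) :
      IsLabellable C (insert (a, y) P) ↔ 1 ≤ C a ∧ IsLabellable (cut C a) P :=
    isLabellable_insert (fun p hp => htop p (hcovers.abs_snd_mem hp) (hallowed p hp))
      fun p hp h => ha ((show p.1 = a from h) ▸ hcovers.fst_mem hp)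
  constructor
  · rintro ⟨hallowed, habs, hcovers, hlabellable⟩
    rw [covers_insert ha hy hP] at hcovers
    rw [Finset.forall_mem_insert] at hallowed habs
    rw [hlabel hcovers hallowed.2] at hlabellable
    exact ⟨hlabellable.1, hallowed.2, habs.2, hcovers, hlabellable.2⟩
  · rintro ⟨hC, hallowed, habs, hcovers, hlabellable⟩
    exact ⟨(Finset.forall_mem_insert _ _ _).2 ⟨hA, hallowed⟩,
      (Finset.forall_mem_insert _ _ _).2 ⟨hya, habs⟩, (covers_insert ha hy hP).2 hcovers,
      (hlabel hcovers hallowed).2 ⟨hC, hlabellable⟩⟩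

open Classical in
/-- The finite set of all matchings in the sense of `IsMatching`. -/
def matchings (T : Finset ℤ) (A : ℤ × ℤ → Prop) (C : ℤ → ℕ) : Finset (Finset (ℤ × ℤ)) :=
  (T ×ˢ (T ∪ T.image Neg.neg)).powerset.filter (IsMatching T A C)

theorem mem_matchings : P ∈ matchings T A C ↔ IsMatching T A C P := by
  classical
  rw [matchings, Finset.mem_filter, Finset.mem_powerset, and_iff_right_iff_imp]
  intro h p hp
  have habs := h.covers.abs_snd_mem hp
  rw [Finset.mem_product, Finset.mem_union, Finset.mem_image]
  refine ⟨h.covers.fst_mem hp, ?_⟩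
  obtain hsnd | hsnd := abs_choice p.2
  · exact Or.inl (hsnd ▸ habs)
  · exact Or.inr ⟨_, habs, by rw [hsnd, neg_neg]⟩

theorem matchings_congr
    (h : ∀ p : ℤ × ℤ, |p.2| < p.1 → p.1 ∈ T → |p.2| ∈ T → (A p ↔ B p)) :
    matchings T A C = matchings T B C := by
  ext P
  rw [mem_matchings, mem_matchings]
  exact ⟨.congr fun p hlt hfst hsnd => (h p hlt hfst hsnd).1,
    .congr fun p hlt hfst hsnd => (h p hlt hfst hsnd).2⟩

theorem card_matchings_empty (A : ℤ × ℤ → Prop) (C : ℤ → ℕ) : (matchings ∅ A C).card = 1 := by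
  refine Finset.card_eq_one.2 ⟨∅, ?_⟩
  ext P
  rw [mem_matchings, Finset.mem_singleton]
  refine ⟨fun h => covers_empty_iff.1 h.covers, ?_⟩
  rintro rfl
  exact ⟨by simp, by simp, covers_empty_iff.2 rfl, fun _ => 0, by simp, by simp⟩

open Classical in
theorem card_matchings_filter_mem {a y : ℤ} (hA : A (a, y)) (hya : |y| < a) (ha : a ∉ T)
    (hy : |y| ∉ T) (htop : ∀ p : ℤ × ℤ, |p.2| ∈ T → A p → p.2 < y) :
    ((matchings (insert a (insert |y| T)) A C).filter fun P => (a, y) ∈ P).card =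
      if 1 ≤ C a then (matchings T A (cut C a)).card else 0 := by
  have hinsert {P : Finset (ℤ × ℤ)} (hP : (a, y) ∉ P) :=
    isMatching_insert (C := C) hA hya ha hy htop hP
  have herase {P : Finset (ℤ × ℤ)} (hP : (a, y) ∈ P)
      (h : P ∈ matchings (insert a (insert |y| T)) A C) :
      1 ≤ C a ∧ IsMatching T A (cut C a) (P.erase (a, y)) := by
    rwa [← hinsert (Finset.notMem_erase _ _), Finset.insert_erase hP, ← mem_matchings]
  split_ifs with hC
  · have hnot : ∀ P ∈ matchings T A (cut C a), (a, y) ∉ P := fun P hP h =>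
      ha ((mem_matchings.1 hP).covers.fst_mem h)
    refine Finset.card_nbij' (fun P => P.erase (a, y)) (insert (a, y)) (fun P hP => ?_)
      (fun P hP => ?_) (fun P hP => ?_) fun P hP => Finset.erase_insert (hnot P hP)
    · have hP' := Finset.mem_filter.1 hP
      exact mem_matchings.2 (herase hP'.2 hP'.1).2
    · exact Finset.mem_filter.2 ⟨mem_matchings.2 ((hinsert (hnot P hP)).2 ⟨hC, mem_matchings.1 hP⟩),
        Finset.mem_insert_self _ _⟩
    · exact Finset.insert_erase (Finset.mem_filter.1 hP).2
  · rw [Finset.card_eq_zero, Finset.filter_eq_empty_iff]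
    exact fun P hP hmem => hC (herase hmem hP).1

open Classical in
theorem card_matchings_filter_exists (O : Finset ℤ) (y : ℤ) :
    ((matchings T A C).filter fun P => ∃ a ∈ O, (a, y) ∈ P).card =
      ∑ a ∈ O, ((matchings T A C).filter fun P => (a, y) ∈ P).card := by
  rw [← Finset.card_biUnion]
  · congr 1
    ext P
    simp only [Finset.mem_filter, Finset.mem_biUnion]
    tauto
  · intro a _ b _ hab
    refine Finset.disjoint_filter.2 fun P hP ha hb => hab ?_
    have hcovers := (mem_matchings.1 hP).covers
    have huniq := (covers_iff.1 hcovers).2 _ (hcovers.abs_snd_mem ha)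
    exact congrArg Prod.fst (huniq.unique ⟨ha, Or.inr rfl⟩ ⟨hb, Or.inr rfl⟩)

theorem toFinset_erase_subset {α : Type*} [DecidableEq α] (O : List α) (a : α) :
    (O.erase a).toFinset ⊆ O.toFinset := fun _ hs =>
  List.mem_toFinset.2 (List.mem_of_mem_erase (List.mem_toFinset.1 hs))

theorem sum_map_deletions {O : List ℤ} (hO : O.Pairwise (· < ·)) (C : ℤ → ℕ) (F : List ℕ → ℤ) :
    ((deletions (O.map C)).map F).sum =
      ∑ a ∈ O.toFinset, if 1 ≤ C a then F ((O.erase a).map (cut C a)) else 0 := by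
  induction O generalizing F with
  | nil => rfl
  | cons t O ih =>
    have hlt : ∀ a ∈ O, t < a := fun a ha => List.rel_of_pairwise_cons hO ha
    have hcut : (O.map C).map (min (C t - 1)) = O.map (cut C t) := by
      rw [List.map_map]
      exact List.map_congr_left fun a ha => (cut_of_lt (hlt a ha)).symm
    have htail : ((deletions (O.map C)).map fun cs => F (C t :: cs)).sum =
        ∑ a ∈ O.toFinset, if 1 ≤ C a then F (((t :: O).erase a).map (cut C a)) else 0 := by
      rw [ih hO.of_cons fun cs => F (C t :: cs)]
      refine Finset.sum_congr rfl fun a ha => ?_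
      have hta := hlt a (List.mem_toFinset.1 ha)
      rw [List.erase_cons_tail (by simpa using hta.ne), List.map_cons, cut_of_le hta.le]
    rw [List.toFinset_cons, Finset.sum_insert fun h => (hlt t (List.mem_toFinset.1 h)).false,
      ← htail, List.map_cons, deletions, hcut, List.erase_cons_head]
    split_ifs <;> simp [Function.comp_def]

-- No two of the points `(a, y)` belong to the same matching, and each of them can be removed as its
-- topmost point.
open Classical in
theorem card_matchings_filter_exists_eq_sum_deletions {S : Finset ℤ} {O : List ℤ} {t y : ℤ}
    (hy : |y| = t) (hO : O.Pairwise (· < ·)) (hSO : ∀ a ∈ O, a ∉ S) (hyS : t ∉ S)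
    (hyO : ∀ a ∈ O, t < a) (hA : ∀ a ∈ O, A (a, y))
    (htop : ∀ p : ℤ × ℤ, |p.2| ∈ S ∪ O.toFinset → A p → p.2 < y) (F : List ℕ → ℤ)
    (hF : ∀ a ∈ O, ((matchings (S ∪ (O.erase a).toFinset) A (cut C a)).card : ℤ) =
      F ((O.erase a).map (cut C a))) :
    (((matchings (insert t (S ∪ O.toFinset)) A C).filter
      fun P => ∃ a ∈ O.toFinset, (a, y) ∈ P).card : ℤ) =
      ((deletions (O.map C)).map F).sum := by
  subst hy
  rw [card_matchings_filter_exists, sum_map_deletions hO, Nat.cast_sum]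
  refine Finset.sum_congr rfl fun a ha => ?_
  rw [List.mem_toFinset] at ha
  have hnodup : O.Nodup := hO.imp ne_of_lt
  have hmem : ∀ s, s ∈ O.erase a ↔ s ≠ a ∧ s ∈ O := fun s => hnodup.mem_erase_iff
  have hitems : insert |y| (S ∪ O.toFinset) =
      insert a (insert |y| (S ∪ (O.erase a).toFinset)) := by
    ext s
    simp only [Finset.mem_insert, Finset.mem_union, List.mem_toFinset, hmem]
    by_cases hs : s = a <;> simp [hs, ha]
  have haS : a ∉ S ∪ (O.erase a).toFinset := by simp [hmem, hSO a ha]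
  have hyS' : |y| ∉ S ∪ (O.erase a).toFinset := by
    simpa [hmem, hyS] using fun _ h => (hyO _ h).false
  rw [hitems, card_matchings_filter_mem (hA a ha) (hyO a ha) haS hyS' fun p hp =>
    htop p (Finset.union_subset_union_right (toFinset_erase_subset O a) hp), ← hF a ha]
  split_ifs <;> rfl

end Matchings

section MatchingCounts

variable {l : ℕ} {O : List ℤ} {C : ℤ → ℕ}

theorem pairwise_ge_map (hO : O.Pairwise (· < ·)) (hC : Antitone C) :
    (O.map C).Pairwise (· ≥ ·) :=
  List.pairwise_map.2 (hO.imp fun h => hC h.le)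

theorem forall_mem_map_le (hl : ∀ a, C a ≤ l) : ∀ c ∈ O.map C, c ≤ l :=
  List.forall_mem_map.2 fun a _ => hl a

theorem card_matchings_bipartite {R : Finset ℤ} {M : ℤ} (hR : ∀ r ∈ R, 0 < r ∧ r ≤ M)
    (hO : O.Pairwise (· < ·)) (hMO : ∀ a ∈ O, M < a) (hcard : O.length = R.card) (hC : Antitone C)
    (hl : ∀ a, C a ≤ l) :
    ((matchings (R ∪ O.toFinset) (fun p => M < p.1 ∧ -M ≤ p.2 ∧ p.2 < 0) C).card : ℤ) =
      walkSum (O.map C) (down^[R.card] (delta : Weight (Fin l) → ℤ)) := by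
  classical
  induction R using Finset.induction_on_min generalizing O C with
  | empty =>
    obtain rfl : O = [] := List.length_eq_zero_iff.1 hcard
    simp [card_matchings_empty, walkSum, delta]
  | insert r R hrR ih =>
    rw [Finset.forall_mem_insert] at hR
    obtain ⟨⟨hr, hrM⟩, hR⟩ := hR
    have hrmem : r ∉ R := fun h => (hrR r h).false
    have habs : |-r| = r := by rw [abs_neg, abs_of_pos hr]
    rw [Finset.card_insert_of_notMem hrmem] at hcard ⊢
    rw [Function.iterate_succ_apply', walkSum_down (pairwise_ge_map hO hC) (forall_mem_map_le hl),
      Finset.insert_union]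
    have hcontains : ∀ P ∈ matchings (insert r (R ∪ O.toFinset))
        (fun p => M < p.1 ∧ -M ≤ p.2 ∧ p.2 < 0) C, ∃ a ∈ O.toFinset, (a, -r) ∈ P := fun P hP => by
      have hmatch := mem_matchings.1 hP
      obtain ⟨⟨a, y⟩, ⟨hp, hpr⟩, -⟩ := (covers_iff.1 hmatch.covers).2 r (Finset.mem_insert_self _ _)
      obtain ⟨hMa, -, hy⟩ := hmatch.allowed _ hp
      have ha := hmatch.covers.fst_mem hp
      rw [abs_of_neg hy] at hpr
      obtain rfl : y = -r := by grind
      exact ⟨a, by grind, hp⟩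
    rw [← Finset.filter_true_of_mem hcontains]
    refine card_matchings_filter_exists_eq_sum_deletions habs hO
      (fun a ha h => (hR a h).2.not_gt (hMO a ha)) hrmem (fun a ha => hrM.trans_lt (hMO a ha))
      (fun a ha => ⟨hMO a ha, neg_le_neg hrM, neg_neg_of_pos hr⟩) (fun p hp hA => ?_) _
      fun a ha => ih hR (hO.erase a) (fun b hb => hMO b (List.mem_of_mem_erase hb))
        (by rw [List.length_erase_of_mem ha, hcard, Nat.add_sub_cancel]) (antitone_cut hC a)
        fun b => (cut_le C a b).trans (hl b)
    rw [abs_of_neg hA.2.2, Finset.mem_union, List.mem_toFinset] at hp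
    have hrp : r < -p.2 := hp.elim (hrR _) fun h => by linarith [hMO _ h]
    exact lt_neg.1 hrp

theorem card_matchings_evenFrom (hO : O.Pairwise (· < ·)) (hpos : ∀ t ∈ O, 0 < t) (hC : Antitone C)
    (hl : ∀ a, C a ≤ l) :
    ((matchings O.toFinset (fun p => p.2 ≤ 0) C).card : ℤ) =
      walkSum (O.map C) (evenFrom 0 : Weight (Fin l) → ℤ) := by
  classical
  induction hn : O.length using Nat.strong_induction_on generalizing O C with
  | _ n ih =>
  obtain _ | ⟨t, O⟩ := O
  · simp [card_matchings_empty, walkSum, evenFrom_rho]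
  have hlt : ∀ s ∈ O, t < s := fun s hs => List.rel_of_pairwise_cons hO hs
  rw [List.forall_mem_cons] at hpos
  have habs : |-t| = t := by rw [abs_neg, abs_of_pos hpos.1]
  rw [List.map_cons, walkSum_cons_evenFrom (pairwise_ge_map hO hC) (forall_mem_map_le hl),
    List.toFinset_cons, ← Finset.empty_union O.toFinset]
  have hcontains : ∀ P ∈ matchings (insert t (∅ ∪ O.toFinset)) (fun p => p.2 ≤ 0) C,
      ∃ a ∈ O.toFinset, (a, -t) ∈ P := fun P hP => by
    have hmatch := mem_matchings.1 hP
    obtain ⟨⟨a, y⟩, ⟨hp, hpt⟩, -⟩ := (covers_iff.1 hmatch.covers).2 t (Finset.mem_insert_self _ _)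
    have hy := hmatch.allowed _ hp
    have hya := hmatch.abs_lt _ hp
    have ha := hmatch.covers.fst_mem hp
    have hy' := hmatch.covers.abs_snd_mem hp
    simp only [abs_of_nonpos hy, Finset.empty_union, Finset.mem_insert, List.mem_toFinset]
      at hpt hya hy' ha ⊢
    have hty : t ≤ -y := hy'.elim Eq.ge fun h => (hlt _ h).le
    obtain rfl : y = -t := by omega
    exact ⟨a, ha.resolve_left (by omega), hp⟩
  rw [← Finset.filter_true_of_mem hcontains]
  refine card_matchings_filter_exists_eq_sum_deletions habs hO.of_cons
    (fun _ _ => Finset.notMem_empty _) (Finset.notMem_empty _) hlt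
    (fun _ _ => neg_nonpos.2 hpos.1.le) (fun p hp hA => ?_) _ fun a ha => ?_
  · rw [abs_of_nonpos hA, Finset.empty_union, List.mem_toFinset] at hp
    exact lt_neg.1 (hlt _ hp)
  · rw [Finset.empty_union]
    exact ih _ (by grind [List.length_erase_of_mem]) (hO.of_cons.erase a)
      (fun s hs => hpos.2 s (List.mem_of_mem_erase hs)) (antitone_cut hC a)
      (fun b => (cut_le C a b).trans (hl b)) rfl

open Classical in
theorem filter_matchings_not_exists {E : Finset ℤ} {b : ℤ} (hb : 0 < b) (hEb : ∀ x ∈ E, x < b) :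
    ((matchings (insert b (E ∪ O.toFinset)) (fun p => 0 < p.2 → p.2 ∈ insert b E) C).filter
      fun P => ¬∃ a ∈ O.toFinset, (a, b) ∈ P) =
      matchings (insert b (E ∪ O.toFinset)) (fun p => 0 < p.2 → p.2 ∈ E) C := by
  ext P
  rw [Finset.mem_filter, mem_matchings, mem_matchings]
  constructor
  · rintro ⟨hP, hnot⟩
    refine ⟨fun p hp hpos => ?_, hP.abs_lt, hP.covers, hP.labellable⟩
    obtain hpb | hpE := Finset.mem_insert.1 (hP.allowed p hp hpos)
    · have hlt := hP.abs_lt p hp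
      have hmem := hP.covers.fst_mem hp
      rw [hpb, abs_of_pos hb] at hlt
      exact absurd ⟨p.1, by grind, hpb ▸ hp⟩ hnot
    · exact hpE
  · refine fun hP => ⟨hP.congr fun p _ _ _ hA hpos => Finset.mem_insert_of_mem (hA hpos), ?_⟩
    rintro ⟨a, -, hab⟩
    exact (hEb b (hP.allowed _ hab hb)).false

theorem card_matchings_step {E : Finset ℤ} (hE : ∀ b ∈ E, 0 < b) (hO : O.Pairwise (· < ·))
    (hpos : ∀ a ∈ O, 0 < a) (hEO : ∀ b ∈ E, ∀ a ∈ O, b < a) (hC : Antitone C) (hl : ∀ a, C a ≤ l)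
    (hCE : ∀ b ∈ E, C b = l) :
    ((matchings (E ∪ O.toFinset) (fun p => 0 < p.2 → p.2 ∈ E) C).card : ℤ) =
      walkSum (O.map C) (step^[E.card] (evenFrom 0 : Weight (Fin l) → ℤ)) := by
  classical
  induction E using Finset.induction_on_max generalizing O C with
  | empty =>
    simpa using card_matchings_evenFrom hO hpos hC hl
  | insert b E hEb ih =>
    rw [Finset.forall_mem_insert] at hE hEO hCE
    have hbE : b ∉ E := fun h => (hEb b h).false
    have hb : b ∉ E ∪ O.toFinset := by
      simpa [hbE] using fun h => (hEO.1 b h).false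
    have habs : |b| = b := abs_of_pos hE.1
    rw [Finset.card_insert_of_notMem hbE, Function.iterate_succ_apply',
      walkSum_step (pairwise_ge_map hO hC) (forall_mem_map_le hl), Finset.insert_union,
      ← Finset.card_filter_add_card_filter_not (fun P => ∃ a ∈ O.toFinset, (a, b) ∈ P), add_comm,
      Nat.cast_add]
    congr 1
    · rw [filter_matchings_not_exists hE.1 hEb, ← Finset.union_insert, ← List.toFinset_cons,
        ih hE.2 (List.pairwise_cons.2 ⟨hEO.1, hO⟩) (List.forall_mem_cons.2 ⟨hE.1, hpos⟩)
          (fun c hc => List.forall_mem_cons.2 ⟨hEb c hc, hEO.2 c hc⟩) hC hl hCE.2,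
        List.map_cons, hCE.1]
    · refine card_matchings_filter_exists_eq_sum_deletions habs hO
        (fun a ha h => (hEO.2 a h a ha).false) hbE hEO.1
        (fun _ _ _ => Finset.mem_insert_self b E) (fun p hp hA => ?_) _ fun a ha => ?_
      · obtain h0 | h0 := le_or_gt p.2 0
        · exact h0.trans_lt hE.1
        · rw [abs_of_pos h0] at hp
          exact hEb _ ((Finset.mem_insert.1 (hA h0)).resolve_left (ne_of_mem_of_not_mem hp hb))
      · rw [← ih hE.2 (hO.erase a) (fun s hs => hpos s (List.mem_of_mem_erase hs))
          (fun c hc s hs => hEO.2 c hc s (List.mem_of_mem_erase hs)) (antitone_cut hC a)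
          (fun s => (cut_le C a s).trans (hl s))
          fun c hc => (cut_of_le (hEO.2 c hc a ha).le).trans (hCE.2 c hc)]
        refine congrArg _ (congrArg _ (matchings_congr fun p _ _ hp =>
          forall_congr' fun h0 => ?_))
        rw [abs_of_pos h0] at hp
        exact Finset.mem_insert.trans (or_iff_right (ne_of_mem_of_not_mem
          (Finset.union_subset_union_right (toFinset_erase_subset O a) hp) hb))

end MatchingCounts

section Labels

theorem forall_length_lt_iff_exists_label {α : Type*} [Preorder α] {l : ℕ} :
    (∀ p : LTSeries α, p.length < l) ↔
      ∃ h : α → ℕ, (∀ a, 1 ≤ h a ∧ h a ≤ l) ∧ StrictMono h := by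
  constructor
  · intro hl
    have hheight (a : α) : Order.height a ≤ (l - 1 : ℕ) :=
      Order.height_le fun p _ => Nat.cast_le.2 (Nat.le_sub_one_of_lt (hl p))
    have hne (a : α) : Order.height a ≠ ⊤ := ne_top_of_le_ne_top (ENat.natCast_ne_top _) (hheight a)
    refine ⟨fun a => (Order.height a).toNat + 1, fun a => ⟨Nat.le_add_left _ _, ?_⟩,
      fun a b hab => ?_⟩
    · have hpos : 0 < l := (Nat.zero_le _).trans_lt (hl (RelSeries.singleton _ a))
      have hle : (Order.height a).toNat ≤ l - 1 := ENat.toNat_le_of_le_natCast (hheight a)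
      change (Order.height a).toNat + 1 ≤ l
      omega
    · have hlt := Order.height_strictMono hab (hne a).lt_top
      rw [← ENat.natCast_toNat (hne a), ← ENat.natCast_toNat (hne b), Nat.cast_lt] at hlt
      exact Nat.succ_lt_succ hlt
  · rintro ⟨h, hbound, hmono⟩ p
    have hlength := (p.map h hmono).head_add_length_le_nat
    have hhead := (hbound p.head).1
    have hlast := (hbound p.last).2
    simp only [LTSeries.head_map, LTSeries.last_map, LTSeries.map_length] at hlength
    omega

variable {N : ℕ} {π : Equiv.Perm (Fin N)}

/-- The graph of `π`, whose chains for the product order are the increasing subsequences of `π`. -/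
abbrev Graph (π : Equiv.Perm (Fin N)) : Type := {p : Fin N × Fin N // π p.1 = p.2}

theorem graph_lt_iff {p q : Graph π} : p < q ↔ p.1.1 < q.1.1 ∧ π p.1.1 < π q.1.1 := by
  obtain ⟨⟨i, i'⟩, hi⟩ := p
  obtain ⟨⟨j, j'⟩, hj⟩ := q
  obtain rfl : π i = i' := hi
  obtain rfl : π j = j' := hj
  refine ⟨fun h => ?_, fun h => Prod.mk_lt_mk.2 (Or.inl ⟨h.1, h.2.le⟩)⟩
  have hij : i ≠ j := by
    rintro rfl
    exact h.false
  exact ⟨lt_of_le_of_ne h.le.1 hij, lt_of_le_of_ne h.le.2 (π.injective.ne hij)⟩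

theorem lisLE_iff_forall_length_lt {l : ℕ} :
    lisLE π l ↔ ∀ p : LTSeries (Graph π), p.length < l := by
  constructor
  · exact fun h p => h _ (fun k => (p k).1.1) (fun _ _ hab => (graph_lt_iff.1 (p.strictMono hab)).1)
      fun _ _ hab => (graph_lt_iff.1 (p.strictMono hab)).2
  · rintro h (_ | k) f hf hπf
    · exact Nat.zero_le l
    · exact h (LTSeries.mk k (fun a => ⟨(f a, π (f a)), rfl⟩) fun a b hab =>
        graph_lt_iff.2 ⟨hf hab, hπf hab⟩)

theorem lisLE_iff_exists_label {l : ℕ} :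
    lisLE π l ↔ ∃ h : Fin N → ℕ, (∀ i, 1 ≤ h i ∧ h i ≤ l) ∧
      ∀ i j, i < j → π i < π j → h i < h j := by
  rw [lisLE_iff_forall_length_lt, forall_length_lt_iff_exists_label]
  constructor
  · exact fun ⟨h, hbound, hmono⟩ => ⟨fun i => h ⟨(i, π i), rfl⟩, fun i => hbound _,
      fun i j hij hπ => hmono (graph_lt_iff.2 ⟨hij, hπ⟩)⟩
  · exact fun ⟨h, hbound, hmono⟩ => ⟨fun p => h p.1.1, fun p => hbound _,
      fun p q hpq => hmono _ _ (graph_lt_iff.1 hpq).1 (graph_lt_iff.1 hpq).2⟩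

end Labels

section SymmetricPermutations

variable {n l : ℕ} {P : Finset (ℤ × ℤ)} {p q : ℤ × ℤ} {u v w : ℤ}

/-- `p` is the image of the point `(u, v)` under one of the reflections fixing the square
`{±(2 * n - 1), …, ±3, ±1}²` that swap or negate coordinates, followed by `(u, v) ↦ (-u, v)`. -/
def IsImage (p : ℤ × ℤ) (u v : ℤ) : Prop :=
  (p.1 = -u ∧ p.2 = v) ∨ (p.1 = -v ∧ p.2 = u) ∨ (p.1 = u ∧ p.2 = -v) ∨ (p.1 = v ∧ p.2 = -u)

/-- The point `(u, v)` belongs to the orbit of a point represented in `P`. -/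
def Orb (P : Finset (ℤ × ℤ)) (u v : ℤ) : Prop := ∃ p ∈ P, IsImage p u v

theorem IsImage.swap (h : IsImage p u v) : IsImage p v u := by
  unfold IsImage at *
  tauto

theorem IsImage.neg (h : IsImage p u v) : IsImage p (-u) (-v) := by
  unfold IsImage at *
  simp only [neg_neg]
  tauto

theorem Orb.swap : Orb P u v → Orb P v u := fun ⟨p, hp, h⟩ => ⟨p, hp, h.swap⟩

theorem Orb.neg : Orb P u v → Orb P (-u) (-v) := fun ⟨p, hp, h⟩ => ⟨p, hp, h.neg⟩

theorem IsImage.eq_or_eq (h : IsImage p u v) (hp : |p.2| < p.1) : p.1 = |u| ∨ |p.2| = |u| := by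
  unfold IsImage at h
  grind [abs_lt, abs_of_neg, abs_of_pos]

theorem IsImage.abs_ne_abs (h : IsImage p u v) (hp : |p.2| < p.1) : |u| ≠ |v| := by
  unfold IsImage at h
  grind

theorem IsImage.right_unique (h : IsImage p u v) (h' : IsImage p u w) (hp : |p.2| < p.1)
    (hu : u ≠ 0) : v = w := by
  unfold IsImage at h h'
  rw [abs_lt] at hp
  omega

theorem IsImage.left_unique (h : IsImage p u v) (h' : IsImage q u v) (hp : |p.2| < p.1)
    (hq : |q.2| < q.1) : p = q := by
  unfold IsImage at h h'
  rw [abs_lt] at hp hq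
  ext <;> omega

theorem exists_isImage (h : p.1 = |u| ∨ |p.2| = |u|) : ∃ v, IsImage p u v := by
  unfold IsImage
  obtain h | h := h
  · obtain hu | hu := abs_choice u
    · exact ⟨-p.2, by omega⟩
    · exact ⟨p.2, by omega⟩
  · obtain hu | hu := abs_eq_abs.1 h
    · exact ⟨-p.1, by omega⟩
    · exact ⟨p.1, by omega⟩

theorem existsUnique_orb_iff (hP : ∀ p ∈ P, |p.2| < p.1) (hu : u ≠ 0) :
    (∃! v, Orb P u v) ↔ ∃! p, p ∈ P ∧ (p.1 = |u| ∨ |p.2| = |u|) := by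
  constructor
  · rintro ⟨v, ⟨p, hp, hpv⟩, huniq⟩
    refine ⟨p, ⟨hp, hpv.eq_or_eq (hP p hp)⟩, fun q ⟨hq, hqu⟩ => ?_⟩
    obtain ⟨w, hw⟩ := exists_isImage hqu
    obtain rfl : w = v := huniq w ⟨q, hq, hw⟩
    exact hw.left_unique hpv (hP q hq) (hP p hp)
  · rintro ⟨p, ⟨hp, hpu⟩, huniq⟩
    obtain ⟨v, hv⟩ := exists_isImage hpu
    refine ⟨v, ⟨p, hp, hv⟩, fun w ⟨q, hq, hw⟩ => ?_⟩
    obtain rfl : q = p := huniq q ⟨hq, hw.eq_or_eq (hP q hq)⟩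
    exact hw.right_unique hv (hP q hq) hu

theorem mem_iff_orb (hP : ∀ p ∈ P, |p.2| < p.1) {t y : ℤ} :
    (t, y) ∈ P ↔ |y| < t ∧ Orb P (-t) y := by
  have himage : IsImage (t, y) (-t) y := Or.inl ⟨(neg_neg t).symm, rfl⟩
  constructor
  · exact fun h => ⟨hP _ h, _, h, himage⟩
  · rintro ⟨hyt, p, hp, h⟩
    exact h.left_unique himage (hP p hp) hyt ▸ hp

/-- The odd numbers from `1` to `2 * m - 1`. -/
def odds (m : ℕ) : Finset ℤ := (Finset.range m).image fun i : ℕ => 2 * (i : ℤ) + 1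

theorem mem_odds {m : ℕ} {t : ℤ} : t ∈ odds m ↔ ∃ i < m, t = 2 * i + 1 := by
  simp only [odds, Finset.mem_image, Finset.mem_range, eq_comm]

theorem pos_of_mem_odds {m : ℕ} {t : ℤ} (h : t ∈ odds m) : 0 < t := by
  obtain ⟨i, -, rfl⟩ := mem_odds.1 h
  omega

theorem card_odds (m : ℕ) : (odds m).card = m := by
  rw [odds, Finset.card_image_of_injective _ fun i j h => by simpa using h, Finset.card_range]

/-- The coordinates on `Fin (4 * n)` centred at the origin, turning `Fin.rev` into negation. -/
def coord (n : ℕ) (x : Fin (4 * n)) : ℤ := 2 * (x : ℤ) + 1 - 4 * n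

theorem coord_strictMono (n : ℕ) : StrictMono (coord n) := fun x y h => by
  rw [Fin.lt_def] at h
  unfold coord
  omega

theorem coord_rev (x : Fin (4 * n)) : coord n x.rev = -coord n x := by
  unfold coord
  rw [Fin.val_rev]
  omega

theorem exists_coord_eq_iff : (∃ x, coord n x = u) ↔ |u| ∈ odds (2 * n) := by
  rw [mem_odds]
  unfold coord
  constructor
  · rintro ⟨x, rfl⟩
    obtain h | h := abs_cases (2 * (x : ℤ) + 1 - 4 * n)
    · exact ⟨x - 2 * n, by omega, by omega⟩
    · exact ⟨2 * n - 1 - x, by omega, by omega⟩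
  · rintro ⟨i, hi, h⟩
    obtain h' | h' := abs_cases u
    · exact ⟨⟨2 * n + i, by omega⟩, by push_cast; omega⟩
    · exact ⟨⟨2 * n - 1 - i, by omega⟩, by push_cast [Nat.cast_sub]; omega⟩

theorem abs_coord_mem (x : Fin (4 * n)) : |coord n x| ∈ odds (2 * n) :=
  exists_coord_eq_iff.1 ⟨x, rfl⟩

theorem coord_ne_zero (x : Fin (4 * n)) : coord n x ≠ 0 :=
  abs_pos.1 (pos_of_mem_odds (abs_coord_mem x))

/-- The involutions without fixed points that commute with `Fin.rev` but nowhere agree with it. -/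
structure IsDoublySymm (π : Equiv.Perm (Fin (4 * n))) : Prop where
  involutive : Function.Involutive π
  map_rev : ∀ x, π x.rev = (π x).rev
  ne : ∀ x, π x ≠ x
  ne_rev : ∀ x, π x ≠ x.rev

variable {π σ : Equiv.Perm (Fin (4 * n))}

theorem isDoublySymm_iff : IsDoublySymm π ↔ π = π⁻¹ ∧ π = Fin.revPerm * π⁻¹ * Fin.revPerm ∧
    (∀ x, π x ≠ x) ∧ ∀ x, π x ≠ Fin.revPerm x := by
  constructor
  · intro h
    have hinv : π = π⁻¹ := eq_inv_of_mul_eq_one_left (Equiv.ext h.involutive)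
    refine ⟨hinv, ?_, h.ne, h.ne_rev⟩
    rw [← hinv]
    ext x
    simp [h.map_rev]
  · rintro ⟨hinv, hrev, hne, hne_rev⟩
    rw [← hinv] at hrev
    refine ⟨fun x => ?_, fun x => ?_, hne, hne_rev⟩
    · nth_rw 1 [hinv]
      exact π.symm_apply_apply x
    · nth_rw 1 [hrev]
      simp

theorem fuCount_eq_ncard_isDoublySymm (n k : ℕ) :
    fuCount n k = {π : Equiv.Perm (Fin (4 * n)) | IsDoublySymm π ∧ lisLE π k}.ncard := by
  simp only [fuCount, isDoublySymm_iff, and_assoc]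
  exact Nat.card_coe_set_eq _

/-- The points `(-u, v)` for the points `(u, v)` of the centred graph of `π` with `|v| < -u`, which
represent the orbits of points under the reflections in the diagonals. -/
def points (π : Equiv.Perm (Fin (4 * n))) : Finset (ℤ × ℤ) :=
  (Finset.univ.filter fun x => |coord n (π x)| < -coord n x).image
    fun x => (-coord n x, coord n (π x))

theorem mem_points : p ∈ points π ↔ |p.2| < p.1 ∧ ∃ x, coord n x = -p.1 ∧ coord n (π x) = p.2 := by
  simp only [points, Finset.mem_image, Finset.mem_filter_univ, Prod.ext_iff]
  constructor
  · rintro ⟨x, hx, h₁, h₂⟩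
    exact ⟨h₁ ▸ h₂ ▸ hx, x, by omega, h₂⟩
  · rintro ⟨hp, x, h₁, h₂⟩
    exact ⟨x, by rwa [h₁, h₂, neg_neg], by omega, h₂⟩

theorem abs_lt_of_mem_points (hp : p ∈ points π) : |p.2| < p.1 := (mem_points.1 hp).1

theorem IsDoublySymm.orb_points_iff (h : IsDoublySymm π) :
    Orb (points π) u v ↔ ∃ x, coord n x = u ∧ coord n (π x) = v := by
  have hswap {u v} : (∃ x, coord n x = u ∧ coord n (π x) = v) →
      ∃ x, coord n x = v ∧ coord n (π x) = u := fun ⟨x, hu, hv⟩ =>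
    ⟨π x, hv, by rw [h.involutive, hu]⟩
  have hneg {u v} : (∃ x, coord n x = u ∧ coord n (π x) = v) →
      ∃ x, coord n x = -u ∧ coord n (π x) = -v := fun ⟨x, hu, hv⟩ =>
    ⟨x.rev, by rw [coord_rev, hu], by rw [h.map_rev, coord_rev, hv]⟩
  constructor
  · rintro ⟨⟨t, y⟩, hp, himage⟩
    have hty := (mem_points.1 hp).2
    obtain ⟨rfl, rfl⟩ | ⟨rfl, rfl⟩ | ⟨rfl, rfl⟩ | ⟨rfl, rfl⟩ := himage
    · simpa using hty
    · simpa using hswap hty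
    · simpa using hneg hty
    · simpa using hneg (hswap hty)
  · intro huv
    have hne : u ≠ v ∧ u ≠ -v := by
      obtain ⟨x, rfl, rfl⟩ := huv
      refine ⟨fun h' => h.ne x ((coord_strictMono n).injective h'.symm), fun h' => h.ne_rev x ?_⟩
      exact (coord_strictMono n).injective (by rw [coord_rev]; omega)
    obtain hlt | hlt | hlt | hlt : |v| < -u ∨ |u| < -v ∨ |v| < u ∨ |u| < v := by
      simp only [abs_lt]
      omega
    · exact ⟨(-u, v), mem_points.2 ⟨hlt, by simpa using huv⟩, by simp [IsImage]⟩
    · exact ⟨(-v, u), mem_points.2 ⟨hlt, by simpa using hswap huv⟩, by simp [IsImage]⟩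
    · exact ⟨(u, -v), mem_points.2 ⟨by simpa using hlt, hneg huv⟩, by simp [IsImage]⟩
    · exact ⟨(v, -u), mem_points.2 ⟨by simpa using hlt, hneg (hswap huv)⟩, by simp [IsImage]⟩

theorem IsDoublySymm.covers_points (h : IsDoublySymm π) : Covers (odds (2 * n)) (points π) := by
  refine covers_iff.2 ⟨fun p hp => ?_, fun t ht => ?_⟩
  · obtain ⟨hlt, x, h₁, h₂⟩ := mem_points.1 hp
    have hx := abs_coord_mem x
    rw [h₁, abs_neg, abs_of_pos ((abs_nonneg _).trans_lt hlt)] at hx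
    exact ⟨hx, h₂ ▸ abs_coord_mem (π x)⟩
  · have habs : |t| = t := abs_of_pos (pos_of_mem_odds ht)
    obtain ⟨x, rfl⟩ := exists_coord_eq_iff.2 (habs.symm ▸ ht)
    have hunique : ∃! v, Orb (points π) (coord n x) v := by
      refine ⟨coord n (π x), h.orb_points_iff.2 ⟨x, rfl, rfl⟩, fun v hv => ?_⟩
      obtain ⟨y, hyx, rfl⟩ := h.orb_points_iff.1 hv
      rw [(coord_strictMono n).injective hyx]
    rwa [existsUnique_orb_iff (fun _ => abs_lt_of_mem_points) (coord_ne_zero x), habs] at hunique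

theorem IsDoublySymm.eq_of_points_eq (hπ : IsDoublySymm π) (hσ : IsDoublySymm σ)
    (h : points π = points σ) : π = σ := by
  refine Equiv.ext fun x => (coord_strictMono n).injective ?_
  obtain ⟨y, hyx, hy⟩ := hσ.orb_points_iff.1 (h ▸ hπ.orb_points_iff.2 ⟨x, rfl, rfl⟩)
  rw [← hy, (coord_strictMono n).injective hyx]

theorem exists_isDoublySymm_points_eq (hP : ∀ p ∈ P, |p.2| < p.1)
    (hcovers : Covers (odds (2 * n)) P) :
    ∃ π : Equiv.Perm (Fin (4 * n)), IsDoublySymm π ∧ points π = P := by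
  have hunique (x : Fin (4 * n)) : ∃! v, Orb P (coord n x) v :=
    (existsUnique_orb_iff hP (coord_ne_zero x)).2 ((covers_iff.1 hcovers).2 _ (abs_coord_mem x))
  have hexists (x : Fin (4 * n)) : ∃ y, Orb P (coord n x) (coord n y) := by
    obtain ⟨v, p, hp, hv⟩ := (hunique x).exists
    obtain ⟨y, rfl⟩ := exists_coord_eq_iff.2
      (hcovers.mem_of_mem hp (hv.swap.eq_or_eq (hP p hp)))
    exact ⟨y, p, hp, hv⟩
  choose f hf using hexists
  have hf_eq {x y : Fin (4 * n)} (h : Orb P (coord n x) (coord n y)) : f x = y :=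
    (coord_strictMono n).injective ((hunique x).unique (hf x) h)
  have habs_ne (x : Fin (4 * n)) : |coord n x| ≠ |coord n (f x)| := by
    obtain ⟨p, hp, hv⟩ := hf x
    exact hv.abs_ne_abs (hP p hp)
  have hinv : Function.Involutive f := fun x => hf_eq (hf x).swap
  have hsymm : IsDoublySymm (hinv.toPerm f) := by
    refine ⟨hinv, fun x => hf_eq ?_, fun x (hx : f x = x) => habs_ne x ?_,
      fun x (hx : f x = x.rev) => habs_ne x ?_⟩
    · rw [coord_rev, coord_rev]
      exact (hf x).neg
    · rw [hx]
    · rw [hx, coord_rev, abs_neg]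
  have horb (u v : ℤ) : Orb (points (hinv.toPerm f)) u v ↔ Orb P u v := by
    rw [hsymm.orb_points_iff]
    constructor
    · rintro ⟨x, rfl, rfl⟩
      exact hf x
    · rintro ⟨p, hp, huv⟩
      obtain ⟨x, rfl⟩ := exists_coord_eq_iff.2 (hcovers.mem_of_mem hp (huv.eq_or_eq (hP p hp)))
      exact ⟨x, rfl, (hunique x).unique (hf x) ⟨p, hp, huv⟩⟩
  refine ⟨hinv.toPerm f, hsymm, Finset.ext fun ⟨t, y⟩ => ?_⟩
  rw [mem_iff_orb (fun _ => abs_lt_of_mem_points), mem_iff_orb hP, horb]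

theorem IsDoublySymm.min_max_mem_points (h : IsDoublySymm π) (x : Fin (4 * n)) :
    let u := coord n x; let v := coord n (π x)
    (u + v < 0 ∧ (-min u v, max u v) ∈ points π) ∨
      (0 < u + v ∧ (max u v, -min u v) ∈ points π) := by
  intro u v
  obtain ⟨⟨t, y⟩, hp, himage⟩ := h.orb_points_iff.2 ⟨x, rfl, rfl⟩
  have hlt := abs_lt.1 (abs_lt_of_mem_points hp)
  have hty : (u + v < 0 ∧ -min u v = t ∧ max u v = y) ∨
      (0 < u + v ∧ max u v = t ∧ -min u v = y) := by
    unfold IsImage at himage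
    omega
  obtain ⟨huv, rfl, rfl⟩ | ⟨huv, rfl, rfl⟩ := hty
  exacts [Or.inl ⟨huv, hp⟩, Or.inr ⟨huv, hp⟩]

-- A point keeps the label of its representative below the antidiagonal, and gets the complementary
-- label above it.
theorem IsDoublySymm.lisLE_of_isLabellable (h : IsDoublySymm π)
    (hl : IsLabellable (fun _ => l) (points π)) : lisLE π (2 * l) := by
  obtain ⟨f, hbound, hmono⟩ := hl
  replace hbound : ∀ p ∈ points π, 1 ≤ f p ∧ f p ≤ l := hbound
  refine lisLE_iff_exists_label.2 ⟨fun x => if coord n x + coord n (π x) < 0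
    then f (-min (coord n x) (coord n (π x)), max (coord n x) (coord n (π x)))
    else 2 * l + 1 - f (max (coord n x) (coord n (π x)), -min (coord n x) (coord n (π x))),
    fun x => ?_, fun x y hxy hπ => ?_⟩ <;> dsimp only
  · obtain ⟨hneg, hx⟩ | ⟨hpos, hx⟩ := h.min_max_mem_points x
    · have hfx := hbound _ hx
      rw [if_pos hneg]
      omega
    · have hfx := hbound _ hx
      rw [if_neg hpos.not_gt]
      omega
  · have hmin := min_lt_min (coord_strictMono n hxy) (coord_strictMono n hπ)
    have hmax := max_lt_max (coord_strictMono n hxy) (coord_strictMono n hπ)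
    obtain ⟨hx0, hx⟩ | ⟨hx0, hx⟩ := h.min_max_mem_points x <;>
    obtain ⟨hy0, hy⟩ | ⟨hy0, hy⟩ := h.min_max_mem_points y
    · rw [if_pos hx0, if_pos hy0]
      exact hmono _ hx _ hy (neg_lt_neg hmin) hmax
    · rw [if_pos hx0, if_neg hy0.not_gt]
      have hfx := hbound _ hx
      have hfy := hbound _ hy
      omega
    · omega
    · rw [if_neg hx0.not_gt, if_neg hy0.not_gt]
      have hfx := hbound _ hx
      have hfxy := hmono _ hy _ hx hmax (neg_lt_neg hmin)
      omega

-- Each point `(-u, v)` in `points π` lies below its mirror image in the antidiagonal, so the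
-- smaller of the label of the former and the complement of the label of the latter is at most `l`.
theorem IsDoublySymm.isLabellable_of_lisLE (h : IsDoublySymm π) (hl : lisLE π (2 * l)) :
    IsLabellable (fun _ => l) (points π) := by
  obtain ⟨f, hbound, hmono⟩ := lisLE_iff_exists_label.1 hl
  have hsm := coord_strictMono n
  set g := Function.extend (coord n) f 0
  have hg (x : Fin (4 * n)) : g (coord n x) = f x := hsm.injective.extend_apply _ _ _
  have hpair : ∀ p ∈ points π, ∃ x y, coord n x = -p.1 ∧ coord n (π x) = p.2 ∧
      coord n y = -p.2 ∧ coord n (π y) = p.1 ∧ f x < f y := by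
    intro p hp
    obtain ⟨hlt, x, h₁, h₂⟩ := mem_points.1 hp
    rw [abs_lt] at hlt
    have h₃ : coord n (π x).rev = -p.2 := by rw [coord_rev, h₂]
    have h₄ : coord n (π (π x).rev) = p.1 := by
      rw [h.map_rev, h.involutive, coord_rev, h₁, neg_neg]
    exact ⟨x, (π x).rev, h₁, h₂, h₃, h₄,
      hmono _ _ (hsm.lt_iff_lt.1 (by omega)) (hsm.lt_iff_lt.1 (by omega))⟩
  refine ⟨fun p => min (g (-p.1)) (2 * l + 1 - g (-p.2)), fun p hp => ?_,
    fun p hp q hq h₁ h₂ => ?_⟩ <;> dsimp only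
  · obtain ⟨x, y, hx, -, hy, -, hxy⟩ := hpair p hp
    have hfx := hbound x
    have hfy := hbound y
    rw [← hx, ← hy, hg, hg]
    omega
  · obtain ⟨x, y, hx, hπx, hy, hπy, -⟩ := hpair p hp
    obtain ⟨x', y', hx', hπx', hy', hπy', -⟩ := hpair q hq
    have hxx' : f x < f x' := hmono _ _ (hsm.lt_iff_lt.1 (by omega)) (hsm.lt_iff_lt.1 (by omega))
    have hyy' : f y' < f y := hmono _ _ (hsm.lt_iff_lt.1 (by omega)) (hsm.lt_iff_lt.1 (by omega))
    have hfy := hbound y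
    rw [← hx, ← hy, ← hx', ← hy', hg, hg, hg, hg]
    omega

theorem fuCount_two_mul_eq_card_matchings (n l : ℕ) : fuCount n (2 * l) =
    (matchings (odds (2 * n)) (fun p => 0 < p.2 → p.2 ∈ odds (2 * n)) fun _ => l).card := by
  have hbij : Set.BijOn points
      {π : Equiv.Perm (Fin (4 * n)) | IsDoublySymm π ∧ lisLE π (2 * l)}
      (matchings (odds (2 * n)) (fun p => 0 < p.2 → p.2 ∈ odds (2 * n)) fun _ => l) := by
    refine ⟨?_, fun π hπ σ hσ => hπ.1.eq_of_points_eq hσ.1, fun P hP => ?_⟩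
    · rintro π ⟨h, hl⟩
      exact mem_matchings.2 ⟨fun p hp hpos => abs_of_pos hpos ▸ h.covers_points.abs_snd_mem hp,
        fun _ => abs_lt_of_mem_points, h.covers_points, h.isLabellable_of_lisLE hl⟩
    · have hmatching := mem_matchings.1 hP
      obtain ⟨π, h, rfl⟩ := exists_isDoublySymm_points_eq hmatching.abs_lt hmatching.covers
      exact ⟨π, ⟨h, h.lisLE_of_isLabellable hmatching.labellable⟩, rfl⟩
  rw [fuCount_eq_ncard_isDoublySymm, ← Set.ncard_coe_finset]
  exact hbij.ncard_eq

theorem fuCount_two_mul_eq_step_iterate (n l : ℕ) :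
    (fuCount n (2 * l) : ℤ) = step^[2 * n] (evenFrom 0 : Weight (Fin l) → ℤ) (rho l) := by
  have h := card_matchings_step (l := l) (O := []) (C := fun _ => l) (E := odds (2 * n))
    (fun _ => pos_of_mem_odds) List.Pairwise.nil (by simp) (by simp) antitone_const
    (fun _ => le_rfl) fun _ _ => rfl
  rw [List.toFinset_nil, Finset.union_empty, card_odds] at h
  rw [fuCount_two_mul_eq_card_matchings, h]
  exact walkSum_replicate 0 l _

end SymmetricPermutations

section Permutations

variable {n l : ℕ} {P : Finset (ℤ × ℤ)} (π : Equiv.Perm (Fin n))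

/-- The point of index `i` in the graph of `π`, moved below the axis and mirrored. -/
def graphPoint (i : Fin n) : ℤ × ℤ := (2 * n - (i : ℤ), (π i : ℤ) - n)

/-- The points of the graph of `π`, matching the items `1, …, n` with `n + 1, …, 2 * n`. -/
def graphPoints : Finset (ℤ × ℤ) := Finset.univ.image (graphPoint π)

theorem graphPoint_injective : Function.Injective (graphPoint π) := fun i j h => by
  simp only [graphPoint, Prod.mk.injEq] at h
  omega

variable {π}

theorem forall_mem_graphPoints {q : ℤ × ℤ → Prop} :
    (∀ p ∈ graphPoints π, q p) ↔ ∀ i, q (graphPoint π i) := by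
  simp [graphPoints]

theorem isLabellable_graphPoints_iff :
    IsLabellable (fun _ => l) (graphPoints π) ↔ lisLE π l := by
  have hlt (i j : Fin n) : (graphPoint π j).1 < (graphPoint π i).1 ↔ i < j := by
    simp [graphPoint]
  have hlt' (i j : Fin n) : (graphPoint π i).2 < (graphPoint π j).2 ↔ π i < π j := by
    simp [graphPoint]
  rw [lisLE_iff_exists_label]
  simp only [IsLabellable, forall_mem_graphPoints, hlt, hlt']
  constructor
  · exact fun ⟨h, hh⟩ => ⟨fun i => h (graphPoint π i), hh⟩
  · refine fun ⟨h, hh⟩ => ⟨Function.extend (graphPoint π) h 0, ?_⟩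
    simpa only [(graphPoint_injective π).extend_apply] using hh

theorem graphPoint_mem_bounds (i : Fin n) :
    n < (graphPoint π i).1 ∧ -n ≤ (graphPoint π i).2 ∧ (graphPoint π i).2 < 0 := by
  simp only [graphPoint]
  omega

theorem graphPoint_eq_or_eq_iff {i : Fin n} {t : ℤ} :
    ((graphPoint π i).1 = t ∨ |(graphPoint π i).2| = t) ↔
      (i : ℤ) = 2 * n - t ∨ (π i : ℤ) = n - t := by
  rw [abs_of_neg (graphPoint_mem_bounds i).2.2]
  simp only [graphPoint]
  omega

theorem exists_fin_eq {z : ℤ} (hz : 0 ≤ z) (hzn : z < n) : ∃ i : Fin n, (i : ℤ) = z :=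
  ⟨⟨z.toNat, by omega⟩, Int.toNat_of_nonneg hz⟩

theorem covers_graphPoints : Covers (Finset.Icc 1 (2 * n : ℤ)) (graphPoints π) := by
  refine covers_iff.2 ⟨forall_mem_graphPoints.2 fun i => ?_, fun t ht => ?_⟩
  · rw [abs_of_neg (graphPoint_mem_bounds i).2.2, Finset.mem_Icc, Finset.mem_Icc]
    simp only [graphPoint]
    omega
  · rw [Finset.mem_Icc] at ht
    obtain ⟨i, hi⟩ : ∃ i : Fin n, (i : ℤ) = 2 * n - t ∨ (π i : ℤ) = n - t := by
      obtain htn | htn := le_or_gt t n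
      · obtain ⟨j, hj⟩ := exists_fin_eq (n := n) (z := n - t) (by omega) (by omega)
        exact ⟨π.symm j, Or.inr (by rwa [π.apply_symm_apply])⟩
      · obtain ⟨i, hi⟩ := exists_fin_eq (n := n) (z := 2 * n - t) (by omega) (by omega)
        exact ⟨i, Or.inl hi⟩
    refine ⟨graphPoint π i, ⟨Finset.mem_image_of_mem _ (Finset.mem_univ i),
      graphPoint_eq_or_eq_iff.2 hi⟩, fun q ⟨hq, hqt⟩ => ?_⟩
    obtain ⟨j, -, rfl⟩ := Finset.mem_image.1 hq
    rw [graphPoint_eq_or_eq_iff] at hqt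
    obtain h | h : j = i ∨ π j = π i := by omega
    · rw [h]
    · rw [π.injective h]

theorem graphPoints_injective :
    Function.Injective (graphPoints : Equiv.Perm (Fin n) → Finset (ℤ × ℤ)) := by
  refine fun π σ h => Equiv.ext fun i => ?_
  obtain ⟨j, -, hj⟩ := Finset.mem_image.1
    (h ▸ Finset.mem_image_of_mem _ (Finset.mem_univ i) : graphPoint π i ∈ graphPoints σ)
  simp only [graphPoint, Prod.mk.injEq] at hj
  obtain rfl : j = i := by omega
  omega

theorem exists_graphPoints_eq (hbounds : ∀ p ∈ P, n < p.1 ∧ -n ≤ p.2 ∧ p.2 < 0)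
    (hcovers : Covers (Finset.Icc 1 (2 * n : ℤ)) P) :
    ∃ π : Equiv.Perm (Fin n), graphPoints π = P := by
  have hunique := (covers_iff.1 hcovers).2
  have hexists (i : Fin n) : ∃ j : Fin n, (2 * n - (i : ℤ), (j : ℤ) - n) ∈ P := by
    obtain ⟨⟨a, y⟩, ⟨hp, hpi⟩, -⟩ := hunique (2 * n - (i : ℤ)) (Finset.mem_Icc.2 (by omega))
    obtain ⟨ha, hny, hy⟩ := hbounds _ hp
    simp only [abs_of_neg hy] at ha hny hy hpi
    obtain ⟨j, hj⟩ := exists_fin_eq (n := n) (z := y + n) (by omega) (by omega)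
    obtain rfl : a = 2 * n - (i : ℤ) := by omega
    exact ⟨j, by rwa [hj, add_sub_cancel_right]⟩
  choose f hf using hexists
  have hinj : Function.Injective f := fun i j hij => by
    have h := (hunique _ (hcovers.abs_snd_mem (hf i))).unique ⟨hf i, Or.inr rfl⟩
      ⟨hf j, Or.inr (by rw [hij])⟩
    simp only [Prod.mk.injEq] at h
    omega
  refine ⟨Equiv.ofBijective f (Finite.injective_iff_bijective.1 hinj),
    (Finset.ext fun p => ⟨fun hp => forall_mem_graphPoints.2 hf p hp, fun hp => ?_⟩)⟩
  have hfst := hcovers.fst_mem hp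
  have hp1 := Finset.mem_Icc.1 hfst
  obtain ⟨i, hi⟩ := exists_fin_eq (n := n) (z := 2 * n - p.1) (by omega)
    (by linarith [(hbounds p hp).1])
  have hip : (2 * n - (i : ℤ), (f i : ℤ) - n) = p :=
    (hunique _ hfst).unique ⟨hf i, Or.inl (by simp only; omega)⟩ ⟨hp, Or.inl rfl⟩
  exact Finset.mem_image.2 ⟨i, Finset.mem_univ i, hip⟩

theorem permCount_eq_card_matchings (n l : ℕ) : permCount n l =
    (matchings (Finset.Icc 1 (2 * n : ℤ)) (fun p => n < p.1 ∧ -n ≤ p.2 ∧ p.2 < 0)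
      fun _ => l).card := by
  have hbij : Set.BijOn graphPoints {π : Equiv.Perm (Fin n) | lisLE π l}
      (matchings (Finset.Icc 1 (2 * n : ℤ)) (fun p => n < p.1 ∧ -n ≤ p.2 ∧ p.2 < 0)
        fun _ => l) := by
    refine ⟨fun π hπ => mem_matchings.2 ?_, graphPoints_injective.injOn, fun P hP => ?_⟩
    · refine ⟨forall_mem_graphPoints.2 graphPoint_mem_bounds,
        forall_mem_graphPoints.2 fun i => ?_, covers_graphPoints,
        isLabellable_graphPoints_iff.2 hπ⟩
      have hi := graphPoint_mem_bounds (π := π) i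
      rw [abs_of_neg hi.2.2]
      omega
    · have hmatching := mem_matchings.1 hP
      obtain ⟨π, rfl⟩ := exists_graphPoints_eq hmatching.allowed hmatching.covers
      exact ⟨π, isLabellable_graphPoints_iff.1 hmatching.labellable, rfl⟩
  rw [← Set.ncard_coe_finset]
  exact hbij.ncard_eq

theorem permCount_eq_up_iterate_down_iterate (n l : ℕ) :
    (permCount n l : ℤ) = (up l)^[n] (down^[n] (delta : Weight (Fin l) → ℤ)) (rho l) := by
  have hitems : Finset.Icc 1 (2 * n : ℤ) =
      Finset.Icc 1 (n : ℤ) ∪ (Finset.Ioc (n : ℤ) (2 * n)).sort.toFinset := by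
    ext t
    simp only [Finset.sort_toFinset, Finset.mem_union, Finset.mem_Icc, Finset.mem_Ioc]
    omega
  have hR : (Finset.Icc 1 (n : ℤ)).card = n := by simp
  have hO : (Finset.Ioc (n : ℤ) (2 * n)).sort.length = n := by
    rw [Finset.length_sort, Int.card_Ioc]
    omega
  rw [permCount_eq_card_matchings, hitems, card_matchings_bipartite (l := l)
    (R := Finset.Icc 1 (n : ℤ)) (fun r hr => Finset.mem_Icc.1 hr) (Finset.sortedLT_sort _).pairwise
    (fun a ha => (Finset.mem_Ioc.1 ((Finset.mem_sort _).1 ha)).1) (hO.trans hR.symm)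
    antitone_const fun _ => le_rfl, hR, List.map_const', hO, walkSum_replicate]

end Permutations

end ChamberWalk

/-- `f^u_{n,2l} = binom(2n,n) · f_{n,l}`. -/
theorem fuCount_eq_central_binomial_mul (n l : ℕ) :
    fuCount n (2 * l) = (2 * n).choose n * permCount n l := by
  have h := ChamberWalk.fuCount_two_mul_eq_step_iterate n l
  rw [ChamberWalk.step_iterate_two_mul_evenFrom,
    ← ChamberWalk.permCount_eq_up_iterate_down_iterate, Nat.centralBinom_eq_two_mul_choose] at h
  exact_mod_cast h
end
end

section
/- For every nonnegative integer l and every real t, Σ_{n≥0} f^O_{n,l} · t^{2n}/(2n)! = E_{U∈O(l)} exp(t·Tr(U)); that is, the exponential generating function (in the variable t, with t^{2n}/(2n)! weights) of the numbers of fixed-point-free involutions of {1,…,2n} with longest increasing subsequence of length at most l equals the Haar expectation of exp(t·Tr(U)) over the orthogonal group O(l). -/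
open MeasureTheory Matrix

noncomputable section

/-- `f^O_{n,l}`: the number of fixed-point-free involutions of `{1,…,2n}` whose
longest increasing subsequence has length at most `l`. -/
def fpfInvCount (n l : ℕ) : ℕ :=
  Nat.card {π : Equiv.Perm (Fin (2 * n)) //
    π * π = 1 ∧ (∀ x, π x ≠ x) ∧ lisLE π l}

instance (l : ℕ) : MeasurableSpace (Matrix.orthogonalGroup (Fin l) ℝ) := borel _
instance (l : ℕ) : BorelSpace (Matrix.orthogonalGroup (Fin l) ℝ) := ⟨rfl⟩

/-! The `N`-th moment of the trace is the average over `O(l)` of the character of the `N`-th tensor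
power of `ℝ^l`, that is, the dimension of the space of invariant tensors. Invariant tensors are
spanned by the matching tensors `∏ δ (i a) (i (π a))` of the fixed-point-free involutions `π` of
the legs: if an invariant `x` is orthogonal to all of them, then `G ↦ ⟨x, G^{⊗N} x⟩` has average
zero over Gaussian matrices by Wick's formula, yet it is nonnegative by polar decomposition, so it
vanishes at `G = 1` and `x = 0`.

Antisymmetrizing over more than `l` legs kills every tensor, which eliminates the matchings with an
increasing subsequence longer than `l`. The remaining matching tensors are linearly independent:
labelling each point by the length of the longest increasing subsequence ending there gives a
multi-index on which they are unitriangular. Hence the `N`-th moment counts the matchings without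
increasing subsequence longer than `l`, and summing the exponential series gives the theorem.
-/

/-- Fixed-point-free involutions, that is, perfect matchings of `α`. -/
structure IsFpfInv {α : Type*} (π : Equiv.Perm α) : Prop where
  involutive : Function.Involutive π
  apply_ne : ∀ x, π x ≠ x

namespace IsFpfInv

variable {α : Type*} {π : Equiv.Perm α}

theorem conj (hπ : IsFpfInv π) (τ : Equiv.Perm α) : IsFpfInv (τ * π * τ⁻¹) where
  involutive x := by simp [hπ.involutive _]
  apply_ne x h := hπ.apply_ne (τ⁻¹ x) (Equiv.Perm.eq_inv_iff_eq.2 h)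

theorem not_lt_apply_iff [LinearOrder α] (hπ : IsFpfInv π) (x : α) :
    ¬ x < π x ↔ π x < π (π x) := by
  rw [hπ.involutive x, not_lt, (hπ.apply_ne x).le_iff_lt]

end IsFpfInv

/-! ### Longest increasing subsequences -/

section IncreasingSubsequences

variable {α β : Type*} [Fintype α] [LinearOrder α] [Preorder β] {f : α → β} {i j : α}
  {s : Finset α} {l : ℕ}

/-- The longest increasing subsequence of `f` has length at most `l`. This is `lisLE` for an
arbitrary linear order, with a subsequence encoded by its set of indices. -/
def LISAtMost (f : α → β) (l : ℕ) : Prop :=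
  ∀ s : Finset α, StrictMonoOn f s → s.card ≤ l

theorem lisLE_iff_lisAtMost {N : ℕ} {π : Equiv.Perm (Fin N)} : lisLE π l ↔ LISAtMost π l := by
  refine ⟨fun h s hs => h _ (s.orderEmbOfFin rfl) (OrderEmbedding.strictMono _) fun a b hab => ?_,
    fun h k f hf hπf => ?_⟩
  · exact hs (s.orderEmbOfFin_mem rfl a) (s.orderEmbOfFin_mem rfl b)
      ((s.orderEmbOfFin rfl).strictMono hab)
  · have hmono : StrictMonoOn π (Finset.univ.map ⟨f, hf.injective⟩ : Finset (Fin N)) := by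
      simpa [StrictMonoOn, hf.lt_iff_lt] using fun _ _ hab => hπf hab
    simpa using h _ hmono

open Classical in
/-- The length of the longest increasing subsequence of `f` whose last index is `i`. -/
def lisEndingAt (f : α → β) (i : α) : ℕ :=
  (Finset.univ.filter fun s : Finset α =>
    StrictMonoOn f s ∧ IsGreatest (s : Set α) i).sup Finset.card

theorem card_le_lisEndingAt (hs : StrictMonoOn f s) (hi : IsGreatest (s : Set α) i) :
    s.card ≤ lisEndingAt f i := by
  classical exact Finset.le_sup (f := Finset.card) (by simpa using ⟨hs, hi⟩)

theorem exists_card_eq_lisEndingAt (f : α → β) (i : α) :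
    ∃ s : Finset α, StrictMonoOn f s ∧ IsGreatest (s : Set α) i ∧ s.card = lisEndingAt f i := by
  classical
  obtain ⟨s, hs, hcard⟩ := Finset.exists_mem_eq_sup (Finset.univ.filter fun s : Finset α =>
    StrictMonoOn f s ∧ IsGreatest (s : Set α) i) ⟨{i}, by simp⟩ Finset.card
  obtain ⟨hmono, hi⟩ := (Finset.mem_filter.1 hs).2
  exact ⟨s, hmono, hi, hcard.symm⟩

theorem lisEndingAt_pos (f : α → β) (i : α) : 0 < lisEndingAt f i :=
  card_le_lisEndingAt (s := {i}) (by simp) (by simp)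

theorem LISAtMost.lisEndingAt_le (h : LISAtMost f l) (i : α) : lisEndingAt f i ≤ l := by
  obtain ⟨s, hs, -, hcard⟩ := exists_card_eq_lisEndingAt f i
  exact hcard ▸ h s hs

theorem lisEndingAt_lt_lisEndingAt (hij : i < j) (hf : f i < f j) :
    lisEndingAt f i < lisEndingAt f j := by
  classical
  obtain ⟨s, hs, hi, hcard⟩ := exists_card_eq_lisEndingAt f i
  have hlt : ∀ x ∈ s, x < j := fun x hx => (hi.2 hx).trans_lt hij
  rw [← hcard, ← Nat.add_one_le_iff, ← Finset.card_insert_of_notMem fun hj => (hlt j hj).false]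
  refine card_le_lisEndingAt ?_ ⟨by simp, by simpa [upperBounds] using fun x hx => (hlt x hx).le⟩
  rw [Finset.coe_insert, strictMonoOn_insert_iff_of_forall_le fun x hx => (hlt x hx).le]
  exact ⟨fun x hx _ => (hs.monotoneOn hx hi.1 (hi.2 hx)).trans_lt hf, hs⟩

theorem lisEndingAt_apply_of_involutive {f : α → α} (hf : Function.Involutive f) (i : α) :
    lisEndingAt f (f i) = lisEndingAt f i := by
  have hle : ∀ i, lisEndingAt f i ≤ lisEndingAt f (f i) := fun i => by
    obtain ⟨s, hs, hi, hcard⟩ := exists_card_eq_lisEndingAt f i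
    rw [← hcard, ← Finset.card_map ⟨f, hf.injective⟩]
    refine card_le_lisEndingAt ?_ ?_ <;> rw [Finset.coe_map, Function.Embedding.coeFn_mk]
    · rintro _ ⟨x, hx, rfl⟩ _ ⟨y, hy, rfl⟩ hxy
      rw [hf, hf]
      exact (hs.lt_iff_lt hx hy).1 hxy
    · exact hs.monotoneOn.map_isGreatest hi
  exact le_antisymm (by simpa only [hf i] using hle (f i)) (hle i)

end IncreasingSubsequences

/-- By the involution, the length of the longest increasing subsequence ending at a point is
constant on blocks; it is strictly larger at the end of an ascent than at its start. -/
theorem LISAtMost.exists_labelling {α κ : Type*} [Finite α] [LinearOrder α] [Fintype κ] {f : α → α}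
    (h : LISAtMost f (Fintype.card κ)) (hf : Function.Involutive f) :
    ∃ w : α → κ, w ∘ f = w ∧ ∀ i j, i < j → f i < f j → w i ≠ w j := by
  have := Fintype.ofFinite α
  let w : α → κ := fun i => (Fintype.equivFin κ).symm
    ⟨lisEndingAt f i - 1, by have := lisEndingAt_pos f i; have := h.lisEndingAt_le i; omega⟩
  have hw : ∀ i j, w i = w j ↔ lisEndingAt f i = lisEndingAt f j := fun i j => by
    have := lisEndingAt_pos f i
    have := lisEndingAt_pos f j
    simp only [w, EmbeddingLike.apply_eq_iff_eq, Fin.mk.injEq]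
    omega
  exact ⟨w, funext fun i => (hw _ _).2 (lisEndingAt_apply_of_involutive hf i),
    fun i j hij hfij => mt (hw i j).1 (lisEndingAt_lt_lisEndingAt hij hfij).ne⟩

/-! ### Lexicographic comparison of permutations -/

theorem perm_apply_mem_of_forall_notMem {α : Type*} {τ : Equiv.Perm α} {s : Set α}
    (hτ : ∀ x ∉ s, τ x = x) {x : α} (hx : x ∈ s) : τ x ∈ s := by
  by_contra h
  exact h ((τ.injective (hτ _ h)).symm ▸ hx)

section Lex

variable {α κ : Type*} [LinearOrder α]

theorem IsFpfInv.apply_notMem_of_strictMonoOn {π : Equiv.Perm α} {s : Set α} (hπ : IsFpfInv π)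
    (hs : StrictMonoOn π s) {x : α} (hx : x ∈ s) : π x ∉ s := fun hx' => by
  rcases lt_or_gt_of_ne (hπ.apply_ne x) with h | h
  · exact (hs hx' hx h).not_gt (by rwa [hπ.involutive])
  · exact (hs hx hx' h).not_gt (by rwa [hπ.involutive])

/-- At a first point of disagreement, an increasing sequence of values is replaced by a later
term of itself: the earlier ones are already taken. -/
theorem apply_le_apply_of_forall_lt {π ρ τ : Equiv.Perm α} {s : Set α} {p : α}
    (hs : StrictMonoOn π s) (hτ : Set.MapsTo τ s s) (hρ : ∀ x ∈ s, ρ x = π (τ x)) (hp : p ∈ s)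
    (hbefore : ∀ q < p, π q = ρ q) : π p ≤ ρ p := by
  rw [hρ p hp]
  by_contra! hlt
  rw [hs.lt_iff_lt (hτ hp) hp] at hlt
  have heq := hbefore _ hlt
  rw [hρ _ (hτ hp)] at heq
  exact hlt.ne (τ.injective (π.injective heq)).symm

variable [WellFoundedLT α] {π τ : Equiv.Perm α}

theorem toLex_le_toLex_of_forall {a b : α → α}
    (h : ∀ p, (∀ q < p, a q = b q) → a p ≤ b p) : toLex a ≤ toLex b := by
  by_contra hba
  obtain ⟨p, hp, hlt⟩ := not_le.1 hba
  exact (h p fun q hq => (hp q hq).symm).not_gt hlt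

/-- An involution is the lexicographically largest permutation preserving a labelling that is
constant on its blocks and separates its ascents. -/
theorem toLex_le_toLex_of_comp_eq {ρ : Equiv.Perm α} {w : α → κ} (hπ : Function.Involutive π)
    (hw : w ∘ π = w) (hasc : ∀ i j, i < j → π i < π j → w i ≠ w j) (hρ : w ∘ ρ = w) :
    toLex (ρ : α → α) ≤ toLex (π : α → α) := by
  refine toLex_le_toLex_of_forall fun p hp => ?_
  by_contra! hlt
  have hlabel : w p = w (π (ρ p)) := ((congrFun hw (ρ p)).trans (congrFun hρ p)).symm
  rcases lt_trichotomy (π (ρ p)) p with hq | hq | hq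
  · exact hq.ne (ρ.injective ((hp _ hq).trans (hπ _)))
  · rw [← hπ (ρ p), hq] at hlt
    exact hlt.false
  · exact hasc p _ hq (by rwa [hπ]) hlabel

theorem IsFpfInv.toLex_le_toLex_conj {s : Set α} (hπ : IsFpfInv π) (hs : StrictMonoOn π s)
    (hτ : ∀ x ∉ s, τ x = x) :
    toLex (π : α → α) ≤ toLex ((τ * π * τ⁻¹ : Equiv.Perm α) : α → α) := by
  have hτ_inv : ∀ x ∉ s, τ⁻¹ x = x := fun x hx => Equiv.Perm.inv_eq_iff_eq.2 (hτ x hx).symm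
  have hτ_partner : ∀ x ∈ s, τ (π x) = π x := fun x hx =>
    hτ _ (hπ.apply_notMem_of_strictMonoOn hs hx)
  refine toLex_le_toLex_of_forall fun p hp => ?_
  by_cases hps : p ∈ s
  · exact apply_le_apply_of_forall_lt (τ := τ⁻¹) hs
      (fun x hx => perm_apply_mem_of_forall_notMem hτ_inv hx)
      (fun x hx => hτ_partner _ (perm_apply_mem_of_forall_notMem hτ_inv hx)) hps hp
  by_cases hπps : π p ∈ s
  · refine apply_le_apply_of_forall_lt (s := π ⁻¹' s) (τ := π * τ * π) ?_ ?_ ?_ hπps hp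
    · intro x hx y hy hxy
      exact (hs.lt_iff_lt hx hy).1 (by rwa [hπ.involutive, hπ.involutive])
    · intro x hx
      rw [Set.mem_preimage, Equiv.Perm.mul_apply, Equiv.Perm.mul_apply, hπ.involutive]
      exact perm_apply_mem_of_forall_notMem hτ hx
    · intro x hx
      have hxs : x ∉ s := hπ.involutive x ▸ hπ.apply_notMem_of_strictMonoOn hs hx
      rw [Equiv.Perm.mul_apply, Equiv.Perm.mul_apply, hτ_inv x hxs, Equiv.Perm.mul_apply,
        Equiv.Perm.mul_apply, hπ.involutive]
  · rw [Equiv.Perm.mul_apply, Equiv.Perm.mul_apply, hτ_inv p hps, hτ _ hπps]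

theorem IsFpfInv.toLex_lt_toLex_conj {s : Set α} (hπ : IsFpfInv π) (hs : StrictMonoOn π s)
    (hτ : ∀ x ∉ s, τ x = x) (hτ_ne : τ ≠ 1) :
    toLex (π : α → α) < toLex ((τ * π * τ⁻¹ : Equiv.Perm α) : α → α) := by
  refine (hπ.toLex_le_toLex_conj hs hτ).lt_of_ne fun heq => hτ_ne (Equiv.ext fun x => ?_)
  by_cases hx : x ∈ s
  · have hcomm : π * τ = τ * π :=
      eq_mul_inv_iff_mul_eq.1 (DFunLike.coe_injective (toLex.injective heq))
    have hτx : π (τ x) = π x :=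
      (DFunLike.congr_fun hcomm x).trans (hτ _ (hπ.apply_notMem_of_strictMonoOn hs hx))
    exact π.injective hτx
  · exact hτ x hx

end Lex

/-! ### Straightening matching tensors -/

section Straightening

/-- The tensor attached to a matching `π` of the tensor legs `α`: the product over the blocks
`{a, π a}` of the Kronecker deltas `δ (i a) (i (π a))`. -/
def matchingTensor (R : Type*) [Semiring R] {α : Type*} (κ : Type*) (π : Equiv.Perm α) :
    (α → κ) → R :=
  Set.indicator {i | i ∘ π = i} 1

/-- The matchings of `α` with longest increasing subsequence of length at most `l`. -/
def shortMatchings (α : Type*) [LinearOrder α] (l : ℕ) : Set (Equiv.Perm α) :=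
  {π | IsFpfInv π ∧ LISAtMost π l}

section Apply

variable {R : Type*} [Semiring R] {α κ : Type*}

theorem matchingTensor_apply (π : Equiv.Perm α) (i : α → κ) [Decidable (i ∘ π = i)] :
    matchingTensor R κ π i = if i ∘ π = i then 1 else 0 := by
  split_ifs with h <;> simp [matchingTensor, h]

theorem matchingTensor_conj_apply (π τ : Equiv.Perm α) (i : α → κ) :
    matchingTensor R κ (τ * π * τ⁻¹) i = matchingTensor R κ π (i ∘ τ) := by
  have hiff : i ∘ (τ * π * τ⁻¹) = i ↔ (i ∘ τ) ∘ π = i ∘ τ := by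
    rw [Equiv.Perm.coe_mul, Equiv.Perm.coe_mul, ← Function.comp_assoc, ← Function.comp_assoc,
      Equiv.Perm.inv_def, Equiv.comp_symm_eq]
  classical simp only [matchingTensor_apply, hiff]

theorem matchingTensor_mul_matchingTensor (π : Equiv.Perm α) (i j : α → κ) :
    matchingTensor R κ π i * matchingTensor R κ π j =
      matchingTensor R (κ × κ) π fun a => (i a, j a) := by
  classical
  have hpair : (fun a => (i a, j a)) ∘ π = (fun a => (i a, j a)) ↔ i ∘ π = i ∧ j ∘ π = j := by
    simp [funext_iff, forall_and]
  simp only [matchingTensor_apply, hpair, ite_and, mul_ite, mul_one, mul_zero]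
  split_ifs <;> rfl

theorem sum_matchingTensor_apply [Fintype {π : Equiv.Perm α // IsFpfInv π}] (i : α → κ) :
    ∑ π : {π : Equiv.Perm α // IsFpfInv π}, matchingTensor R κ π.1 i =
      Nat.card {π : Equiv.Perm α // IsFpfInv π ∧ i ∘ π = i} := by
  classical
  simp only [matchingTensor_apply]
  rw [Finset.sum_boole, ← Fintype.card_subtype, ← Nat.card_eq_fintype_card]
  exact congrArg _ (Nat.card_congr
    (Equiv.subtypeSubtypeEquivSubtypeInter IsFpfInv fun π : Equiv.Perm α => i ∘ π = i))

end Apply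

variable {R : Type*} [Ring R] {α κ : Type*} [Fintype κ] {M : Type*} [AddCommGroup M]

theorem sum_sign_smul_comp_ofSubtype_eq_zero [DecidableEq α] {s : Finset α}
    (hs : Fintype.card κ < s.card) (i : α → κ) (v : (α → κ) → M) :
    ∑ σ : Equiv.Perm s, Equiv.Perm.sign σ • v (i ∘ Equiv.Perm.ofSubtype σ) = 0 := by
  obtain ⟨a, b, hab, hi⟩ : ∃ a b : s, a ≠ b ∧ i a = i b :=
    Fintype.exists_ne_map_eq_of_card_lt (fun a : s => i a) (by simpa using hs)
  have hswap : i ∘ Equiv.swap (a : α) b = i := by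
    rw [Equiv.comp_swap_eq_update, hi, Function.update_eq_self, ← hi, Function.update_eq_self]
  refine Finset.sum_involution (fun σ _ => Equiv.swap a b * σ) (fun σ _ => ?_) (fun σ _ _ => ?_)
    (fun σ _ => Finset.mem_univ _) fun σ _ => Equiv.swap_mul_self_mul _ _ _
  · rw [map_mul Equiv.Perm.ofSubtype, Equiv.Perm.ofSubtype_swap_eq, Equiv.Perm.coe_mul,
      ← Function.comp_assoc, hswap, Equiv.Perm.sign_mul, Equiv.Perm.sign_swap hab,
      neg_one_mul, Units.neg_smul, add_neg_cancel]
  · exact fun h => hab (Equiv.swap_eq_one_iff.1 (mul_eq_right.1 h))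

variable [Finite α] [LinearOrder α]

/-- Antisymmetrizing over an increasing subsequence longer than the dimension expresses a matching
tensor through those of lexicographically larger matchings. -/
theorem matchingTensor_mem_span {π : Equiv.Perm α} (hπ : IsFpfInv π) :
    matchingTensor R κ π ∈
      Submodule.span R (matchingTensor R κ '' shortMatchings α (Fintype.card κ)) := by
  have : Finite (Lex (α → α)) := inferInstanceAs (Finite (α → α))
  induction hx : toLex (π : α → α) using WellFoundedGT.induction generalizing π with
  | ind x ih =>
  subst hx
  by_cases hshort : LISAtMost π (Fintype.card κ)
  · exact Submodule.subset_span ⟨π, ⟨hπ, hshort⟩, rfl⟩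
  obtain ⟨s, hs, hcard⟩ : ∃ s : Finset α, StrictMonoOn π s ∧ Fintype.card κ < s.card := by
    simpa [LISAtMost] using hshort
  have hsum : ∑ σ : Equiv.Perm s, Equiv.Perm.sign σ • matchingTensor R κ
      (Equiv.Perm.ofSubtype σ * π * (Equiv.Perm.ofSubtype σ)⁻¹) = 0 := by
    funext i
    simpa only [Finset.sum_apply, Pi.smul_apply, Pi.zero_apply, matchingTensor_conj_apply] using
      sum_sign_smul_comp_ofSubtype_eq_zero hcard i (matchingTensor R κ π)
  rw [← Finset.add_sum_erase _ _ (Finset.mem_univ 1), Equiv.Perm.sign_one, one_smul,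
    map_one, one_mul, inv_one, mul_one] at hsum
  rw [eq_neg_of_add_eq_zero_left hsum]
  refine neg_mem (sum_mem fun σ hσ => ?_)
  have hlt := hπ.toLex_lt_toLex_conj hs
    (fun x hx => Equiv.Perm.ofSubtype_apply_of_not_mem σ hx)
    ((map_ne_one_iff _ Equiv.Perm.ofSubtype_injective).2 (Finset.ne_of_mem_erase hσ))
  rw [Units.smul_def]
  exact zsmul_mem (ih _ hlt (hπ.conj _) rfl) _

/-- The labelling provided by the longest increasing subsequences of `π` is seen by `π` and only by
lexicographically smaller matchings: the matching tensors are unitriangular. -/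
theorem linearIndepOn_matchingTensor :
    LinearIndepOn R (matchingTensor R κ) (shortMatchings α (Fintype.card κ)) := by
  classical
  rw [linearIndepOn_iff]
  intro c hc hzero
  by_contra hne
  obtain ⟨π, hπc, hmin⟩ := c.support.exists_min_image (fun π => toLex (π : α → α))
    (Finsupp.support_nonempty_iff.2 hne)
  obtain ⟨hπ, hshort⟩ : π ∈ shortMatchings α (Fintype.card κ) := hc hπc
  obtain ⟨w, hw, hasc⟩ := hshort.exists_labelling (κ := κ) hπ.involutive
  have hother : ∀ ρ ∈ c.support, ρ ≠ π → w ∘ ρ ≠ w := fun ρ hρ hne hwρ =>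
    hne (DFunLike.coe_injective (toLex.injective
      ((toLex_le_toLex_of_comp_eq hπ.involutive hw hasc hwρ).antisymm (hmin ρ hρ))))
  have heval : Finsupp.linearCombination R (matchingTensor R κ) c w = c π := by
    rw [Finsupp.linearCombination_apply, Finsupp.sum, Finset.sum_apply, Finset.sum_eq_single π]
    · simp [matchingTensor_apply, hw]
    · intro ρ hρ hne
      simp [matchingTensor_apply, hother ρ hρ hne]
    · exact fun h => (h hπc).elim
  exact Finsupp.mem_support_iff.1 hπc (by rw [← heval, hzero, Pi.zero_apply])

theorem span_matchingTensor_shortMatchings :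
    Submodule.span R (matchingTensor R κ '' shortMatchings α (Fintype.card κ)) =
      Submodule.span R (matchingTensor R κ '' {π : Equiv.Perm α | IsFpfInv π}) := by
  refine le_antisymm (Submodule.span_mono (Set.image_mono fun π hπ => hπ.1))
    (Submodule.span_le.2 ?_)
  rintro _ ⟨π, hπ, rfl⟩
  exact matchingTensor_mem_span hπ

theorem finrank_span_matchingTensor [Nontrivial R] [StrongRankCondition R] :
    Module.finrank R (Submodule.span R (matchingTensor R κ '' {π : Equiv.Perm α | IsFpfInv π})) =
      Nat.card (shortMatchings α (Fintype.card κ)) := by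
  have := Fintype.ofFinite (shortMatchings α (Fintype.card κ))
  rw [← span_matchingTensor_shortMatchings, Set.image_eq_range, Nat.card_eq_fintype_card]
  exact finrank_span_eq_card linearIndepOn_matchingTensor

end Straightening

/-! ### Counting matchings -/

section Counting

open Nat

theorem involutive_iff_sq_eq_one {α : Type*} {π : Equiv.Perm α} :
    Function.Involutive π ↔ π ^ 2 = 1 := by
  rw [sq, Equiv.ext_iff]
  rfl

variable {α : Type*} [Fintype α] {π : Equiv.Perm α}

theorem IsFpfInv.even_card (hπ : IsFpfInv π) : Even (Fintype.card α) := by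
  by_contra h
  have hfix := Equiv.Perm.exists_fixed_point_of_prime (p := 2) (n := 1)
    (mt even_iff_two_dvd.2 h) (by simpa using involutive_iff_sq_eq_one.1 hπ.involutive)
  obtain ⟨x, hx⟩ := hfix
  exact hπ.apply_ne x hx

theorem isFpfInv_iff_cycleType_eq_replicate [DecidableEq α] {m : ℕ}
    (hm : Fintype.card α = 2 * m) : IsFpfInv π ↔ π.cycleType = Multiset.replicate m 2 := by
  have hfix : (∀ x, π x ≠ x) ↔ π.cycleType.sum = 2 * m := by
    rw [π.sum_cycleType, ← hm, Finset.card_eq_iff_eq_univ, Finset.eq_univ_iff_forall]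
    simp only [Equiv.Perm.mem_support]
  refine ⟨fun hπ => ?_, fun h => ⟨?_, hfix.2 (by simp [h, mul_comm])⟩⟩
  · have htwo := Equiv.Perm.pow_prime_eq_one_iff.1 (involutive_iff_sq_eq_one.1 hπ.involutive)
    have hsum := hfix.1 hπ.apply_ne
    rw [Multiset.eq_replicate_card.2 htwo, Multiset.sum_replicate, smul_eq_mul] at hsum
    exact Multiset.eq_replicate.2 ⟨by omega, htwo⟩
  · exact involutive_iff_sq_eq_one.2
      (Equiv.Perm.pow_prime_eq_one_iff.2 fun c hc => Multiset.eq_of_mem_replicate (h ▸ hc))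

theorem factorial_two_mul_eq (m : ℕ) : (2 * m)! = 2 ^ m * m ! * (2 * m - 1)‼ := by
  rw [← Nat.doubleFactorial_two_mul]
  cases m with
  | zero => rfl
  | succ m => exact Nat.factorial_eq_mul_doubleFactorial (2 * m + 1)

theorem natCard_isFpfInv_of_card_eq_two_mul {m : ℕ} (hm : Fintype.card α = 2 * m) :
    Nat.card {π : Equiv.Perm α // IsFpfInv π} = (2 * m - 1)‼ := by
  classical
  have hcount := Equiv.Perm.card_of_cycleType_mul_eq α (Multiset.replicate m 2)
  have hprod : ∏ n ∈ (Multiset.replicate m 2).toFinset, ((Multiset.replicate m 2).count n)! = m ! :=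
    by rcases eq_or_ne m 0 with rfl | hm₀ <;> simp [Multiset.toFinset_replicate, *]
  rw [if_pos ⟨by simp [hm, mul_comm], fun a ha => (Multiset.eq_of_mem_replicate ha).ge⟩, hprod,
    Multiset.sum_replicate, Multiset.prod_replicate, hm, smul_eq_mul, mul_comm m 2, Nat.sub_self,
    Nat.factorial_zero, one_mul, factorial_two_mul_eq, mul_comm] at hcount
  rw [Nat.card_congr (Equiv.subtypeEquivRight fun π => isFpfInv_iff_cycleType_eq_replicate hm),
    Nat.card_eq_fintype_card, Fintype.card_subtype]
  exact Nat.eq_of_mul_eq_mul_left (by positivity) hcount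

end Counting

section Fibers

variable {α ι : Type*}

theorem ofFiberEquiv_apply_of_eq {p : α → ι} (e : ∀ c, Equiv.Perm {a // p a = c}) {x : α} {c : ι}
    (h : p x = c) : Equiv.ofFiberEquiv e x = e c ⟨x, h⟩ := by
  subst h
  rfl

theorem isFpfInv_ofFiberEquiv {p : α → ι} {e : ∀ c, Equiv.Perm {a // p a = c}}
    (he : ∀ c, IsFpfInv (e c)) : IsFpfInv (Equiv.ofFiberEquiv e) where
  involutive x := by
    rw [ofFiberEquiv_apply_of_eq e (Equiv.ofFiberEquiv_map e x)]
    exact congrArg Subtype.val ((he (p x)).involutive ⟨x, rfl⟩)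
  apply_ne x h := (he (p x)).apply_ne ⟨x, rfl⟩ (Subtype.ext h)

/-- A matching preserving `p` is a family of matchings of the fibres of `p`. -/
def fpfInvFiberEquiv (p : α → ι) :
    {π : Equiv.Perm α // IsFpfInv π ∧ p ∘ π = p} ≃
      ∀ c, {ρ : Equiv.Perm {a // p a = c} // IsFpfInv ρ} where
  toFun π c := ⟨π.1.subtypePerm fun a => by rw [← Function.comp_apply (f := p), π.2.2],
    fun x => Subtype.ext (π.2.1.involutive x), fun x h => π.2.1.apply_ne x (congrArg Subtype.val h)⟩
  invFun g := ⟨Equiv.ofFiberEquiv fun c => (g c).1, isFpfInv_ofFiberEquiv fun c => (g c).2,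
    funext (Equiv.ofFiberEquiv_map _)⟩
  left_inv _ := rfl
  right_inv g := by
    ext c ⟨x, rfl⟩
    rfl

end Fibers

/-! ### Gaussian moments and Wick's formula -/

section Wick

open ProbabilityTheory
open scoped NNReal Nat

theorem hasDerivAt_gaussianPDFReal (μ : ℝ) (v : ℝ≥0) (x : ℝ) :
    HasDerivAt (gaussianPDFReal μ v) (-((x - μ) / v) * gaussianPDFReal μ v x) x := by
  have hexponent : HasDerivAt (fun x : ℝ => -(x - μ) ^ 2 / (2 * v)) (-((x - μ) / v)) x := by
    have hsq := ((hasDerivAt_id x).sub_const μ).fun_pow 2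
    refine (hsq.fun_neg.div_const (2 * v : ℝ)).congr_deriv ?_
    simp only [id_eq]
    ring
  rw [gaussianPDFReal_def]
  exact (hexponent.exp.const_mul _).congr_deriv (by ring)

theorem integrable_pow_gaussianReal (μ : ℝ) (v : ℝ≥0) (n : ℕ) :
    Integrable (fun x : ℝ => x ^ n) (gaussianReal μ v) :=
  integrable_pow_of_mem_interior_integrableExpSet (X := id)
    (by simp [integrableExpSet_id_gaussianReal]) n

theorem integrable_pow_mul_gaussianPDFReal (μ : ℝ) (v : ℝ≥0) (n : ℕ) :
    Integrable fun x : ℝ => x ^ n * gaussianPDFReal μ v x := by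
  rcases eq_or_ne v 0 with rfl | hv
  · simp
  have hint := integrable_pow_gaussianReal μ v n
  rw [gaussianReal_of_var_ne_zero _ hv, integrable_withDensity_iff_integrable_smul'
    (measurable_gaussianPDF μ v) (ae_of_all _ fun x => gaussianPDF_lt_top)] at hint
  simpa [mul_comm, toReal_gaussianPDF] using hint

/-- Integration by parts, as `-v` times the derivative of the density is `x` times the density. -/
theorem integral_pow_add_two_gaussianReal (v : ℝ≥0) (n : ℕ) :
    ∫ x, x ^ (n + 2) ∂gaussianReal 0 v = (n + 1) * v * ∫ x, x ^ n ∂gaussianReal 0 v := by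
  rcases eq_or_ne v 0 with rfl | hv
  · simp
  have hint := integrable_pow_mul_gaussianPDFReal 0 v
  have hdensity : ∀ x, HasDerivAt (fun x => -v * gaussianPDFReal 0 v x)
      (x * gaussianPDFReal 0 v x) x := fun x =>
    ((hasDerivAt_gaussianPDFReal 0 v x).const_mul _).congr_deriv (by field_simp; ring)
  have hparts := integral_mul_deriv_eq_deriv_mul_of_integrable
    (fun x _ => by simpa using hasDerivAt_pow (n + 1) x) (fun x _ => hdensity x)
    ((hint (n + 2)).congr (ae_of_all _ fun x => by simp only [Pi.mul_apply]; ring))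
    (((hint n).const_mul ((n + 1) * -v)).congr
      (ae_of_all _ fun x => by simp only [Pi.mul_apply]; ring))
    (((hint (n + 1)).const_mul (-v : ℝ)).congr
      (ae_of_all _ fun x => by simp only [Pi.mul_apply]; ring))
  simp only [integral_gaussianReal_eq_integral_smul hv, smul_eq_mul]
  calc ∫ x, gaussianPDFReal 0 v x * x ^ (n + 2)
      = ∫ x, x ^ (n + 1) * (x * gaussianPDFReal 0 v x) := by congr with x; ring
    _ = -∫ x, (n + 1) * x ^ n * (-v * gaussianPDFReal 0 v x) := hparts
    _ = (n + 1) * v * ∫ x, gaussianPDFReal 0 v x * x ^ n := by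
      rw [← integral_neg, ← integral_const_mul]
      congr with x
      ring

theorem integral_pow_odd_gaussianReal (v : ℝ≥0) (m : ℕ) :
    ∫ x, x ^ (2 * m + 1) ∂gaussianReal 0 v = 0 := by
  induction m with
  | zero => simp
  | succ m ih => rw [show 2 * (m + 1) + 1 = 2 * m + 1 + 2 by ring,
      integral_pow_add_two_gaussianReal, ih, mul_zero]

theorem integral_pow_even_gaussianReal (v : ℝ≥0) (m : ℕ) :
    ∫ x, x ^ (2 * m) ∂gaussianReal 0 v = v ^ m * (2 * m - 1)‼ := by
  induction m with
  | zero => simp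
  | succ m ih =>
    have hstep : (2 * (m + 1) - 1)‼ = (2 * m + 1) * (2 * m - 1)‼ :=
      Nat.doubleFactorial_add_one (2 * m)
    rw [Nat.mul_succ, integral_pow_add_two_gaussianReal, ih, ← Nat.mul_succ, hstep]
    push_cast
    ring

theorem natCard_isFpfInv_eq_integral (α : Type*) [Fintype α] :
    (Nat.card {π : Equiv.Perm α // IsFpfInv π} : ℝ) =
      ∫ x, x ^ Fintype.card α ∂gaussianReal 0 1 := by
  rcases Nat.even_or_odd' (Fintype.card α) with ⟨m, hm | hm⟩
  · rw [natCard_isFpfInv_of_card_eq_two_mul hm, hm, integral_pow_even_gaussianReal]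
    simp
  · have : IsEmpty {π : Equiv.Perm α // IsFpfInv π} :=
      ⟨fun π => Nat.not_even_iff_odd.2 ⟨m, hm⟩ π.2.even_card⟩
    rw [hm, integral_pow_odd_gaussianReal, Nat.card_of_isEmpty, Nat.cast_zero]

/-- The law of a family of independent standard Gaussian variables. -/
abbrev iidGaussian (ι : Type*) [Fintype ι] : Measure (ι → ℝ) :=
  Measure.pi fun _ => gaussianReal 0 1

instance isOpenPosMeasure_gaussianReal (μ : ℝ) (v : ℝ≥0) [NeZero v] :
    (gaussianReal μ v).IsOpenPosMeasure :=
  (gaussianReal_absolutelyContinuous' μ (NeZero.ne v)).isOpenPosMeasure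

theorem prod_comp_eq_prod_pow_card_fiber {α ι M : Type*} [Fintype α] [Fintype ι] [DecidableEq ι]
    [CommMonoid M] (p : α → ι) (g : ι → M) :
    ∏ a, g (p a) = ∏ c, g c ^ Fintype.card {a // p a = c} := by
  rw [← Finset.prod_fiberwise' _ p]
  simp [Fintype.card_subtype]

variable {α ι : Type*} [Fintype α] [Fintype ι]

/-- Wick's formula. -/
theorem integral_prod_iidGaussian (p : α → ι) :
    ∫ g, ∏ a, g (p a) ∂iidGaussian ι = Nat.card {π : Equiv.Perm α // IsFpfInv π ∧ p ∘ π = p} := by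
  classical
  simp only [prod_comp_eq_prod_pow_card_fiber p]
  rw [integral_fintype_prod_eq_prod (f := fun c x => x ^ Fintype.card {a // p a = c}),
    Nat.card_congr (fpfInvFiberEquiv p), Nat.card_pi, Nat.cast_prod]
  simp only [natCard_isFpfInv_eq_integral]

theorem integrable_prod_iidGaussian (p : α → ι) :
    Integrable (fun g : ι → ℝ => ∏ a, g (p a)) (iidGaussian ι) := by
  classical
  simp only [prod_comp_eq_prod_pow_card_fiber p]
  exact Integrable.fintype_prod (f := fun c x => x ^ Fintype.card {a // p a = c})
    fun _ => integrable_pow_gaussianReal 0 1 _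

end Wick

/-! ### Tensor powers of matrices -/

section TensorPower

variable (α : Type*) [Fintype α] [DecidableEq α] {κ : Type*} [Fintype κ] [DecidableEq κ]

/-- The tensor power `G^{⊗α}` of a matrix `G`, indexed by multi-indices `α → κ`. -/
def tensorPow {R : Type*} [CommSemiring R] :
    Matrix κ κ R →* Matrix (α → κ) (α → κ) R where
  toFun G := Matrix.of fun i j => ∏ a, G (i a) (j a)
  map_one' := by
    ext i j
    simp only [of_apply, one_apply, Finset.prod_ite_zero, Finset.prod_const_one, Finset.mem_univ,
      true_imp_iff, funext_iff]
  map_mul' G H := by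
    ext i j
    simp only [of_apply, mul_apply, Finset.prod_univ_sum, Fintype.piFinset_univ,
      Finset.prod_mul_distrib]

variable {α} {R : Type*} [CommSemiring R]

theorem tensorPow_apply (G : Matrix κ κ R) (i j : α → κ) :
    tensorPow α G i j = ∏ a, G (i a) (j a) := rfl

theorem tensorPow_conjTranspose [StarRing R] (G : Matrix κ κ R) :
    tensorPow α Gᴴ = (tensorPow α G)ᴴ := by
  ext i j
  simp [tensorPow_apply]

theorem trace_tensorPow (G : Matrix κ κ R) :
    (tensorPow α G).trace = G.trace ^ Fintype.card α := by
  simp only [trace, diag, tensorPow_apply]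
  rw [← Fintype.piFinset_univ, ← Finset.prod_univ_sum (fun _ => Finset.univ) fun _ c => G c c,
    Finset.prod_const, Finset.card_univ]

theorem continuous_tensorPow [TopologicalSpace R] [ContinuousMul R] :
    Continuous (tensorPow α : Matrix κ κ R → Matrix (α → κ) (α → κ) R) := by
  refine continuous_matrix fun i j => ?_
  simp only [tensorPow_apply]
  fun_prop

end TensorPower

section Matching

variable {R : Type*} [CommSemiring R] {α κ : Type*} [LinearOrder α] {π : Equiv.Perm α}

/-- A point of `α` is the smaller or the larger element of its block; blocks are represented by
their smaller elements. -/
def IsFpfInv.openersSumEquiv (hπ : IsFpfInv π) : {a // a < π a} ⊕ {a // a < π a} ≃ α :=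
  (Equiv.sumCongr (Equiv.refl _)
    (π.subtypeEquiv fun a => by rw [hπ.not_lt_apply_iff, hπ.involutive a])).trans
      (Equiv.sumCompl fun a => a < π a)

theorem IsFpfInv.openersSumEquiv_symm_apply (hπ : IsFpfInv π) (a : {a // a < π a}) :
    hπ.openersSumEquiv.symm a = .inl a := (Equiv.symm_apply_eq _).2 rfl

theorem IsFpfInv.openersSumEquiv_symm_apply_partner (hπ : IsFpfInv π) (a : {a // a < π a}) :
    hπ.openersSumEquiv.symm (π a) = .inr a := (Equiv.symm_apply_eq _).2 rfl

variable [Fintype α]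

theorem IsFpfInv.prod_eq_prod_openers (hπ : IsFpfInv π) {M : Type*} [CommMonoid M] (f : α → M) :
    ∏ a, f a = ∏ a : {a // a < π a}, f a * f (π a) := by
  rw [← hπ.openersSumEquiv.prod_comp, Fintype.prod_sum_type, ← Finset.prod_mul_distrib]
  rfl

theorem matchingTensor_eq_prod_openers [DecidableEq κ] (hπ : IsFpfInv π) (i : α → κ) :
    matchingTensor R κ π i = ∏ a : {a // a < π a}, (1 : Matrix κ κ R) (i a) (i (π a)) := by
  classical
  have hiff : i ∘ π = i ↔ ∀ a : {a // a < π a}, i a = i (π a) := by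
    refine ⟨fun h a => (congrFun h a).symm, fun h => funext fun a => ?_⟩
    by_cases ha : a < π a
    · exact (h ⟨a, ha⟩).symm
    · simpa [hπ.involutive a] using h ⟨π a, (hπ.not_lt_apply_iff a).1 ha⟩
  simp only [matchingTensor_apply, hiff, one_apply, Finset.prod_ite_zero, Finset.prod_const_one,
    Finset.mem_univ, true_imp_iff]

theorem IsFpfInv.sum_prod_openers [DecidableEq α] [Fintype κ] (hπ : IsFpfInv π)
    (f : {a // a < π a} → κ → κ → R) :
    ∑ j : α → κ, ∏ a : {a // a < π a}, f a (j a) (j (π a)) = ∏ a, ∑ c, ∑ d, f a c d := by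
  rw [← (hπ.openersSumEquiv.arrowCongr (Equiv.refl κ)).sum_comp,
    ← (Equiv.sumArrowEquivProdArrow _ _ _).symm.sum_comp,
    ← (Equiv.arrowProdEquivProdArrow _ _ _).sum_comp]
  simp only [← Fintype.sum_prod_type', Finset.prod_univ_sum, Fintype.piFinset_univ]
  refine Finset.sum_congr rfl fun j _ => Finset.prod_congr rfl fun a _ => ?_
  simp [hπ.openersSumEquiv_symm_apply, hπ.openersSumEquiv_symm_apply_partner]

/-- Contracting the two legs of a block against the identity gives `U * Uᵀ`. -/
theorem tensorPow_mulVec_matchingTensor [DecidableEq α] [Fintype κ] [DecidableEq κ]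
    (hπ : IsFpfInv π) {U : Matrix κ κ R} (hU : U * Uᵀ = 1) :
    tensorPow α U *ᵥ matchingTensor R κ π = matchingTensor R κ π := by
  ext i
  calc (tensorPow α U *ᵥ matchingTensor R κ π) i
      = ∑ j : α → κ, ∏ a : {a // a < π a},
          U (i a) (j a) * U (i (π a)) (j (π a)) * (1 : Matrix κ κ R) (j a) (j (π a)) := by
        simp only [mulVec, dotProduct, tensorPow_apply, matchingTensor_eq_prod_openers hπ,
          hπ.prod_eq_prod_openers, Finset.prod_mul_distrib]
    _ = ∏ a : {a // a < π a}, ∑ c, ∑ d, U (i a) c * U (i (π a)) d * (1 : Matrix κ κ R) c d :=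
        hπ.sum_prod_openers fun a c d => U (i a) c * U (i (π a)) d * (1 : Matrix κ κ R) c d
    _ = ∏ a : {a // a < π a}, (U * Uᵀ) (i a) (i (π a)) := by
        simp [one_apply, mul_apply]
    _ = matchingTensor R κ π i := by rw [hU, matchingTensor_eq_prod_openers hπ]

end Matching

/-! ### Polar decomposition -/

section Polar

variable {𝕜 n : Type*} [RCLike 𝕜] [Fintype n] [DecidableEq n]

open scoped ComplexOrder MatrixOrder Matrix.Norms.L2Operator in
theorem exists_unitary_mul_posSemidef {A : Matrix n n 𝕜} (hA : IsUnit A) :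
    ∃ U ∈ unitaryGroup n 𝕜, ∃ P : Matrix n n 𝕜, P.PosSemidef ∧ A = U * P := by
  set P := CFC.abs A
  have hPP : P * P = Aᴴ * A := CFC.abs_mul_abs A
  have hpos : P.PosSemidef := (CFC.abs_nonneg A).posSemidef
  have hdet : IsUnit P.det := by
    have := (Matrix.isUnit_iff_isUnit_det _).1 (hA.star.mul hA)
    rw [star_eq_conjTranspose, ← hPP, det_mul] at this
    exact isUnit_of_mul_isUnit_left this
  refine ⟨A * P⁻¹, (mem_unitaryGroup_iff' ..).2 ?_, P, hpos,
    (nonsing_inv_mul_cancel_right _ _ hdet).symm⟩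
  rw [star_eq_conjTranspose, conjTranspose_mul, conjTranspose_nonsing_inv, hpos.1.eq,
    Matrix.mul_assoc, ← Matrix.mul_assoc Aᴴ, ← hPP, Matrix.mul_assoc P, mul_nonsing_inv _ hdet,
    mul_one, nonsing_inv_mul _ hdet]

theorem dense_setOf_isUnit_matrix {K n : Type*} [NontriviallyNormedField K] [CompleteSpace K]
    [Fintype n] [DecidableEq n] : Dense {A : Matrix n n K | IsUnit A} := fun A => by
  have hdense : Dense (resolventSet K (-A)) := by
    simpa only [spectrum, compl_compl] using (-A).finite_spectrum.countable.dense_compl K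
  have hcont : Continuous fun ε : K => algebraMap K (Matrix n n K) ε - -A := by
    simp only [algebraMap_eq_diagonal]
    fun_prop
  have := map_mem_closure hcont (hdense 0) (t := {A : Matrix n n K | IsUnit A}) fun ε hε => hε
  simpa using this

open scoped ComplexOrder MatrixOrder Matrix.Norms.L2Operator in
theorem posSemidef_tensorPow {α : Type*} [Fintype α] [DecidableEq α] {P : Matrix n n 𝕜}
    (hP : P.PosSemidef) : (tensorPow α P).PosSemidef := by
  obtain ⟨B, rfl⟩ := CStarAlgebra.nonneg_iff_eq_star_mul_self.mp hP.nonneg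
  rw [map_mul, star_eq_conjTranspose, tensorPow_conjTranspose]
  exact posSemidef_conjTranspose_mul_self _

end Polar

/-! ### Invariants of the orthogonal group -/

section Invariants

open ProbabilityTheory

variable (α κ : Type*) [Fintype α] [DecidableEq α] [Fintype κ] [DecidableEq κ]

/-- The tensor power, with legs `α`, of the defining representation of the orthogonal group. -/
def orthogonalTensorRep : Representation ℝ (orthogonalGroup κ ℝ) ((α → κ) → ℝ) :=
  (toLinAlgEquiv' : Matrix (α → κ) (α → κ) ℝ ≃ₐ[ℝ] _).toMonoidHom.comp
    ((tensorPow α).comp (orthogonalGroup κ ℝ).subtype)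

variable {α κ}

theorem character_orthogonalTensorRep (U : orthogonalGroup κ ℝ) :
    (orthogonalTensorRep α κ).character U = (U : Matrix κ κ ℝ).trace ^ Fintype.card α := by
  rw [← trace_tensorPow]
  exact trace_toLin'_eq _

/-- Writing `G = U * P`, the invariance of `x` removes the orthogonal factor `U`. -/
theorem dotProduct_tensorPow_mulVec_nonneg_of_isUnit {x : (α → κ) → ℝ}
    (hx : x ∈ (orthogonalTensorRep α κ).invariants) {G : Matrix κ κ ℝ} (hG : IsUnit G) :
    0 ≤ x ⬝ᵥ tensorPow α G *ᵥ x := by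
  obtain ⟨U, hU, P, hP, rfl⟩ := exists_unitary_mul_posSemidef hG
  have hUx : (tensorPow α U)ᴴ *ᵥ x = x := by
    rw [← tensorPow_conjTranspose]
    exact hx (star ⟨U, hU⟩)
  calc 0 ≤ x ⬝ᵥ tensorPow α P *ᵥ x := (posSemidef_tensorPow hP).dotProduct_mulVec_nonneg x
    _ = ((tensorPow α U)ᴴ *ᵥ x) ⬝ᵥ tensorPow α P *ᵥ x := by rw [hUx]
    _ = x ⬝ᵥ tensorPow α (U * P) *ᵥ x := by
      rw [conjTranspose_eq_transpose_of_trivial, mulVec_transpose, ← dotProduct_mulVec,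
        mulVec_mulVec, map_mul]

theorem continuous_dotProduct_tensorPow_mulVec (x : (α → κ) → ℝ) :
    Continuous fun G : Matrix κ κ ℝ => x ⬝ᵥ tensorPow α G *ᵥ x :=
  continuous_const.dotProduct (continuous_tensorPow.matrix_mulVec continuous_const)

theorem dotProduct_tensorPow_mulVec_nonneg {x : (α → κ) → ℝ}
    (hx : x ∈ (orthogonalTensorRep α κ).invariants) (G : Matrix κ κ ℝ) :
    0 ≤ x ⬝ᵥ tensorPow α G *ᵥ x :=
  (isClosed_le continuous_const (continuous_dotProduct_tensorPow_mulVec x)).closure_subset_iff.2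
    (fun _ hG => dotProduct_tensorPow_mulVec_nonneg_of_isUnit hx hG) (dense_setOf_isUnit_matrix G)

theorem integral_tensorPow_iidGaussian [Fintype {π : Equiv.Perm α // IsFpfInv π}] (i j : α → κ) :
    ∫ g, tensorPow α (of fun c d => g (c, d)) i j ∂iidGaussian (κ × κ) =
      ∑ π : {π : Equiv.Perm α // IsFpfInv π},
        matchingTensor ℝ κ π.1 i * matchingTensor ℝ κ π.1 j := by
  simp only [matchingTensor_mul_matchingTensor, sum_matchingTensor_apply]
  exact integral_prod_iidGaussian fun a => (i a, j a)

theorem integrable_tensorPow_iidGaussian (i j : α → κ) :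
    Integrable (fun g => tensorPow α (of fun c d => g (c, d)) i j) (iidGaussian (κ × κ)) :=
  integrable_prod_iidGaussian fun a => (i a, j a)

theorem dotProduct_mulVec_eq_sum {ι R : Type*} [Fintype ι] [CommSemiring R] (A : Matrix ι ι R)
    (x : ι → R) : x ⬝ᵥ A *ᵥ x = ∑ p : ι × ι, x p.1 * x p.2 * A p.1 p.2 := by
  simp only [dotProduct, mulVec, Finset.mul_sum, Fintype.sum_prod_type]
  exact Finset.sum_congr rfl fun i _ => Finset.sum_congr rfl fun j _ => by ring

theorem integrable_dotProduct_tensorPow_iidGaussian (x : (α → κ) → ℝ) :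
    Integrable (fun g => x ⬝ᵥ tensorPow α (of fun c d => g (c, d)) *ᵥ x)
      (iidGaussian (κ × κ)) := by
  simp only [dotProduct_mulVec_eq_sum]
  exact integrable_finsetSum _ fun p _ => (integrable_tensorPow_iidGaussian _ _).const_mul _

theorem integral_dotProduct_tensorPow_iidGaussian [Fintype {π : Equiv.Perm α // IsFpfInv π}]
    (x : (α → κ) → ℝ) :
    ∫ g, x ⬝ᵥ tensorPow α (of fun c d => g (c, d)) *ᵥ x ∂iidGaussian (κ × κ) =
      ∑ π : {π : Equiv.Perm α // IsFpfInv π}, (matchingTensor ℝ κ π.1 ⬝ᵥ x) ^ 2 := by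
  simp only [dotProduct_mulVec_eq_sum]
  rw [integral_finsetSum _ fun p _ => (integrable_tensorPow_iidGaussian _ _).const_mul _]
  simp only [integral_const_mul, integral_tensorPow_iidGaussian, Finset.mul_sum]
  rw [Finset.sum_comm]
  refine Finset.sum_congr rfl fun π _ => ?_
  rw [pow_two, dotProduct, Finset.sum_mul_sum, Fintype.sum_prod_type]
  exact Finset.sum_congr rfl fun i _ => Finset.sum_congr rfl fun j _ => by ring

/-- The nonnegative continuous function `G ↦ x ⬝ᵥ G^{⊗α} x` has Gaussian average zero, so it
vanishes, in particular at the identity. -/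
theorem eq_zero_of_forall_matchingTensor_dotProduct_eq_zero {x : (α → κ) → ℝ}
    (hx : x ∈ (orthogonalTensorRep α κ).invariants)
    (horth : ∀ π : Equiv.Perm α, IsFpfInv π → matchingTensor ℝ κ π ⬝ᵥ x = 0) : x = 0 := by
  classical
  have hcont : Continuous fun g : κ × κ → ℝ =>
      x ⬝ᵥ tensorPow α (of fun c d => g (c, d)) *ᵥ x :=
    (continuous_dotProduct_tensorPow_mulVec x).comp
      (continuous_matrix fun c d => continuous_apply (c, d))
  have haverage : ∫ g, x ⬝ᵥ tensorPow α (of fun c d => g (c, d)) *ᵥ x ∂iidGaussian (κ × κ) = 0 := by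
    rw [integral_dotProduct_tensorPow_iidGaussian]
    exact Finset.sum_eq_zero fun π _ => by rw [horth π.1 π.2, sq, mul_zero]
  have hae := (integral_eq_zero_iff_of_nonneg (fun _ => dotProduct_tensorPow_mulVec_nonneg hx _)
    (integrable_dotProduct_tensorPow_iidGaussian x)).1 haverage
  have hzero := (hcont.ae_eq_iff_eq _ continuous_const).1 hae
  have hone : x ⬝ᵥ tensorPow α (1 : Matrix κ κ ℝ) *ᵥ x = 0 :=
    congrFun hzero fun c => (1 : Matrix κ κ ℝ) c.1 c.2
  rwa [map_one, one_mulVec, dotProduct_self_eq_zero] at hone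

theorem eq_of_le_of_forall_dotProduct_eq_zero {K ι : Type*} [Field K] [Fintype ι]
    {W V : Submodule K (ι → K)} (hWV : W ≤ V)
    (h : ∀ v ∈ V, (∀ w ∈ W, w ⬝ᵥ v = 0) → v = 0) : W = V := by
  refine Submodule.eq_of_le_of_finrank_le hWV ?_
  let pairing : V →ₗ[K] Module.Dual K W := (dotProductBilin K K).flip.domRestrict₁₂ V W
  have hinj : Function.Injective pairing := (injective_iff_map_eq_zero _).2 fun v hv =>
    Subtype.ext (h v v.2 fun w hw => LinearMap.congr_fun hv ⟨w, hw⟩)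
  rw [← Subspace.dual_finrank_eq (V := W)]
  exact LinearMap.finrank_le_finrank_of_injective hinj

/-- The first fundamental theorem of invariant theory for the orthogonal group. -/
theorem invariants_orthogonalTensorRep {α : Type*} [Fintype α] [LinearOrder α] :
    (orthogonalTensorRep α κ).invariants =
      Submodule.span ℝ (matchingTensor ℝ κ '' {π : Equiv.Perm α | IsFpfInv π}) := by
  symm
  refine eq_of_le_of_forall_dotProduct_eq_zero (Submodule.span_le.2 ?_) fun x hx horth => ?_
  · rintro _ ⟨π, hπ, rfl⟩ U
    exact tensorPow_mulVec_matchingTensor hπ ((mem_orthogonalGroup_iff _ _).1 U.2)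
  · exact eq_zero_of_forall_matchingTensor_dotProduct_eq_zero hx fun π hπ =>
      horth _ (Submodule.subset_span ⟨π, hπ, rfl⟩)

end Invariants

/-! ### Haar averages -/

section Haar

open Module

/-- Averaging over the group projects onto the invariants. -/
theorem integral_character_eq_finrank_invariants {G V : Type*} [Group G] [MeasurableSpace G]
    [MeasurableMul G] (μ : Measure G) [IsProbabilityMeasure μ] [μ.IsMulLeftInvariant]
    [NormedAddCommGroup V] [NormedSpace ℝ V] [FiniteDimensional ℝ V] (ρ : Representation ℝ G V)
    (hρ : ∀ v, Integrable (fun g => ρ g v) μ) :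
    ∫ g, ρ.character g ∂μ = finrank ℝ ρ.invariants := by
  let average : V →ₗ[ℝ] V :=
    { toFun := fun v => ∫ g, ρ g v ∂μ
      map_add' := fun v w => by simp only [map_add, integral_add (hρ v) (hρ w)]
      map_smul' := fun c v => by simp only [map_smul, integral_smul, RingHom.id_apply] }
  have hcoord : ∀ (f : V →ₗ[ℝ] ℝ) v, f (average v) = ∫ g, f (ρ g v) ∂μ := fun f v =>
    ((LinearMap.toContinuousLinearMap f).integral_comp_comm (hρ v)).symm
  have hproj : LinearMap.IsProj ρ.invariants average := by
    refine ⟨fun v h => ?_, fun v hv => ?_⟩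
    · calc ρ h (average v) = ∫ g, ρ h (ρ g v) ∂μ :=
            ((LinearMap.toContinuousLinearMap (ρ h)).integral_comp_comm (hρ v)).symm
        _ = ∫ g, ρ (h * g) v ∂μ := by simp only [map_mul, Module.End.mul_apply]
        _ = average v := integral_mul_left_eq_self (fun g => ρ g v) h
    · simp only [Representation.mem_invariants] at hv
      simp [average, hv]
  let b := finBasis ℝ V
  rw [← hproj.trace]
  simp only [Representation.character, LinearMap.trace_eq_matrix_trace ℝ b, Matrix.trace,
    Matrix.diag, LinearMap.toMatrix_apply]
  exact (integral_finsetSum _ fun i _ =>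
    (LinearMap.toContinuousLinearMap (b.coord i)).integrable_comp (hρ (b i))).trans
      (Finset.sum_congr rfl fun i _ => (hcoord (b.coord i) (b i)).symm)

variable {α κ : Type*} [Fintype α] [DecidableEq α] [Fintype κ] [DecidableEq κ]

theorem norm_tensorPow_apply_le_one_of_mem_unitaryGroup {𝕜 : Type*} [RCLike 𝕜] {U : Matrix κ κ 𝕜}
    (hU : U ∈ unitaryGroup κ 𝕜) (i j : α → κ) : ‖tensorPow α U i j‖ ≤ 1 := by
  rw [tensorPow_apply, norm_prod]
  exact Finset.prod_le_one (fun a _ => norm_nonneg _) fun a _ => entry_norm_bound_of_unitary hU _ _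

variable [MeasurableSpace (orthogonalGroup κ ℝ)] [BorelSpace (orthogonalGroup κ ℝ)]
  (μ : Measure (orthogonalGroup κ ℝ))

theorem integrable_tensorPow_orthogonalGroup [IsFiniteMeasure μ] (i j : α → κ) :
    Integrable (fun U : orthogonalGroup κ ℝ => tensorPow α (U : Matrix κ κ ℝ) i j) μ :=
  .of_bound
    ((continuous_tensorPow.comp continuous_subtype_val).matrix_elem i j).aestronglyMeasurable 1
    (ae_of_all _ fun U => norm_tensorPow_apply_le_one_of_mem_unitaryGroup U.2 i j)

theorem integrable_orthogonalTensorRep_apply [IsFiniteMeasure μ] (x : (α → κ) → ℝ) :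
    Integrable (fun U => orthogonalTensorRep α κ U x) μ :=
  .of_eval fun i => integrable_finsetSum _ fun j _ =>
    (integrable_tensorPow_orthogonalGroup μ i j).mul_const (x j)

theorem integral_trace_pow [IsProbabilityMeasure μ] [μ.IsMulLeftInvariant]
    (α : Type*) [Fintype α] [LinearOrder α] :
    ∫ U, (U : Matrix κ κ ℝ).trace ^ Fintype.card α ∂μ =
      Nat.card (shortMatchings α (Fintype.card κ)) := by
  simp only [← character_orthogonalTensorRep]
  rw [integral_character_eq_finrank_invariants μ _ (integrable_orthogonalTensorRep_apply μ),
    invariants_orthogonalTensorRep, finrank_span_matchingTensor]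

end Haar

/-! ### Exponential generating functions -/

section ExponentialGeneratingFunction

open scoped Nat

theorem hasSum_integral_pow_mul_div_factorial {Ω : Type*} [MeasurableSpace Ω] {μ : Measure Ω}
    [IsFiniteMeasure μ] {X : Ω → ℝ} {C : ℝ} (hX : AEStronglyMeasurable X μ)
    (hbound : ∀ᵐ ω ∂μ, |X ω| ≤ C) (t : ℝ) :
    HasSum (fun n : ℕ => (∫ ω, X ω ^ n ∂μ) * t ^ n / n !) (∫ ω, Real.exp (t * X ω) ∂μ) := by
  simp only [← integral_mul_const, ← integral_div, ← mul_pow, mul_comm (X _) t]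
  refine hasSum_integral_of_dominated_convergence (fun n _ => (|t| * C) ^ n / n !)
    (fun n => (((hX.const_mul t).aemeasurable.pow_const n).div_const _).aestronglyMeasurable)
    (fun n => hbound.mono fun ω hω => ?_) (ae_of_all _ fun _ => Real.summable_pow_div_factorial _)
    (integrable_const _) (ae_of_all _ fun _ => ?_)
  · rw [norm_div, norm_pow, norm_mul, Real.norm_natCast, Real.norm_eq_abs, Real.norm_eq_abs]
    gcongr
  · rw [Real.exp_eq_exp_ℝ]
    exact NormedSpace.expSeries_div_hasSum_exp _

theorem norm_trace_le_card_of_mem_unitaryGroup {𝕜 κ : Type*} [RCLike 𝕜] [Fintype κ] [DecidableEq κ]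
    {U : Matrix κ κ 𝕜} (hU : U ∈ unitaryGroup κ 𝕜) : ‖U.trace‖ ≤ Fintype.card κ := by
  simpa [trace] using
    norm_sum_le_of_le Finset.univ fun c _ => entry_norm_bound_of_unitary hU c c

theorem fpfInvCount_eq_natCard_shortMatchings (n l : ℕ) :
    fpfInvCount n l = Nat.card (shortMatchings (Fin (2 * n)) l) :=
  Nat.card_congr <| Equiv.subtypeEquivRight fun π => by
    rw [← sq, ← involutive_iff_sq_eq_one, lisLE_iff_lisAtMost]
    exact ⟨fun ⟨hinv, hfix, hlis⟩ => ⟨⟨hinv, hfix⟩, hlis⟩,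
      fun ⟨⟨hinv, hfix⟩, hlis⟩ => ⟨hinv, hfix, hlis⟩⟩

theorem natCard_shortMatchings_of_odd_card {α : Type*} [Fintype α] [LinearOrder α]
    (hα : Odd (Fintype.card α)) (l : ℕ) : Nat.card (shortMatchings α l) = 0 := by
  have : IsEmpty (shortMatchings α l) := ⟨fun π => Nat.not_even_iff_odd.2 hα π.2.1.even_card⟩
  exact Nat.card_of_isEmpty

end ExponentialGeneratingFunction

/-- `Σ_{n≥0} f^O_{n,l} · t^{2n}/(2n)! = E_{U∈O(l)} exp(t·Tr(U))`. -/
theorem fpfInv_egf_eq_orthogonal_exp_trace (l : ℕ) (t : ℝ)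
    (μ : Measure (Matrix.orthogonalGroup (Fin l) ℝ))
    [μ.IsHaarMeasure] [IsProbabilityMeasure μ] :
    ∑' n : ℕ, (fpfInvCount n l : ℝ) * t ^ (2 * n) / (Nat.factorial (2 * n) : ℝ) =
      ∫ U, Real.exp (t * Matrix.trace (U : Matrix (Fin l) (Fin l) ℝ)) ∂μ := by
  have hmoment (N : ℕ) : ∫ U, (U : Matrix (Fin l) (Fin l) ℝ).trace ^ N ∂μ =
      Nat.card (shortMatchings (Fin N) l) := by
    simpa using integral_trace_pow μ (Fin N)
  have hsum := hasSum_integral_pow_mul_div_factorial (μ := μ)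
    continuous_subtype_val.matrix_trace.aestronglyMeasurable
    (ae_of_all _ fun U => norm_trace_le_card_of_mem_unitaryGroup U.2) t
  simp only [hmoment] at hsum
  have hodd : ∀ N ∉ Set.range (2 * · : ℕ → ℕ),
      (Nat.card (shortMatchings (Fin N) l) : ℝ) * t ^ N / N.factorial = 0 := fun N hN => by
    rw [natCard_shortMatchings_of_odd_card (by simpa [eq_comm] using hN)]
    simp
  simp only [fpfInvCount_eq_natCard_shortMatchings]
  exact ((mul_right_injective₀ two_ne_zero).hasSum_iff hodd |>.2 hsum).tsum_eq
end
end
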